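/- Let n and r be positive integers with 2^{n−1} − 1 ≤ r ≤ 2^n − 2; set N = n + r and m = 2^n + n + 1. Then for every integer d ≥ m, a very general complex hypersurface X ⊂ ℙ^{N+1} of degree d having multiplicity d − 2 along a fixed r-dimensional linear subspace is not stably rational. -/

import Mathlib

/-!
Since `1 ≤ r ≤ 2^n - 2`, one has `n ≥ 2`. To a point `x = (x_0, …, x_n)` attach the Pfister form
`⟨x^G⟩`, where `G` runs over the even subsets of `{0, …, n}` and `x^G` is the product of the `x_i`
with `i ∈ G` (`xG`; isotropy is `Tiso`). The proof compares a very general member with one special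
hypersurface `F0`, of the form `c(x) + ∑ a_j(x) y_j²`. Up to a common factor and squares its
coefficients are those of `⟨g, x^{G_0}, …, x^{G_r}⟩`, where
`g = ℓ^{2e} + ℓ x_0^{2e-n-2} ∏ x_i` and `ℓ = ∑ x_i` (`gfun`). The `G_j` are distinct and nonempty,
and include every `G` that contains the last index; there are `2^(n-1)` such `G` and `2^n - 1`
nonempty ones, so the bounds on `r` are exactly what makes this choice possible (`exists_Gs`).

*Anisotropy.* The form `⟨x^G⟩` stays anisotropic over the function field of `F0`
(`F0_quot_aniso`). By the Cassels–Pfister theorem (`cassels_pfister`, `cp_iter`, `nv_field`),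
isotropy would force the subform on the `G` different from all `G_j` to represent `g`. Those `G`
avoid the last index, so this subform stays anisotropic modulo `ℓ` and its values have even order
at `ℓ`, whereas `g` has order one (`g_not_rep`).

*Specialization along a line.* Let `x` have entries in `κ[t]` and let `⟨g, x^{G_j}⟩` be isotropic.
If `⟨x^G⟩` is isotropic at `t = ∞`, it is isotropic over `κ(t)` and also at the lowest coefficients
(`glob_T'`, `step_T`). Indeed, at every place where the orders of the `x_i` differ, `g` is zero or a
nonzero square to leading order, so that `⟨g, x^{G_j}⟩` yields an isotropic parity class of
residues of `⟨x^G⟩` (`local_lemma`). Isotropic Pfister forms being hyperbolic, the residue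
conditions on a vector of polynomials of bounded degree can then be met by half as many linear
equations (`class_cut`, `pi_cond`, `inf_cond`), and counting dimensions leaves a nonzero solution.

*Obstruction.* The coefficients of a very general member are algebraically independent over `ℚ`, so
a place of `ℂ` with residue characteristic zero specializes it to `F0` (`exists_place`,
`generic_member`), and this place extends to the function field `L` in the manner of Gauss's lemma
(`IsRed`, `VL`). If `L` became purely transcendental after adjoining variables, the generic point
would be a polynomial point in affine space, and could be joined to infinity by a line in a constant
direction (`exists_direction`, `onLine`). At infinity the coordinates lie in `ℂ`, where
`⟨x^G⟩` is isotropic because `-x_0 x_n` is a square. Following the Newton polygon of the reduction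
of this line (`newton_descent`, `path_descent`), isotropy propagates through the specialization
step to the generic point of `F0`, contradicting anisotropy (`no_rational`).
-/

noncomputable section
open MvPolynomial

/-- The rational function field `ℂ(t₁, …, t_d)`. -/
abbrev RatFF (d : ℕ) : Type := FractionRing (MvPolynomial (Fin d) ℂ)

/-- An affine ℂ-algebra `R` (a chart, or an affine cone, of a variety `V`) has stably
rational fraction field: `Frac(R)(y₁,…,y_m) ≅ ℂ(t₁,…,t_d)` for some `m`, `d`.
If `R` is the coordinate ring of the affine cone over a projective variety `V`
(so that `Frac R = ℂ(V)(t)` is stably birational to `ℂ(V)`), this holds if and only if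
`V` is stably rational, i.e. `V × ℙᵐ` is birational to a projective space for some `m`. -/
def IsStablyRationalSpec (R : Type*) [CommRing R] [Algebra ℂ R] : Prop :=
  ∃ m d : ℕ, Nonempty (FractionRing (MvPolynomial (Fin m) R) ≃ₐ[ℂ] RatFF d)

/-- The fraction field of the affine ℂ-algebra `R` embeds into a purely transcendental
extension of `ℂ`.  If `R` is the coordinate ring of the affine cone over a projective
variety `V`, this holds if and only if `V` is unirational. -/
def IsUnirationalSpec (R : Type*) [CommRing R] [Algebra ℂ R] : Prop :=
  ∃ d : ℕ, Nonempty (FractionRing R →ₐ[ℂ] RatFF d)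

/-- `Z` is an algebraic (Zariski closed) subset of a parameter space `V` with coordinates
`coords`: it is the common zero locus of a set of polynomial functions in the coordinates. -/
def IsAlgSubsetOn {V : Type*} (coords : Set (V → ℂ)) (Z : Set V) : Prop :=
  ∃ S : Set (V → ℂ),
    S ⊆ ↑(Algebra.adjoin ℂ coords) ∧ Z = {v | ∀ f ∈ S, f v = 0}

/-- `P` holds for a very general point of the parameter space `V`: it holds away from a
countable union of proper algebraic subsets. -/
def VeryGenerallyOn {V : Type*} (coords : Set (V → ℂ)) (P : V → Prop) : Prop :=
  ∃ Z : ℕ → Set V,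
    (∀ m, IsAlgSubsetOn coords (Z m) ∧ Z m ≠ Set.univ) ∧ ∀ v, (∀ m, v ∉ Z m) → P v

noncomputable section
open MvPolynomial

/-- Homogeneous coordinate ring `ℂ[x₀,…,xₙ, y₀,…,y_r]` of `ℙ^{N+1}` with `N = n + r`;
the fixed `r`-plane is `P = {x₀ = ⋯ = xₙ = 0}`. -/
abbrev HypAmb (n r : ℕ) := MvPolynomial (Fin (n+1) ⊕ Fin (r+1)) ℂ

/-- The linear system of hypersurfaces `X = {F = 0} ⊂ ℙ^{N+1}` (`N = n + r`) of degree `d`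
with multiplicity at least `d - 2` along the `r`-plane `P = {x = 0}`: `F` is homogeneous of
degree `d` and every monomial of `F` has degree at least `d - 2` in the variables `x`. -/
def MultHypSpace (n r d : ℕ) : Type :=
  {F : HypAmb n r // ∀ m : (Fin (n+1) ⊕ Fin (r+1)) →₀ ℕ, coeff m F ≠ 0 →
    (∑ i, m (Sum.inl i)) + (∑ j, m (Sum.inr j)) = d ∧ d - 2 ≤ ∑ i, m (Sum.inl i)}

/-- The coefficients, as coordinates on this linear system. -/
def multHypCoords (n r d : ℕ) : Set (MultHypSpace n r d → ℂ) :=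
  {f | ∃ m : (Fin (n+1) ⊕ Fin (r+1)) →₀ ℕ, f = fun F => coeff m F.1}

/-- Coordinate ring of the affine cone over the hypersurface `X = {F = 0} ⊂ ℙ^{N+1}`;
the corresponding affine variety is stably birational to `X`. -/
def HypConeRing {n r d : ℕ} (F : MultHypSpace n r d) : Type :=
  HypAmb n r ⧸ Ideal.span {F.1}

instance {n r d : ℕ} (F : MultHypSpace n r d) : CommRing (HypConeRing F) :=
  Ideal.Quotient.commRing _
instance {n r d : ℕ} (F : MultHypSpace n r d) : Algebra ℂ (HypConeRing F) :=
  Ideal.Quotient.algebra ℂ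

/-! ### Pfister forms: similitudes and totally isotropic cuts -/

/-- `HasSim q`: every value `q u ≠ 0` is the factor of a linear similitude of `q`. -/
def HasSim {E W : Type*} [Field E] [AddCommGroup W] [Module E W] (q : QuadraticForm E W) : Prop :=
  ∀ u, q u ≠ 0 → ∃ T : W →ₗ[E] W, ∀ z, q (T z) = q u * q z

/-- `HasCut q`: if `q` is isotropic, then at most `(dim W) / 2` linear conditions cut out a
totally isotropic subspace. -/
def HasCut {E W : Type*} [Field E] [AddCommGroup W] [Module E W] (q : QuadraticForm E W) : Prop :=
  (∃ z, z ≠ 0 ∧ q z = 0) → ∃ (k : ℕ) (f : W →ₗ[E] (Fin k → E)),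
    2 * k ≤ Module.finrank E W ∧ ∀ z, f z = 0 → q z = 0

section abstractstep
variable {E W : Type*} [Field E] [AddCommGroup W] [Module E W]

/-- A form `q ⊥ a q` inherits similitudes: multiplication by a value of `q ⊥ a q` is written with the
similitudes of `q`, as in the composition formula for Pfister forms. -/
theorem sim_step (q : QuadraticForm E W) (hq : HasSim q) (a : E) (ha : a ≠ 0) :
    HasSim (q.prod (a • q)) := by
  rintro ⟨u1, u2⟩ hu
  simp only [QuadraticMap.prod_apply, smul_apply, smul_eq_mul] at hu ⊢
  by_cases h1 : q u1 = 0
  · have h2 : q u2 ≠ 0 := by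
      intro h; apply hu; rw [h1, h]; ring
    obtain ⟨B, hB⟩ := hq u2 h2
    refine ⟨LinearMap.prod (a • B ∘ₗ LinearMap.snd E W W) (B ∘ₗ LinearMap.fst E W W), ?_⟩
    rintro ⟨z1, z2⟩
    simp [QuadraticMap.map_smul, hB, h1]; ring
  obtain ⟨A, hA⟩ := hq u1 h1
  by_cases h2 : q u2 = 0
  · refine ⟨LinearMap.prodMap A A, ?_⟩
    rintro ⟨z1, z2⟩
    simp [hA, h2]; ring
  obtain ⟨B, hB⟩ := hq u2 h2
  set α := q u1
  set β := q u2
  -- `C` and `C'` are similitudes with the inverse factors `β/α` and `α/β`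
  set C : W →ₗ[E] W := α⁻¹ • (B ∘ₗ A) with hC
  set C' : W →ₗ[E] W := β⁻¹ • (A ∘ₗ B) with hC'
  have eC : ∀ z, q (C z) = β / α * q z := by
    intro z; simp [hC, QuadraticMap.map_smul, hA, hB]; field_simp
  have eC' : ∀ z, q (C' z) = α / β * q z := by
    intro z; simp [hC', QuadraticMap.map_smul, hA, hB]; field_simp
  refine ⟨LinearMap.prod
    (A ∘ₗ (LinearMap.fst E W W - (a * (β / α)) • C' ∘ₗ LinearMap.snd E W W))
    (A ∘ₗ C ∘ₗ (LinearMap.fst E W W + C' ∘ₗ LinearMap.snd E W W)), ?_⟩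
  rintro ⟨z1, z2⟩
  have hz : q z2 = β / α * q (C' z2) := by rw [eC']; field_simp
  simp only [LinearMap.prod_apply, Function.prod, LinearMap.comp_apply, LinearMap.sub_apply,
    LinearMap.add_apply, LinearMap.smul_apply, LinearMap.fst_apply, LinearMap.snd_apply, hA, eC]
  rw [hz]
  generalize C' z2 = w
  have e1 : q (z1 - (a * (β / α)) • w) = q z1 - (a * (β / α)) * QuadraticMap.polar q z1 w
      + (a * (β / α)) ^ 2 * q w := by
    have := QuadraticMap.map_add q z1 (-((a * (β / α)) • w))
    rw [← sub_eq_add_neg] at this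
    rw [this, QuadraticMap.map_neg, QuadraticMap.map_smul, QuadraticMap.polar_neg_right,
      QuadraticMap.polar_smul_right]
    simp only [smul_eq_mul]; ring
  rw [e1, QuadraticMap.map_add q z1 w]
  field_simp
  ring

/-- Half-dimensional cuts pass from `q` to `q ⊥ a q`. If `q` is anisotropic and `q ⊥ a q` is not, then
`-a` is a similarity factor of `q`, and the graph of a similitude is totally isotropic. -/
theorem cut_step [Module.Finite E W] (q : QuadraticForm E W) (hq : HasSim q) (hc : HasCut q)
    (a : E) (ha : a ≠ 0) : HasCut (q.prod (a • q)) := by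
  rintro ⟨⟨u, w⟩, hne, hz⟩
  simp only [QuadraticMap.prod_apply, smul_apply, smul_eq_mul] at hz
  by_cases hiso : ∃ z, z ≠ 0 ∧ q z = 0
  · obtain ⟨k, f, hk, hf⟩ := hc hiso
    refine ⟨k + k, (LinearEquiv.sumArrowLequivProdArrow (Fin k) (Fin k) E E |>.symm.trans
      (LinearEquiv.funCongrLeft E E finSumFinEquiv.symm)).toLinearMap ∘ₗ LinearMap.prodMap f f,
      ?_, ?_⟩
    · rw [Module.finrank_prod]; omega
    · rintro ⟨z1, z2⟩ h
      rw [LinearMap.comp_apply, LinearEquiv.coe_coe, LinearEquiv.map_eq_zero_iff] at h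
      simp only [LinearMap.prodMap_apply, Prod.mk_eq_zero] at h
      simp [hf _ h.1, hf _ h.2]
  · push Not at hiso
    have hw : w ≠ 0 := by
      rintro rfl
      have : u ≠ 0 := by rintro rfl; exact hne rfl
      apply hiso u this; simpa using hz
    have hu : u ≠ 0 := by
      rintro rfl
      simp at hz
      rcases hz with h | h
      · exact ha h
      · exact hiso w hw h
    obtain ⟨A, hA⟩ := hq u (hiso u hu)
    obtain ⟨B, hB⟩ := hq w (hiso w hw)
    have hw' := hiso w hw
    refine ⟨Module.finrank E W, (Module.finBasis E W).equivFun.toLinearMap ∘ₗ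
      (LinearMap.fst E W W - (q w)⁻¹ • (A ∘ₗ B) ∘ₗ LinearMap.snd E W W), ?_, ?_⟩
    · rw [Module.finrank_prod]; omega
    · rintro ⟨z1, z2⟩ h
      rw [LinearMap.comp_apply, LinearEquiv.coe_coe, LinearEquiv.map_eq_zero_iff] at h
      simp only [LinearMap.sub_apply, LinearMap.fst_apply, LinearMap.smul_apply,
        LinearMap.comp_apply, LinearMap.snd_apply, sub_eq_zero] at h
      simp only [QuadraticMap.prod_apply, smul_apply, smul_eq_mul, h,
        QuadraticMap.map_smul, hA, hB]
      field_simp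
      linear_combination q z2 * hz
end abstractstep

section diag
variable {E : Type*} [Field E]

theorem HasSim.congr {W W' : Type*} [AddCommGroup W] [Module E W] [AddCommGroup W'] [Module E W']
    {q : QuadraticForm E W} {q' : QuadraticForm E W'} (e : W ≃ₗ[E] W') (h : ∀ z, q' (e z) = q z)
    (hq : HasSim q') : HasSim q := by
  intro u hu
  obtain ⟨T, hT⟩ := hq (e u) (by rwa [h])
  refine ⟨e.symm.toLinearMap ∘ₗ T ∘ₗ e.toLinearMap, fun z => ?_⟩
  rw [← h, ← h u, ← h z, ← hT]; simp

theorem HasCut.congr {W W' : Type*} [AddCommGroup W] [Module E W] [AddCommGroup W'] [Module E W']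
    {q : QuadraticForm E W} {q' : QuadraticForm E W'} (e : W ≃ₗ[E] W') (h : ∀ z, q' (e z) = q z)
    (hq : HasCut q') : HasCut q := by
  rintro ⟨z, hz, hqz⟩
  obtain ⟨k, f, hk, hf⟩ := hq ⟨e z, by simpa using hz, by rw [h, hqz]⟩
  refine ⟨k, f ∘ₗ e.toLinearMap, by rwa [e.finrank_eq], fun z hz => ?_⟩
  rw [← h]; exact hf _ hz

/-- Coefficients indexed by an elementary abelian 2-group, multiplicative up to squares:
the diagonal form with these coefficients is (up to squares) a Pfister form. -/
def SqMult {V : Type*} [Add V] (c : V → E) : Prop :=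
  (∀ A, c A ≠ 0) ∧ ∀ A B, ∃ s, c (A + B) = s ^ 2 * (c A * c B)

/-- Splitting off the first coordinate, with the second half rescaled by `s`. -/
def splitEquiv (m : ℕ) (s : (Fin m → ZMod 2) → E) (hs : ∀ B, s B ≠ 0) :
    ((Fin (m + 1) → ZMod 2) → E) ≃ₗ[E] ((Fin m → ZMod 2) → E) × ((Fin m → ZMod 2) → E) where
  toFun z := (fun B => z (Fin.cons 0 B), fun B => s B * z (Fin.cons 1 B))
  map_add' z w := by ext B <;> simp [mul_add]
  map_smul' a z := by ext B <;> simp [mul_left_comm]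
  invFun p A := if A 0 = 0 then p.1 (Fin.tail A) else (s (Fin.tail A))⁻¹ * p.2 (Fin.tail A)
  left_inv z := by
    ext A
    by_cases h : A 0 = 0
    · simp only [h, if_true]
      rw [← h, Fin.cons_self_tail]
    · have h1 : A 0 = 1 := by
        generalize A 0 = a at h
        revert a; decide
      simp only [h, if_false]
      rw [inv_mul_cancel_left₀ (hs _), ← h1, Fin.cons_self_tail]
  right_inv p := by ext B <;> simp [hs]

theorem sum_split {m : ℕ} (f : (Fin (m + 1) → ZMod 2) → E) :
    ∑ A, f A = (∑ B, f (Fin.cons 0 B)) + ∑ B, f (Fin.cons 1 B) := by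
  rw [← (Fin.consEquiv (fun _ : Fin (m + 1) => ZMod 2)).sum_comp, Fintype.sum_prod_type]
  exact Fin.sum_univ_two _

theorem sim_cut_aux (m : ℕ) : ∀ c : (Fin m → ZMod 2) → E, SqMult c →
    HasSim (QuadraticMap.weightedSumSquares E c) ∧ HasCut (QuadraticMap.weightedSumSquares E c) := by
  induction m with
  | zero =>
    rintro c ⟨h0, hc⟩
    obtain ⟨s, hs⟩ := hc 0 0
    have hs' : s ^ 2 * c 0 = 1 := by
      apply mul_right_cancel₀ (h0 0)
      rw [add_zero] at hs
      linear_combination -hs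
    have hs0 : s ≠ 0 := by rintro rfl; simp at hs'
    constructor
    · intro u hu
      refine ⟨(s⁻¹ * u 0) • LinearMap.id, fun z => ?_⟩
      have hd : ∀ f : (Fin 0 → ZMod 2) → E, ∑ A, f A = f 0 := fun f => by
        rw [Fintype.sum_unique]; exact congrArg f (Subsingleton.elim _ _)
      simp only [QuadraticMap.weightedSumSquares_apply, hd,
        smul_eq_mul, LinearMap.smul_apply, LinearMap.id_apply, Pi.smul_apply]
      field_simp
      linear_combination -c 0 * u 0 ^ 2 * z 0 ^ 2 * hs'
    · rintro ⟨z, hz, h⟩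
      exfalso; apply hz
      ext A
      simp [QuadraticMap.weightedSumSquares_apply, h0] at h
      exact (congrArg z (Subsingleton.elim _ _)).trans h
  | succ m ih =>
    rintro c ⟨h0, hc⟩
    have hc' : SqMult (fun B : Fin m → ZMod 2 => c (Fin.cons 0 B)) := by
      refine ⟨fun B => h0 _, fun A B => ?_⟩
      obtain ⟨s, hs⟩ := hc (Fin.cons 0 A) (Fin.cons 0 B)
      refine ⟨s, ?_⟩
      rw [← hs]
      refine congrArg c (funext fun i => ?_)
      refine Fin.cases ?_ (fun i => ?_) i <;> simp
    have ha : c (Fin.cons 1 0) ≠ 0 := h0 _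
    have hex : ∀ B : Fin m → ZMod 2, ∃ s, c (Fin.cons 1 B) =
        s ^ 2 * (c (Fin.cons 1 0) * c (Fin.cons 0 B)) := by
      intro B
      obtain ⟨s, hs⟩ := hc (Fin.cons 1 0) (Fin.cons 0 B)
      refine ⟨s, ?_⟩
      rw [← hs]
      refine congrArg c (funext fun i => ?_)
      refine Fin.cases ?_ (fun i => ?_) i <;> simp
    choose s hs using hex
    have hs0 : ∀ B, s B ≠ 0 := by
      intro B h; apply h0 (Fin.cons 1 B); rw [hs, h]; simp
    have key : ∀ z, ((QuadraticMap.weightedSumSquares E fun B : Fin m → ZMod 2 => c (Fin.cons 0 B)).prod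
        (c (Fin.cons 1 0) • (QuadraticMap.weightedSumSquares E fun B : Fin m → ZMod 2 => c (Fin.cons 0 B))))
        (splitEquiv m s hs0 z) = QuadraticMap.weightedSumSquares E c z := by
      intro z
      simp only [QuadraticMap.prod_apply, smul_apply, QuadraticMap.weightedSumSquares_apply,
        smul_eq_mul, splitEquiv, LinearEquiv.coe_mk, LinearMap.coe_mk, AddHom.coe_mk]
      rw [sum_split]
      congr 1
      rw [Finset.mul_sum]
      refine Finset.sum_congr rfl fun B _ => ?_
      rw [hs B]; ring
    obtain ⟨i1, i2⟩ := ih _ hc'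
    exact ⟨(sim_step _ i1 _ ha).congr _ key, (cut_step _ i1 i2 _ ha).congr _ key⟩

theorem form_sim {V : Type*} [AddCommGroup V] [Module (ZMod 2) V] [Fintype V] (c : V → E)
    (hc : SqMult c) (u : V → E) (hu : ∑ G, c G * u G ^ 2 ≠ 0) :
    ∃ T : (V → E) →ₗ[E] (V → E), ∀ z, ∑ G, c G * T z G ^ 2 =
      (∑ G, c G * u G ^ 2) * ∑ G, c G * z G ^ 2 := by
  let e := (Module.finBasis (ZMod 2) V).equivFun
  have h1 : SqMult (fun B => c (e.symm B)) :=
    ⟨fun B => hc.1 _, fun A B => by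
      obtain ⟨s, hs⟩ := hc.2 (e.symm A) (e.symm B)
      exact ⟨s, by rw [← hs]; simp only [map_add]⟩⟩
  have h2 := HasSim.congr (q := QuadraticMap.weightedSumSquares E c)
    (LinearEquiv.funCongrLeft E E e.symm.toEquiv) (fun z => by
      simp only [QuadraticMap.weightedSumSquares_apply]
      exact e.symm.toEquiv.sum_comp (fun G => c G • (z G * z G))) (sim_cut_aux _ _ h1).1
  have h3 : ∀ z, QuadraticMap.weightedSumSquares E c z = ∑ G, c G * z G ^ 2 := by
    intro z; simp [QuadraticMap.weightedSumSquares_apply, sq]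
  obtain ⟨T, hT⟩ := h2 u (by rwa [h3])
  exact ⟨T, fun z => by simpa only [h3] using hT z⟩

/-- If the part of a Pfister form supported on one coset class `lam = p` is isotropic, then the
part on any class `lam = p'` becomes zero on a subspace of at most half codimension. -/
theorem class_cut {V : Type*} [AddCommGroup V] [Module (ZMod 2) V] [Fintype V] [DecidableEq V]
    (c : V → E) (hc : SqMult c) (lam : V →ₗ[ZMod 2] ZMod 2) (p p' : ZMod 2)
    (z : V → E) (hz : z ≠ 0) (hsupp : ∀ G, lam G ≠ p → z G = 0) (h0 : ∑ G, c G * z G ^ 2 = 0) :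
    ∃ (k : ℕ) (f : (V → E) →ₗ[E] (Fin k → E)), 2 * k ≤ (Finset.univ.filter fun G => lam G = p').card ∧
      ∀ w, f w = 0 → ∑ G with lam G = p', c G * w G ^ 2 = 0 := by
  by_cases hp' : ∃ A', lam A' = p'
  swap
  · push Not at hp'
    refine ⟨0, 0, by simp, fun w _ => ?_⟩
    rw [Finset.filter_false_of_mem (fun G _ => hp' G)]; simp
  obtain ⟨A', hA'⟩ := hp'
  obtain ⟨A, hA0⟩ := Function.ne_iff.1 hz
  have hA : lam A = p := by
    by_contra h; exact hA0 (hsupp A h)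
  let e := (Module.finBasis (ZMod 2) (LinearMap.ker lam)).equivFun.symm
  set m := Module.finrank (ZMod 2) (LinearMap.ker lam)
  have h1 : SqMult (fun B => c (e B)) :=
    ⟨fun B => hc.1 _, fun A B => by
      obtain ⟨s, hs⟩ := hc.2 (e A) (e B)
      exact ⟨s, by rw [← hs]; simp only [map_add]; rfl⟩⟩
  -- summation over a class, parametrised by its direction space
  have hsum : ∀ (q : ZMod 2) (A0 : V), lam A0 = q → ∀ f : V → E,
      ∑ G with lam G = q, f G = ∑ B, f (A0 + e B) := by
    intro q A0 hA0 f
    symm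
    refine Finset.sum_bij (fun B _ => A0 + (e B : V)) ?_ ?_ ?_ ?_
    · intro B _
      have : lam (e B : V) = 0 := (e B).2
      simp [this, hA0]
    · intro B _ B' _ h
      exact e.injective (Subtype.ext (add_left_cancel h))
    · intro G hG
      have : G - A0 ∈ LinearMap.ker lam := by
        simp at hG; simp [hG, hA0]
      exact ⟨e.symm ⟨_, this⟩, Finset.mem_univ _, by simp⟩
    · intro B _; rfl
  have hcard : (Finset.univ.filter fun G => lam G = p').card = Fintype.card (Fin m → ZMod 2) := by
    symm
    refine Finset.card_bij (fun B _ => A' + (e B : V)) ?_ ?_ ?_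
    · intro B _
      have : lam (e B : V) = 0 := (e B).2
      simp [this, hA']
    · intro B _ B' _ h
      exact e.injective (Subtype.ext (add_left_cancel h))
    · intro G hG
      have : G - A' ∈ LinearMap.ker lam := by
        simp at hG; simp [hG, hA']
      exact ⟨e.symm ⟨_, this⟩, Finset.mem_univ _, by simp⟩
  have hex : ∀ (A0 : V) (B : Fin m → ZMod 2), ∃ s, s ≠ 0 ∧ c (A0 + e B) = s ^ 2 * (c A0 * c (e B)) := by
    intro A0 B
    obtain ⟨s, hs⟩ := hc.2 A0 (e B)
    refine ⟨s, ?_, hs⟩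
    rintro rfl
    apply hc.1 (A0 + e B); rw [hs]; simp
  choose s hs0 hs using hex
  have hiso : ∃ z : (Fin m → ZMod 2) → E, z ≠ 0 ∧
      QuadraticMap.weightedSumSquares E (fun B => c (e B)) z = 0 := by
    refine ⟨fun B => s A B * z (A + e B), ?_, ?_⟩
    · intro h
      have := congrFun h 0
      simp [hs0] at this
      exact hA0 this
    · apply mul_left_cancel₀ (hc.1 A)
      rw [QuadraticMap.weightedSumSquares_apply, mul_zero, ← h0, Finset.mul_sum]
      rw [← Finset.sum_filter_of_ne (p := fun G => lam G = p), hsum p A hA]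
      · refine Finset.sum_congr rfl fun B _ => ?_
        rw [hs A B]; simp only [smul_eq_mul]; ring
      · intro G _ hne
        by_contra h
        apply hne; rw [hsupp G h]; simp
  obtain ⟨k, f, hk, hf⟩ := (sim_cut_aux _ _ h1).2 hiso
  refine ⟨k, f ∘ₗ LinearMap.pi (fun B => s A' B • LinearMap.proj (A' + (e B : V))), ?_, ?_⟩
  · rw [hcard]; simpa using hk
  · intro w hw
    have := hf _ hw
    rw [hsum p' A' hA']
    rw [QuadraticMap.weightedSumSquares_apply] at this
    have h2 : c A' * ∑ B, c (e B) • ((LinearMap.pi (fun B => s A' B • LinearMap.proj (A' + (e B : V)))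
      : (V → E) →ₗ[E] ((Fin m → ZMod 2) → E)) w B * (LinearMap.pi (fun B => s A' B • LinearMap.proj (A' + (e B : V)))
      : (V → E) →ₗ[E] ((Fin m → ZMod 2) → E)) w B) = 0 := by
        rw [this, mul_zero]
    rw [← h2, Finset.mul_sum]
    refine Finset.sum_congr rfl fun B _ => ?_
    rw [hs A' B]; simp; ring
end diag

/-! ### Anisotropic diagonal forms and the Cassels–Pfister argument -/

/-- Anisotropy of the diagonal form with coefficients `c` over a commutative ring. -/
def Aniso {ι R : Type*} [Fintype ι] [CommRing R] (c : ι → R) : Prop :=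
  ∀ z : ι → R, ∑ i, c i * z i ^ 2 = 0 → z = 0

section aniso
variable {ι R : Type*} [Fintype ι] [CommRing R]

/-- Over `R[X]`, the degree of a value of an anisotropic form bounds the degrees of the entries. -/
theorem aniso_degree {c : ι → R} (hc : Aniso c) (r : ι → Polynomial R) (m : ℕ)
    (h : ∀ j, 2 * m < j → (∑ i, Polynomial.C (c i) * r i ^ 2).coeff j = 0) (i : ι) :
    (r i).natDegree ≤ m := by
  set D := Finset.univ.sup fun i => (r i).natDegree with hD
  have hle : ∀ i, (r i).natDegree ≤ D := fun i =>
    Finset.le_sup (f := fun i => (r i).natDegree) (Finset.mem_univ i)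
  refine (hle i).trans ?_
  by_contra hlt
  push Not at hlt
  have h1 : ∑ i, c i * ((r i).coeff D) ^ 2 = 0 := by
    rw [← h (2 * D) (by omega), Polynomial.finsetSum_coeff]
    refine Finset.sum_congr rfl fun i _ => ?_
    rw [Polynomial.coeff_C_mul, Polynomial.coeff_pow_of_natDegree_le (hle i)]
  have h2 := hc _ h1
  obtain ⟨j, _, hj⟩ := Finset.exists_mem_eq_sup Finset.univ ⟨i, Finset.mem_univ i⟩
    fun i => (r i).natDegree
  have h3 : (r j).leadingCoeff = 0 := by
    rw [Polynomial.leadingCoeff, ← hj, ← hD]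
    exact congrFun h2 j
  rw [Polynomial.leadingCoeff_eq_zero] at h3
  rw [h3, ← hD] at hj
  simp at hj
  omega

theorem aniso_poly {c : ι → R} (hc : Aniso c) : Aniso fun i => Polynomial.C (c i) := by
  intro r h
  have h1 := aniso_degree hc r 0 (fun j _ => by rw [h]; simp)
  ext1 i
  have h2 : ∑ i, c i * ((r i).coeff 0) ^ 2 = 0 := by
    have := congrArg (fun p => p.coeff 0) h
    simpa [Polynomial.finsetSum_coeff, Polynomial.coeff_C_mul, Polynomial.coeff_zero_eq_eval_zero,
      Polynomial.eval_finset_sum] using this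
  have h3 := congrFun (hc _ h2) i
  rw [Polynomial.eq_C_of_natDegree_le_zero (h1 i)]
  simp only [Pi.zero_apply] at h3
  rw [h3]; simp

theorem aniso_equiv {S : Type*} [CommRing S] (e : R ≃+* S) {c : ι → R} (hc : Aniso c) :
    Aniso fun i => e (c i) := by
  intro z h
  have := hc (fun i => e.symm (z i)) (by
    apply e.injective; rw [map_zero, ← h]; simp)
  ext i
  simpa using congrFun this i

theorem aniso_mvPoly_fin (s : ℕ) {c : ι → R} (hc : Aniso c) :
    Aniso fun i => (C (c i) : MvPolynomial (Fin s) R) := by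
  induction s with
  | zero =>
    exact aniso_equiv (MvPolynomial.isEmptyRingEquiv R (Fin 0)).symm hc
  | succ s ih =>
    have := aniso_equiv (finSuccEquiv R s).symm.toRingEquiv (aniso_poly ih)
    convert this using 2 with i
    apply (finSuccEquiv R s).injective
    simp [finSuccEquiv_apply]

theorem aniso_mvPoly {σ : Type*} [Finite σ] {c : ι → R} (hc : Aniso c) :
    Aniso fun i => (C (c i) : MvPolynomial σ R) := by
  obtain ⟨s, ⟨e⟩⟩ := Finite.exists_equiv_fin σ
  have := aniso_equiv (renameEquiv R e.symm).toRingEquiv (aniso_mvPoly_fin s hc)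
  simpa using this

theorem aniso_frac [IsDomain R] {K : Type*} [Field K] [Algebra R K] [IsFractionRing R K] {c : ι → R} (hc : Aniso c) :
    Aniso fun i => algebraMap R K (c i) := by
  intro z h
  obtain ⟨b, hb⟩ := IsLocalization.exist_integer_multiples_of_finite (nonZeroDivisors R) z
  choose w hw using hb
  have hb0 : algebraMap R K b ≠ 0 := by
    simp
  simp only [Algebra.smul_def] at hw
  have := hc w (by
    apply IsFractionRing.injective R K
    rw [map_zero, map_sum, ← mul_zero (algebraMap R K b ^ 2), ← h, Finset.mul_sum]
    refine Finset.sum_congr rfl fun i _ => ?_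
    rw [map_mul, map_pow, hw]; ring)
  ext i
  have h2 := hw i
  rw [this] at h2
  simpa [hb0] using h2

theorem aniso_comp {S : Type*} [CommRing S] (e : R →+* S) (he : Function.Injective e) {c : ι → R}
    (hc : Aniso fun i => e (c i)) : Aniso c := by
  intro z h
  have := hc (fun i => e (z i)) (by
    have := congrArg e h
    simpa using this)
  ext i
  apply he
  simpa using congrFun this i

end aniso

section casselsPfister
variable {ι F : Type*} [Fintype ι] [Field F]

theorem aniso_natDegree_lt {c : ι → F} (r : ι → Polynomial F) (n : ℕ)
    (h : ∀ i, (r i).degree < n) : (∑ i, Polynomial.C (c i) * r i ^ 2).degree < (2 * n : ℕ) ∨ n = 0 := by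
  rcases Nat.eq_zero_or_pos n with h0 | h0
  · exact Or.inr h0
  left
  have h1 : ∀ i, (r i).natDegree ≤ n - 1 := fun i => by
    rcases eq_or_ne (r i) 0 with h1 | h1
    · simp [h1]
    · have := (Polynomial.natDegree_lt_iff_degree_lt h1).2 (h i)
      omega
  have : (∑ i, Polynomial.C (c i) * r i ^ 2).natDegree ≤ 2 * (n - 1) := by
    refine Polynomial.natDegree_sum_le_of_forall_le _ _ fun i _ => ?_
    refine (Polynomial.natDegree_C_mul_le _ _).trans ?_
    refine Polynomial.natDegree_pow_le.trans ?_
    exact Nat.mul_le_mul_left _ (h1 i)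
  refine lt_of_le_of_lt Polynomial.degree_le_natDegree ?_
  exact_mod_cast (by omega)

/-- **Cassels–Pfister**: a polynomial represented by a diagonal anisotropic form over `F(X)` is
represented over `F[X]`. -/
theorem cassels_pfister {c : ι → F} (hc : Aniso c) (p : Polynomial F) :
    ∀ (N : ℕ) (f : Polynomial F) (v : ι → Polynomial F), f ≠ 0 → f.natDegree ≤ N →
      ∑ i, Polynomial.C (c i) * v i ^ 2 = p * f ^ 2 →
      ∃ w : ι → Polynomial F, ∑ i, Polynomial.C (c i) * w i ^ 2 = p := by
  intro N
  induction N using Nat.strong_induction_on with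
  | _ N ih =>
  intro f v hf hN h
  set w : ι → Polynomial F := fun i => v i / f
  set r : ι → Polynomial F := fun i => v i % f
  have hv : ∀ i, v i = f * w i + r i := fun i => (EuclideanDomain.div_add_mod (v i) f).symm
  by_cases hr : r = 0
  · refine ⟨w, ?_⟩
    apply mul_right_cancel₀ (pow_ne_zero 2 hf)
    rw [← h, Finset.sum_mul]
    refine Finset.sum_congr rfl fun i _ => ?_
    rw [hv i, hr]; simp; ring
  set B := ∑ i, Polynomial.C (c i) * (v i * w i) with hB
  set W := ∑ i, Polynomial.C (c i) * w i ^ 2 with hW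
  set a := W - p
  set b := 2 * (f * p - B)
  have hrr : f * (a * f + b) = ∑ i, Polynomial.C (c i) * r i ^ 2 := by
    have : ∑ i, Polynomial.C (c i) * r i ^ 2 = p * f ^ 2 - 2 * f * B + f ^ 2 * W := by
      rw [← h, hB, hW, Finset.mul_sum, Finset.mul_sum, ← Finset.sum_sub_distrib,
        ← Finset.sum_add_distrib]
      refine Finset.sum_congr rfl fun i _ => ?_
      rw [show r i = v i - f * w i by rw [hv i]; ring]
      ring
    rw [this]; ring
  have hr0 : ∑ i, Polynomial.C (c i) * r i ^ 2 ≠ 0 := fun h0 => hr (aniso_poly hc _ h0)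
  have hf' : a * f + b ≠ 0 := by
    intro h0; apply hr0; rw [← hrr, h0, mul_zero]
  have hdeg := aniso_natDegree_lt (c := c) r f.natDegree (fun i => by
    rw [← Polynomial.degree_eq_natDegree hf]
    exact Polynomial.degree_mod_lt _ hf)
  have hpos : f.natDegree ≠ 0 := by
    intro h0
    apply hr
    ext1 i
    rw [Polynomial.eq_C_of_natDegree_eq_zero h0] at hf
    show v i % f = 0
    rw [Polynomial.eq_C_of_natDegree_eq_zero h0]
    rw [EuclideanDomain.mod_eq_zero]
    exact (Polynomial.isUnit_C.2 (by
      rw [isUnit_iff_ne_zero]; rintro h1; rw [h1] at hf; simp at hf)).dvd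
  replace hdeg := hdeg.resolve_right hpos
  rw [← hrr, Polynomial.degree_mul, Polynomial.degree_eq_natDegree hf,
    Polynomial.degree_eq_natDegree hf'] at hdeg
  have hdeg' : (a * f + b).natDegree < f.natDegree := by
    have : f.natDegree + (a * f + b).natDegree < 2 * f.natDegree := by exact_mod_cast hdeg
    omega
  refine ih (a * f + b).natDegree (by omega) (a * f + b) (fun i => a * v i + b * w i) hf' le_rfl ?_
  have : ∑ i, Polynomial.C (c i) * (a * v i + b * w i) ^ 2
      = a ^ 2 * (p * f ^ 2) + 2 * a * b * B + b ^ 2 * W := by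
    rw [← h, hB, hW, Finset.mul_sum, Finset.mul_sum, Finset.mul_sum, ← Finset.sum_add_distrib,
      ← Finset.sum_add_distrib]
    refine Finset.sum_congr rfl fun i _ => ?_
    ring
  rw [this]
  ring

/-- If an anisotropic form represents `g + c_{i₀} X²` over `F(X)`, then it represents `g` without using
the coordinate `i₀`: by Cassels–Pfister the representing vector is linear in `X`, and a suitable
specialization of `X` makes its `i₀`-term cancel. -/
theorem cp_one [CharZero F] {c : ι → F} (hc : Aniso c) (g : F) (i0 : ι) (f : Polynomial F) (hf : f ≠ 0)
    (v : ι → Polynomial F)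
    (h : ∑ i, Polynomial.C (c i) * v i ^ 2
      = (Polynomial.C g + Polynomial.C (c i0) * Polynomial.X ^ 2) * f ^ 2) :
    ∃ z : ι → F, z i0 = 0 ∧ ∑ i, c i * z i ^ 2 = g := by
  classical
  obtain ⟨w, hw⟩ := cassels_pfister hc _ _ f v hf le_rfl h
  have hdeg := aniso_degree hc w 1 (fun j hj => by
    rw [hw]
    simp [Polynomial.coeff_C, Polynomial.coeff_X_pow, show j ≠ 0 by omega, show j ≠ 2 by omega])
  have hw0 := Polynomial.eq_X_add_C_of_natDegree_le_one (hdeg i0)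
  -- a point where the `i0`-entry cancels `X`, up to sign
  obtain ⟨e, he⟩ : ∃ e : F, ((w i0).eval e) ^ 2 = e ^ 2 := by
    rw [hw0]
    generalize (w i0).coeff 1 = b
    generalize (w i0).coeff 0 = a
    by_cases hb : b = 1
    · refine ⟨-a / 2, ?_⟩
      simp [hb]; ring
    · refine ⟨a / (1 - b), ?_⟩
      have : 1 - b ≠ 0 := sub_ne_zero.2 (Ne.symm hb)
      simp; field_simp; ring
  refine ⟨fun i => if i = i0 then 0 else (w i).eval e, by simp, ?_⟩
  have h2 := congrArg (Polynomial.eval e) hw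
  simp only [Polynomial.eval_finset_sum, Polynomial.eval_mul, Polynomial.eval_C,
    Polynomial.eval_pow, Polynomial.eval_add, Polynomial.eval_X] at h2
  rw [← Finset.add_sum_erase _ _ (Finset.mem_univ i0)] at h2 ⊢
  rw [he] at h2
  simp only [if_true]
  have : ∑ i ∈ Finset.univ.erase i0, c i * (if i = i0 then 0 else (w i).eval e) ^ 2
      = ∑ i ∈ Finset.univ.erase i0, c i * ((w i).eval e) ^ 2 := by
    refine Finset.sum_congr rfl fun i hi => ?_
    rw [if_neg (Finset.ne_of_mem_erase hi)]
  rw [this]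
  linear_combination h2

/-- The version of `cp_one` in several variables, by induction on their number. -/
theorem cp_iter {F : Type} [Field F] [CharZero F] (s : ℕ) : ∀ {ι : Type} [Fintype ι] [DecidableEq ι] (c : ι → F) (_ : Aniso c) (g : F)
    (A : Fin s → ι) (_ : Function.Injective A) (f : MvPolynomial (Fin s) F) (_ : f ≠ 0)
    (v : ι → MvPolynomial (Fin s) F)
    (_ : ∑ i, C (c i) * v i ^ 2 = (C g + ∑ j, C (c (A j)) * X j ^ 2) * f ^ 2),
    ∃ z : ι → F, (∀ j, z (A j) = 0) ∧ ∑ i, c i * z i ^ 2 = g := by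
  induction s with
  | zero =>
    intro ι _ _ c hc g A hA f hf v h
    set e := MvPolynomial.isEmptyRingEquiv F (Fin 0)
    have he : ∀ a, e (C a) = a := fun a => by
      have : (C a : MvPolynomial (Fin 0) F) = e.symm a := rfl
      rw [this]; simp
    have hf0 : e f ≠ 0 := by simpa using hf
    refine ⟨fun i => e (v i) / e f, fun j => j.elim0, ?_⟩
    have h2 := congrArg e h
    simp only [map_sum, map_mul, map_pow, he, Finset.univ_eq_empty, Finset.sum_empty, add_zero] at h2
    simp only [div_pow, mul_div_assoc', ← Finset.sum_div, h2]
    field_simp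
  | succ s ih =>
    intro ι _ _ c hc g A hA f hf v h
    let P := MvPolynomial (Fin s) F
    let K := FractionRing P
    have hcK : Aniso fun i => algebraMap P K (C (c i)) := aniso_frac (aniso_mvPoly hc)
    let e : MvPolynomial (Fin (s + 1)) F →+* Polynomial K :=
      (Polynomial.mapRingHom (algebraMap P K)).comp (finSuccEquiv F s).toRingHom
    have he : Function.Injective e := by
      refine (Polynomial.map_injective _ (IsFractionRing.injective P K)).comp
        (finSuccEquiv F s).injective
    have heC : ∀ a, e (C a) = Polynomial.C (algebraMap P K (C a)) := by
      intro a; simp [e, finSuccEquiv_apply]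
    have heX0 : e (X 0) = Polynomial.X := by simp [e, finSuccEquiv_X_zero]
    have heX : ∀ j, e (X (Fin.succ j)) = Polynomial.C (algebraMap P K (X j)) := by
      intro j; simp [e, finSuccEquiv_X_succ]
    obtain ⟨z, hz0, hz⟩ := cp_one (F := K) hcK
      (algebraMap P K (C g + ∑ j : Fin s, C (c (A j.succ)) * X j ^ 2)) (A 0) (e f)
      (by rwa [Ne, map_eq_zero_iff e he]) (fun i => e (v i)) (by
        have h2 := congrArg e h
        simp only [map_sum, map_mul, map_pow, heC, map_add, Fin.sum_univ_succ, heX0, heX] at h2 ⊢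
        rw [h2]; ring)
    obtain ⟨b, hb⟩ := IsLocalization.exist_integer_multiples_of_finite (nonZeroDivisors P) z
    choose w hw using hb
    simp only [Algebra.smul_def] at hw
    have hb0 : (b : P) ≠ 0 := nonZeroDivisors.ne_zero b.2
    have hinj := IsFractionRing.injective P K
    have hw0 : w (A 0) = 0 := by
      apply hinj; rw [hw, hz0]; simp
    have hsum : ∑ i, C (c i) * w i ^ 2
        = (C g + ∑ j : Fin s, C (c (A j.succ)) * X j ^ 2) * (b : P) ^ 2 := by
      apply hinj
      rw [map_mul, ← hz, map_sum, Finset.sum_mul]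
      refine Finset.sum_congr rfl fun i _ => ?_
      rw [map_mul, map_pow, map_pow, hw]; ring
    have hsub : ∀ {M : Type} [AddCommMonoid M] (q : ι → M), q (A 0) = 0 →
        ∑ i : {i // i ≠ A 0}, q i = ∑ i, q i := by
      intro M _ q hq
      rw [← Fintype.sum_subtype_add_sum_subtype (fun i => i = A 0) q]
      refine Eq.symm ((congrArg (· + _) (Finset.sum_eq_zero fun i _ => ?_)).trans (zero_add _))
      rw [i.2, hq]
    obtain ⟨z', hz'0, hz'⟩ := ih (ι := {i // i ≠ A 0}) (fun i => c i) (by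
        intro y hy
        have := hc (fun i => if hi : i = A 0 then 0 else y ⟨i, hi⟩) (by
          rw [← hsub _ (by simp), ← hy]
          refine Finset.sum_congr rfl fun i _ => ?_
          rw [dif_neg i.2])
        ext i
        have h3 := congrFun this i
        simpa [i.2] using h3) g
      (fun j => ⟨A j.succ, fun h => Fin.succ_ne_zero j (hA h)⟩)
      (fun j j' h => Fin.succ_injective _ (hA (congrArg Subtype.val h)))
      b hb0 (fun i => w i) (by rw [← hsum]; exact hsub (fun i => C (c i) * w i ^ 2) (by simp [hw0]))
    refine ⟨fun i => if hi : i = A 0 then 0 else z' ⟨i, hi⟩, fun j => ?_, ?_⟩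
    · by_cases hj : A j = A 0
      · simp [hj]
      · simp only [hj, dite_false]
        have hj0 : j ≠ 0 := fun h => hj (by rw [h])
        obtain ⟨j', rfl⟩ := Fin.exists_succ_eq.2 hj0
        exact hz'0 j'
    · rw [← hsub _ (by simp), ← hz']
      refine Finset.sum_congr rfl fun i _ => ?_
      simp only [dif_neg i.2]
end casselsPfister

/-! ### The Pfister form `⟨x^G⟩` and its behaviour at a prime element -/

/-- The even subset of `{0,…,n}` (as an indicator vector) attached to a subset `G` of `{1,…,n}`. -/
def evn (n : ℕ) : (Fin n → ZMod 2) →ₗ[ZMod 2] (Fin (n + 1) → ZMod 2) where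
  toFun G := Fin.cons (∑ i, G i) G
  map_add' G H := by
    ext i; refine Fin.cases ?_ (fun i => ?_) i <;> simp [Finset.sum_add_distrib]
  map_smul' a G := by
    ext i; refine Fin.cases ?_ (fun i => ?_) i <;> simp [Finset.mul_sum]

/-- The squarefree monomial `∏ x_i` over the subset with indicator vector `A`. -/
def mon {n : ℕ} {R : Type*} [CommRing R] (x : Fin (n + 1) → R) (A : Fin (n + 1) → ZMod 2) : R :=
  ∏ i, x i ^ (A i).val

/-- The coefficients `x^G` of the Pfister form attached to `x`. -/
def xG {n : ℕ} {R : Type*} [CommRing R] (x : Fin (n + 1) → R) (G : Fin n → ZMod 2) : R :=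
  mon x (evn n G)

/-- Isotropy of the Pfister form `⟨x^G⟩`. -/
def Tiso {n : ℕ} {R : Type*} [CommRing R] (x : Fin (n + 1) → R) : Prop :=
  ∃ z : (Fin n → ZMod 2) → R, z ≠ 0 ∧ ∑ G, xG x G * z G ^ 2 = 0

/-- Half the size of the even subset attached to `G`. -/
def hlf {n : ℕ} (G : Fin n → ZMod 2) : ℕ := (∑ i, (evn n G i).val) / 2

/-- The degree `2e` form `ℓ^{2e} + ℓ x₀^{2e-n-2} ∏ x_i`, where `ℓ = ∑ x_i`. -/
def gfun {n : ℕ} {R : Type*} [CommRing R] (e : ℕ) (x : Fin (n + 1) → R) : R :=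
  (∑ i, x i) ^ (2 * e) + (∑ i, x i) * x 0 ^ (2 * e - n - 2) * ∏ i, x i

/-- Isotropy of the special quadric `⟨g, x^{G_j}⟩`. -/
def RelG {n s : ℕ} {R : Type*} [CommRing R] (e : ℕ) (Gs : Fin s → Fin n → ZMod 2)
    (x : Fin (n + 1) → R) : Prop :=
  ∃ (Z : R) (Y : Fin s → R), (Z ≠ 0 ∨ Y ≠ 0) ∧
    gfun e x * Z ^ 2 + ∑ j, xG x (Gs j) * Y j ^ 2 = 0

section basics
variable {n : ℕ} {R S : Type*} [CommRing R] [CommRing S]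

theorem evn_zero' (G : Fin n → ZMod 2) : evn n G 0 = ∑ i, G i := rfl
theorem evn_succ (G : Fin n → ZMod 2) (i : Fin n) : evn n G i.succ = G i := rfl

theorem evn_sum (G : Fin n → ZMod 2) : ∑ i, evn n G i = 0 := by
  rw [Fin.sum_univ_succ, evn_zero']
  simp only [evn_succ]
  exact CharTwo.add_self_eq_zero _

theorem two_hlf (G : Fin n → ZMod 2) : ∑ i, (evn n G i).val = 2 * hlf G := by
  have h : ((∑ i, (evn n G i).val : ℕ) : ZMod 2) = 0 := by
    rw [Nat.cast_sum, ← evn_sum G]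
    simp
  rw [ZMod.natCast_eq_zero_iff] at h
  rw [hlf]; omega

theorem mon_map (f : R →+* S) (x : Fin (n + 1) → R) (A : Fin (n + 1) → ZMod 2) :
    f (mon x A) = mon (fun i => f (x i)) A := by simp [mon]

theorem xG_map (f : R →+* S) (x : Fin (n + 1) → R) (G : Fin n → ZMod 2) :
    f (xG x G) = xG (fun i => f (x i)) G := mon_map _ _ _

theorem gfun_map (f : R →+* S) (e : ℕ) (x : Fin (n + 1) → R) :
    f (gfun e x) = gfun e (fun i => f (x i)) := by simp [gfun]

theorem mon_mul (x y : Fin (n + 1) → R) (A : Fin (n + 1) → ZMod 2) :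
    mon (fun i => x i * y i) A = mon x A * mon y A := by
  simp [mon, mul_pow, Finset.prod_mul_distrib]

theorem mon_add (x : Fin (n + 1) → R) (A B : Fin (n + 1) → ZMod 2) :
    mon x (A + B) * mon x (A * B) ^ 2 = mon x A * mon x B := by
  simp only [mon, ← Finset.prod_pow, ← Finset.prod_mul_distrib, ← pow_mul, ← pow_add]
  refine Finset.prod_congr rfl fun i _ => ?_
  congr 1
  simp only [Pi.add_apply, Pi.mul_apply]
  generalize A i = a
  generalize B i = b
  revert a b; decide

theorem mon_ne_zero [IsDomain R] {x : Fin (n + 1) → R} (hx : ∀ i, x i ≠ 0)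
    (A : Fin (n + 1) → ZMod 2) : mon x A ≠ 0 :=
  Finset.prod_ne_zero_iff.2 fun i _ => pow_ne_zero _ (hx i)

theorem xG_zero (x : Fin (n + 1) → R) : xG x 0 = 1 := by simp [xG, mon]

theorem xG_sqMult {E : Type*} [Field E] {x : Fin (n + 1) → E} (hx : ∀ i, x i ≠ 0) :
    SqMult (xG x) := by
  refine ⟨fun G => mon_ne_zero hx _, fun A B => ⟨(mon x (evn n A * evn n B))⁻¹, ?_⟩⟩
  have h := mon_add x (evn n A) (evn n B)
  have h0 := mon_ne_zero hx (evn n A * evn n B)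
  unfold xG
  rw [map_add, ← h]
  field_simp

theorem mon_smul (a : R) (x : Fin (n + 1) → R) (A : Fin (n + 1) → ZMod 2) :
    mon (fun i => a * x i) A = a ^ (∑ i, (A i).val) * mon x A := by
  rw [mon_mul, mon, Finset.prod_pow_eq_pow_sum]

theorem xG_smul (a : R) (x : Fin (n + 1) → R) (G : Fin n → ZMod 2) :
    xG (fun i => a * x i) G = (a ^ hlf G) ^ 2 * xG x G := by
  rw [xG, mon_smul, two_hlf, ← pow_mul, mul_comm (hlf G)]; rfl

theorem gfun_smul {e : ℕ} (he : n + 2 ≤ 2 * e) (a : R) (x : Fin (n + 1) → R) :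
    gfun e (fun i => a * x i) = (a ^ e) ^ 2 * gfun e x := by
  obtain ⟨t, ht⟩ : ∃ t, 2 * e = n + 2 + t := ⟨2 * e - (n + 2), by omega⟩
  have h2 : (a ^ e) ^ 2 = a ^ (n + 2 + t) := by rw [← pow_mul, mul_comm, ht]
  have ht' : 2 * e - n - 2 = t := by omega
  simp only [gfun, ← Finset.mul_sum, Finset.prod_mul_distrib, h2, ht']
  rw [ht]
  simp only [Finset.prod_const, Finset.card_univ, Fintype.card_fin]
  ring

theorem RelG_unsmul [IsDomain R] {s e : ℕ} {Gs : Fin s → Fin n → ZMod 2} (he : n + 2 ≤ 2 * e) {a : R} (ha : a ≠ 0)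
    {x : Fin (n + 1) → R} (h : RelG e Gs fun i => a * x i) : RelG e Gs x := by
  obtain ⟨Z, Y, h0, h⟩ := h
  refine ⟨a ^ e * Z, fun j => a ^ hlf (Gs j) * Y j, ?_, ?_⟩
  · rcases h0 with h0 | h0
    · exact Or.inl (mul_ne_zero (pow_ne_zero _ ha) h0)
    · right
      obtain ⟨j, hj⟩ := Function.ne_iff.1 h0
      exact Function.ne_iff.2 ⟨j, mul_ne_zero (pow_ne_zero _ ha) hj⟩
  · rw [← h, gfun_smul he]
    simp only [xG_smul]
    congr 1
    · ring
    · exact Finset.sum_congr rfl fun j _ => by ring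

theorem RelG_map {s e : ℕ} {Gs : Fin s → Fin n → ZMod 2} (f : R →+* S)
    (hf : Function.Injective f) {x : Fin (n + 1) → R} (h : RelG e Gs x) :
    RelG e Gs fun i => f (x i) := by
  obtain ⟨Z, Y, h0, h⟩ := h
  refine ⟨f Z, fun j => f (Y j), ?_, ?_⟩
  · rcases h0 with h0 | h0
    · exact Or.inl ((map_ne_zero_iff f hf).2 h0)
    · right
      obtain ⟨j, hj⟩ := Function.ne_iff.1 h0
      exact Function.ne_iff.2 ⟨j, (map_ne_zero_iff f hf).2 hj⟩
  · have := congrArg f h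
    simpa [gfun_map, xG_map] using this

theorem Tiso_map (f : R →+* S)
    (hf : Function.Injective f) {x : Fin (n + 1) → R} (h : Tiso x) :
    Tiso fun i => f (x i) := by
  obtain ⟨z, h0, h⟩ := h
  obtain ⟨j, hj⟩ := Function.ne_iff.1 h0
  refine ⟨fun j => f (z j), Function.ne_iff.2 ⟨j, (map_ne_zero_iff f hf).2 hj⟩, ?_⟩
  have := congrArg f h
  simpa [xG_map] using this

theorem Tiso_unsmul [IsDomain R] {a : R} (ha : a ≠ 0) {x : Fin (n + 1) → R}
    (h : Tiso fun i => a * x i) : Tiso x := by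
  obtain ⟨z, h0, h⟩ := h
  obtain ⟨j, hj⟩ := Function.ne_iff.1 h0
  refine ⟨fun G => a ^ hlf G * z G,
    Function.ne_iff.2 ⟨j, mul_ne_zero (pow_ne_zero _ ha) hj⟩, ?_⟩
  rw [← h]
  simp only [xG_smul]
  exact Finset.sum_congr rfl fun j _ => by ring

/-- The two-element subset `{i, j}` as an even subset. -/
def pairG (i j : Fin (n + 1)) : Fin n → ZMod 2 :=
  Fin.tail (Pi.single i 1 + Pi.single j 1 : Fin (n + 1) → ZMod 2)

theorem evn_tail (A : Fin (n + 1) → ZMod 2) (hA : ∑ i, A i = 0) : evn n (Fin.tail A) = A := by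
  ext i; refine Fin.cases ?_ (fun i => ?_) i
  · rw [evn_zero']
    rw [Fin.sum_univ_succ] at hA
    rw [← sub_eq_zero, CharTwo.sub_eq_add, add_comm, ← hA]; rfl
  · rfl

theorem evn_pairG (i j : Fin (n + 1)) : evn n (pairG i j) = Pi.single i 1 + Pi.single j 1 := by
  refine evn_tail _ ?_
  simp [Finset.sum_add_distrib]
  decide

theorem mon_single (x : Fin (n + 1) → R) (i : Fin (n + 1)) : mon x (Pi.single i 1) = x i := by
  rw [mon, Finset.prod_eq_single i]
  · simp [ZMod.val_one]
  · intro j _ hj; simp [hj]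
  · simp

theorem xG_pairG (x : Fin (n + 1) → R) {i j : Fin (n + 1)} (hij : i ≠ j) :
    xG x (pairG i j) = x i * x j := by
  have h := mon_add x (Pi.single i 1) (Pi.single j 1)
  have : (Pi.single i 1 * Pi.single j 1 : Fin (n + 1) → ZMod 2) = 0 := by
    ext k
    by_cases hk : k = i
    · subst hk; simp [hij]
    · simp [hk]
  rw [this, mon_single, mon_single] at h
  rw [xG, evn_pairG, ← h]
  simp [mon]

/-- A vanishing coordinate kills the coefficient of any pair containing it. -/
theorem Tiso_of_zero [Nontrivial R] (hn : 0 < n) {x : Fin (n + 1) → R} {i : Fin (n + 1)} (hi : x i = 0) : Tiso x := by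
  have : Nontrivial (Fin (n + 1)) := Fin.nontrivial_iff_two_le.2 (by omega)
  obtain ⟨j, hj⟩ := exists_ne i
  refine ⟨Pi.single (pairG i j) 1, by simp, ?_⟩
  rw [Finset.sum_eq_single (pairG i j)]
  · rw [xG_pairG x hj.symm, hi]; simp
  · intro G _ hG; simp [hG]
  · simp

end basics

/-- A prime `ϖ` of the domain `P`, presented by its residue map `ρ` with finite multiplicities. -/
structure Loc {P k : Type*} [CommRing P] [CommRing k] (ϖ : P) (ρ : P →+* k) : Prop where
  ne : ϖ ≠ 0
  ker : ∀ a, ρ a = 0 ↔ ϖ ∣ a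
  fin : ∀ a, a ≠ 0 → ∃ (v : ℕ) (a' : P), a = ϖ ^ v * a' ∧ ρ a' ≠ 0

section loc
variable {P k : Type*} [CommRing P] [IsDomain P] [CommRing k] {ϖ : P} {ρ : P →+* k}

theorem Loc.primitive (h : Loc ϖ ρ) {ι : Type*} (W : ι → P) (hW : W ≠ 0) :
    ∃ (m : ℕ) (W' : ι → P), (∀ i, W i = ϖ ^ m * W' i) ∧ ∃ i, ρ (W' i) ≠ 0 := by
  obtain ⟨i, hi⟩ := Function.ne_iff.1 hW
  obtain ⟨v, a, hv, ha⟩ := h.fin (W i) hi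
  clear hi hW
  induction v generalizing W with
  | zero => exact ⟨0, W, by simp, i, by simpa [hv] using ha⟩
  | succ v ih =>
    by_cases hall : ∀ j, ρ (W j) = 0
    · choose U hU using fun j => (h.ker _).1 (hall j)
      obtain ⟨m, W', h1, h2⟩ := ih U (by
        apply mul_left_cancel₀ h.ne
        rw [← hU, hv]; ring)
      exact ⟨m + 1, W', fun j => by rw [hU, h1]; ring, h2⟩
    · push Not at hall
      exact ⟨0, W, by simp, hall⟩

/-- An isotropic diagonal form `⟨ϖ^{p_i} h_i⟩` with `p_i ∈ {0,1}` has an isotropic residue form. -/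
theorem Loc.residue (h : Loc ϖ ρ) {ι : Type*} [Fintype ι] (c : ι → P) (p : ι → ℕ)
    (hp : ∀ i, p i < 2) (W : ι → P) (hW : W ≠ 0) (h0 : ∑ i, ϖ ^ p i * c i * W i ^ 2 = 0) :
    ∃ q : ℕ, q < 2 ∧ ∃ z : ι → k, z ≠ 0 ∧ (∀ i, p i ≠ q → z i = 0) ∧ ∑ i, ρ (c i) * z i ^ 2 = 0 := by
  classical
  obtain ⟨m, W', hW', i0, hi0⟩ := h.primitive W hW
  have h1 : ∑ i, ϖ ^ p i * c i * W' i ^ 2 = 0 := by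
    apply mul_left_cancel₀ (pow_ne_zero (2 * m) h.ne)
    rw [mul_zero, ← h0, Finset.mul_sum]
    refine Finset.sum_congr rfl fun i _ => ?_
    rw [hW']; ring
  have hϖ : ρ ϖ = 0 := (h.ker _).2 dvd_rfl
  by_cases hev : ∃ i, p i = 0 ∧ ρ (W' i) ≠ 0
  · obtain ⟨i1, hi1, hi1'⟩ := hev
    refine ⟨0, by norm_num, fun i => if p i = 0 then ρ (W' i) else 0, ?_, ?_, ?_⟩
    · exact Function.ne_iff.2 ⟨i1, by simpa [hi1] using hi1'⟩
    · intro i hi; simp [hi]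
    · have := congrArg ρ h1
      rw [map_sum, map_zero] at this
      refine Eq.trans (Finset.sum_congr rfl fun i _ => ?_) this
      by_cases hi : p i = 0
      · simp [hi]
      · simp [hi, hϖ]
  · push Not at hev
    have hU : ∀ i, ∃ U, p i = 0 → W' i = ϖ * U := by
      intro i
      by_cases hi : p i = 0
      · obtain ⟨U, hU⟩ := (h.ker _).1 (hev i hi)
        exact ⟨U, fun _ => hU⟩
      · exact ⟨0, fun h => absurd h hi⟩
    choose U hU using hU
    have h2 : ∑ i, (if p i = 0 then ϖ * c i * U i ^ 2 else c i * W' i ^ 2) = 0 := by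
      apply mul_left_cancel₀ h.ne
      rw [mul_zero, ← h1, Finset.mul_sum]
      refine Finset.sum_congr rfl fun i _ => ?_
      by_cases hi : p i = 0
      · rw [if_pos hi, hU i hi, hi]; ring
      · rw [if_neg hi, show p i = 1 by have := hp i; omega]; ring
    refine ⟨1, by norm_num, fun i => if p i = 0 then 0 else ρ (W' i), ?_, ?_, ?_⟩
    · refine Function.ne_iff.2 ⟨i0, ?_⟩
      by_cases hi : p i0 = 0
      · exact absurd (hev i0 hi) hi0
      · simpa [hi] using hi0
    · intro i hi
      have := hp i
      exact if_pos (by omega)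
    · have := congrArg ρ h2
      rw [map_sum, map_zero] at this
      refine Eq.trans (Finset.sum_congr rfl fun i _ => ?_) this
      by_cases hi : p i = 0
      · simp [hi, hϖ]
      · simp [hi]

theorem sum_extend {I V M : Type*} [Fintype I] [Fintype V] [CommRing M] (h : I → V)
    (hh : Function.Injective h) (w : I → M) (c : V → M) :
    ∑ G, c G * (Function.extend h w 0 G) ^ 2 = ∑ i, c (h i) * w i ^ 2 := by
  classical
  rw [← Finset.sum_subset (Finset.subset_univ (Finset.univ.image h)),
    Finset.sum_image (fun i _ j _ hij => hh hij)]
  · exact Finset.sum_congr rfl fun i _ => by rw [hh.extend_apply]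
  · intro G _ hG
    rw [Function.extend_apply']
    · simp
    · rintro ⟨i, hi⟩; exact hG (by simp [← hi])

/-- The parity functional `G ↦ ∑_{i ∈ G} v_i`. -/
def par {n : ℕ} (v : Fin (n + 1) → ℕ) : (Fin n → ZMod 2) →ₗ[ZMod 2] ZMod 2 where
  toFun G := ∑ i, evn n G i * (v i : ZMod 2)
  map_add' G H := by simp [add_mul, Finset.sum_add_distrib]
  map_smul' a G := by simp [Finset.mul_sum, mul_assoc]

theorem par_add_const {n : ℕ} (v : Fin (n + 1) → ℕ) (m : ℕ) (G : Fin n → ZMod 2) :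
    par (fun i => v i + m) G = par v G := by
  show ∑ i, evn n G i * ((v i + m : ℕ) : ZMod 2) = ∑ i, evn n G i * (v i : ZMod 2)
  simp [mul_add, Finset.sum_add_distrib, ← Finset.sum_mul, evn_sum]

theorem mon_pow {n : ℕ} {R : Type*} [CommRing R] (a : R) (v : Fin (n + 1) → ℕ)
    (A : Fin (n + 1) → ZMod 2) :
    mon (fun i => a ^ v i) A = a ^ (∑ i, v i * (A i).val) := by
  simp [mon, ← pow_mul, Finset.prod_pow_eq_pow_sum]

theorem par_eq {n : ℕ} (v : Fin (n + 1) → ℕ) (G : Fin n → ZMod 2) :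
    par v G = ((∑ i, v i * (evn n G i).val : ℕ) : ZMod 2) := by
  show ∑ i, evn n G i * (v i : ZMod 2) = _
  simp [mul_comm]

/-- The local computation: at a place where the `x_i` do not all have the same order, a zero of the
special quadric makes one parity class of the residue Pfister form isotropic. -/
theorem local_lemma [IsDomain k] (h : Loc ϖ ρ) {n s e : ℕ} (he : n + 2 ≤ 2 * e)
    (Gs : Fin s → Fin n → ZMod 2) (hinj : Function.Injective Gs) (hG0 : ∀ j, Gs j ≠ 0)
    (x a : Fin (n + 1) → P) (v : Fin (n + 1) → ℕ) (hx : ∀ i, x i = ϖ ^ v i * a i)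
    (ha : ∀ i, ρ (a i) ≠ 0) (hv : ∃ i j, v i ≠ v j) (hrel : RelG e Gs x) :
    ∃ p : ZMod 2, ∃ z : (Fin n → ZMod 2) → k, z ≠ 0 ∧ (∀ G, par v G ≠ p → z G = 0) ∧
      ∑ G, xG (fun i => ρ (a i)) G * z G ^ 2 = 0 := by
  classical
  -- remove the common power of `ϖ`
  obtain ⟨i0, hi0⟩ := Finite.exists_min v
  obtain ⟨v', hv'⟩ : ∃ v' : Fin (n + 1) → ℕ, ∀ i, v i = v' i + v i0 :=
    ⟨fun i => v i - v i0, fun i => (Nat.sub_add_cancel (hi0 i)).symm⟩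
  have hpar : ∀ G, par v G = par v' G := fun G => by
    rw [show v = fun i => v' i + v i0 from funext hv', par_add_const]
  set x' : Fin (n + 1) → P := fun i => ϖ ^ v' i * a i with hx'
  have hxx : x = fun i => ϖ ^ v i0 * x' i := by
    ext i; rw [hx i, hx', hv' i, pow_add]; ring
  have hrel' : RelG e Gs x' := by
    rw [hxx] at hrel
    exact RelG_unsmul he (pow_ne_zero _ h.ne) hrel
  have hv0 : v' i0 = 0 := by have := hv' i0; omega
  obtain ⟨i1, hi1⟩ : ∃ i1, v' i1 ≠ 0 := by
    obtain ⟨i, j, hij⟩ := hv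
    by_contra hcon
    push Not at hcon
    exact hij (by rw [hv' i, hv' j, hcon i, hcon j])
  have hϖ : ρ ϖ = 0 := (h.ker _).2 dvd_rfl
  have ha0 : ∀ i, a i ≠ 0 := fun i h0 => ha i (by rw [h0, map_zero])
  set b : Fin (n + 1) → k := fun i => ρ (a i) with hb
  simp only [hpar]
  by_cases hs : ∑ i, ρ (x' i) = 0
  · refine ⟨0, Function.extend (pairG i0)
      (fun i => if v' i = 0 then (if i = i0 then b i0 else 1) else 0) 0, ?_, ?_, ?_⟩
    all_goals
      have hinj' : Function.Injective (pairG (n := n) i0) := by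
        intro i j hij
        have := congrArg (evn n) hij
        rw [evn_pairG, evn_pairG] at this
        have h2 := congrFun (add_left_cancel this) i
        by_contra hne
        simp [hne] at h2
    · refine Function.ne_iff.2 ⟨pairG i0 i0, ?_⟩
      rw [hinj'.extend_apply]
      simp [hv0, hb, ha]
    · intro G hG
      by_cases hex : ∃ i, pairG i0 i = G
      · obtain ⟨i, rfl⟩ := hex
        rw [hinj'.extend_apply]
        rw [if_neg]
        intro hvi
        apply hG
        rw [par_eq, evn_pairG]
        rw [Finset.sum_eq_zero]; · simp
        intro j _
        by_cases hj : v' j = 0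
        · simp [hj]
        · have h1 : j ≠ i0 := fun h => hj (h ▸ hv0)
          have h2 : j ≠ i := fun h => hj (h ▸ hvi)
          simp [h1, h2]
      · rw [Function.extend_apply' _ _ _ hex]; rfl
    · rw [sum_extend _ hinj']
      have : ∀ i, xG b (pairG i0 i) * (if v' i = 0 then (if i = i0 then b i0 else 1) else 0) ^ 2
          = b i0 * ρ (x' i) := by
        intro i
        by_cases hvi : v' i = 0
        · by_cases hii : i = i0
          · subst hii
            have : pairG i i = (0 : Fin n → ZMod 2) := by
              have h2 : evn n (pairG i i) = 0 := by
                rw [evn_pairG]; exact CharTwo.add_self_eq_zero _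
              ext j; exact (evn_succ (pairG i i) j).symm.trans (congrFun h2 _)
            rw [this, xG_zero]
            simp [hx', hvi, hb]; ring
          · rw [xG_pairG _ (Ne.symm hii)]
            simp [hx', hvi, hb, hii]
        · simp [hx', hvi, hϖ]
      rw [Finset.sum_congr rfl fun i _ => this i, ← Finset.mul_sum, hs, mul_zero]
  · have hg : ρ (gfun e x') = ((∑ i, ρ (x' i)) ^ e) ^ 2 := by
      rw [gfun_map, gfun]
      rw [Finset.prod_eq_zero (Finset.mem_univ i1) (by simp [hx', hϖ, hi1])]
      rw [mul_zero, add_zero, ← pow_mul, mul_comm e]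
    obtain ⟨Z, Y, hne, hZY⟩ := hrel'
    set N : (Fin n → ZMod 2) → ℕ := fun G => ∑ i, v' i * (evn n G i).val with hN
    have hxG : ∀ G, xG x' G = ϖ ^ N G * xG a G := fun G => by
      rw [xG, hx', mon_mul, mon_pow]; rfl
    have hN0 : N 0 = 0 := by simp [hN]
    let idx : Option (Fin s) → Fin n → ZMod 2 := fun o => o.elim 0 Gs
    have hidx : Function.Injective idx := by
      rintro (_ | j) (_ | j') hjj
      · rfl
      · exact absurd hjj.symm (hG0 j')
      · exact absurd hjj (hG0 j)
      · exact congrArg some (hinj hjj)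
    let W : Option (Fin s) → P := fun o => o.elim Z Y
    let c : Option (Fin s) → P := fun o => o.elim (gfun e x') fun j => xG a (Gs j)
    obtain ⟨q, hq, z, hz0, hzs, hz⟩ := h.residue c (fun o => N (idx o) % 2)
      (fun o => Nat.mod_lt _ (by norm_num)) (fun o => ϖ ^ (N (idx o) / 2) * W o) (by
        rcases hne with h1 | h1
        · exact Function.ne_iff.2 ⟨none, mul_ne_zero (pow_ne_zero _ h.ne) h1⟩
        · obtain ⟨j, hj⟩ := Function.ne_iff.1 h1
          exact Function.ne_iff.2 ⟨some j, mul_ne_zero (pow_ne_zero _ h.ne) hj⟩) (by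
        rw [← hZY, Fintype.sum_option]
        have hpow : ∀ m : ℕ, ϖ ^ m = ϖ ^ (m % 2) * (ϖ ^ (m / 2)) ^ 2 := fun m => by
          rw [← pow_mul, ← pow_add]; congr 1; omega
        congr 1
        · simp [idx, W, c, hN0]
        · refine Finset.sum_congr rfl fun j _ => ?_
          rw [hxG, hpow (N (Gs j))]
          simp only [idx, W, c, Option.elim]
          ring)
    refine ⟨(q : ZMod 2), Function.extend idx
      (fun o => o.elim ((∑ i, ρ (x' i)) ^ e * z none) fun j => z (some j)) 0, ?_, ?_, ?_⟩
    · obtain ⟨o, ho⟩ := Function.ne_iff.1 hz0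
      refine Function.ne_iff.2 ⟨idx o, ?_⟩
      rw [hidx.extend_apply]
      cases o with
      | none => exact mul_ne_zero (pow_ne_zero _ hs) ho
      | some j => exact ho
    · intro G hG
      by_cases hex : ∃ o, idx o = G
      · obtain ⟨o, rfl⟩ := hex
        rw [hidx.extend_apply]
        have : z o = 0 := by
          apply hzs
          intro hq'
          apply hG
          rw [par_eq, ← hq']
          exact (ZMod.natCast_mod _ _).symm
        cases o with
        | none => simp [this]
        | some j => simp [this]
      · rw [Function.extend_apply' _ _ _ hex]; rfl
    · rw [sum_extend _ hidx, ← hz]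
      refine Finset.sum_congr rfl fun o _ => ?_
      cases o with
      | none =>
        simp only [idx, Option.elim, c, hg, xG_zero]; ring
      | some j => simp only [idx, Option.elim, c, xG_map]; rfl
end loc

/-! ### Local analysis at an irreducible polynomial -/

section pi
variable {κ : Type*} [Field κ]

theorem loc_irred {π : Polynomial κ} (hπ : Irreducible π) : Loc π (AdjoinRoot.mk π) where
  ne := hπ.ne_zero
  ker a := AdjoinRoot.mk_eq_zero
  fin a ha := by
    obtain ⟨m, c, hc, h⟩ := WfDvdMonoid.max_power_factor ha hπ
    exact ⟨m, c, h, by rwa [Ne, AdjoinRoot.mk_eq_zero]⟩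

theorem loc_X {R : Type*} [CommRing R] [IsDomain R] :
    Loc (Polynomial.X : Polynomial R) (Polynomial.evalRingHom 0) where
  ne := Polynomial.X_ne_zero
  ker a := by
    rw [Polynomial.X_dvd_iff, Polynomial.coeff_zero_eq_eval_zero]; rfl
  fin a ha := by
    obtain ⟨q, hq, h⟩ := Polynomial.exists_eq_pow_rootMultiplicity_mul_and_not_dvd a ha 0
    rw [map_zero, sub_zero] at hq h
    refine ⟨_, q, hq, ?_⟩
    rw [Polynomial.X_dvd_iff, Polynomial.coeff_zero_eq_eval_zero] at h
    exact h

/-- Order of `x^G` at a place where the `x_i` have orders `v_i`. -/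
def ordG {n : ℕ} (v : Fin (n + 1) → ℕ) (G : Fin n → ZMod 2) : ℕ := ∑ i, v i * (evn n G i).val

theorem par_ordG {n : ℕ} (v : Fin (n + 1) → ℕ) (G : Fin n → ZMod 2) :
    par v G = (ordG v G : ZMod 2) := par_eq v G

theorem par_eq_one {n : ℕ} (v : Fin (n + 1) → ℕ) (G : Fin n → ZMod 2) :
    par v G = 1 ↔ ordG v G % 2 = 1 := by
  rw [par_ordG, ← Nat.cast_one, ZMod.natCast_eq_natCast_iff]; rfl

theorem par_eq_zero {n : ℕ} (v : Fin (n + 1) → ℕ) (G : Fin n → ZMod 2) :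
    par v G = 0 ↔ ordG v G % 2 = 0 := by
  rw [par_ordG, ← Nat.cast_zero, ZMod.natCast_eq_natCast_iff]; rfl

theorem xG_prod {n : ℕ} (Pi : Finset (Polynomial κ)) (l : Fin (n + 1) → κ)
    (v : Polynomial κ → Fin (n + 1) → ℕ) (G : Fin n → ZMod 2) :
    xG (fun i => Polynomial.C (l i) * ∏ π ∈ Pi, π ^ v π i) G
      = Polynomial.C (xG l G) * ∏ π ∈ Pi, π ^ ordG (v π) G := by
  rw [xG, mon_mul, ← mon_map]
  congr 1
  simp only [mon, ← Finset.prod_pow]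
  rw [Finset.prod_comm]
  refine Finset.prod_congr rfl fun π _ => ?_
  simp only [← pow_mul, ordG, Finset.prod_pow_eq_pow_sum]

/-- The cofactor `C / c_G`, where `c_G` is the squarefree part of `x^G` and `C = ∏ π`. -/
def qG {n : ℕ} (Pi : Finset (Polynomial κ)) (l : Fin (n + 1) → κ)
    (v : Polynomial κ → Fin (n + 1) → ℕ) (G : Fin n → ZMod 2) : Polynomial κ :=
  Polynomial.C (xG l G)⁻¹ * ∏ π ∈ Pi, π ^ (1 - ordG (v π) G % 2)

/-- The linear conditions at a finite place `π`. -/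
theorem pi_cond {n s e : ℕ} (he : n + 2 ≤ 2 * e)
    (Gs : Fin s → Fin n → ZMod 2) (hinj : Function.Injective Gs) (hG0 : ∀ j, Gs j ≠ 0)
    (Pi : Finset (Polynomial κ)) (hirr : ∀ π ∈ Pi, Irreducible π) (hmon : ∀ π ∈ Pi, π.Monic)
    (l : Fin (n + 1) → κ) (hl : ∀ i, l i ≠ 0)
    (v : Polynomial κ → Fin (n + 1) → ℕ)
    (hrel : RelG e Gs fun i => Polynomial.C (l i) * ∏ π ∈ Pi, π ^ v π i)
    (π : Polynomial κ) (hπ : π ∈ Pi) :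
    ∃ (K : ℕ) (f : ((Fin n → ZMod 2) → Polynomial κ) →ₗ[κ] (Fin K → κ)),
      2 * K ≤ (∑ G : Fin n → ZMod 2, ordG (v π) G % 2) * π.natDegree ∧
      ∀ u, f u = 0 → π ∣ ∑ G, u G ^ 2 * qG Pi l v G := by
  classical
  have : Fact (Irreducible π) := ⟨hirr π hπ⟩
  let ρ := AdjoinRoot.mk π
  have hloc := loc_irred (hirr π hπ)
  set a : Fin (n + 1) → Polynomial κ :=
    fun i => Polynomial.C (l i) * ∏ π' ∈ Pi.erase π, π' ^ v π' i with ha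
  have hx : ∀ i, Polynomial.C (l i) * ∏ π ∈ Pi, π ^ v π i = π ^ v π i * a i := by
    intro i; rw [ha, ← Finset.mul_prod_erase _ _ hπ]; ring
  have hρ : ∀ π' ∈ Pi.erase π, ρ π' ≠ 0 := by
    intro π' hπ' h
    rw [AdjoinRoot.mk_eq_zero] at h
    have h1 := Finset.mem_of_mem_erase hπ'
    have h2 := (hirr π hπ).associated_of_dvd (hirr π' h1) h
    exact Finset.ne_of_mem_erase hπ' (Polynomial.eq_of_monic_of_associated (hmon _ h1) (hmon _ hπ) h2.symm)
  have hρC : ∀ b : κ, b ≠ 0 → ρ (Polynomial.C b) ≠ 0 := by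
    intro b hb h
    have := AdjoinRoot.mk_eq_zero.1 h
    exact (hirr π hπ).not_isUnit (isUnit_of_dvd_unit this (by simpa using hb))
  have hρa : ∀ i, ρ (a i) ≠ 0 := by
    intro i
    rw [ha]
    simp only [map_mul, map_prod, map_pow]
    exact mul_ne_zero (hρC _ (hl i)) (Finset.prod_ne_zero_iff.2 fun π' h => pow_ne_zero _ (hρ π' h))
  have hsq : SqMult (xG fun i => ρ (a i)) := xG_sqMult hρa
  -- the odd class at `π` becomes isotropic under half as many conditions
  have hcut : ∃ (k : ℕ) (f : ((Fin n → ZMod 2) → AdjoinRoot π) →ₗ[AdjoinRoot π] (Fin k → AdjoinRoot π)),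
      2 * k ≤ (Finset.univ.filter fun G => par (v π) G = 1).card ∧
      ∀ w, f w = 0 → ∑ G with par (v π) G = 1, xG (fun i => ρ (a i)) G * w G ^ 2 = 0 := by
    by_cases hv : ∃ i j, v π i ≠ v π j
    · obtain ⟨p, z, hz, hsupp, h0⟩ := local_lemma hloc he Gs hinj hG0 _ a (v π) hx hρa hv hrel
      exact class_cut _ hsq (par (v π)) p 1 z hz hsupp h0
    · push Not at hv
      have : ∀ G, par (v π) G ≠ 1 := by
        intro G
        have : par (v π) G = par (fun _ => 0) G := by
          rw [show v π = fun i => (fun _ => 0) i + v π 0 from funext fun i => by simp [hv i 0]]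
          exact par_add_const _ _ _
        rw [this, par_eq]; simp
      refine ⟨0, 0, by simp, fun w _ => ?_⟩
      rw [Finset.filter_false_of_mem (fun G _ => this G)]; simp
  obtain ⟨k, f, hk, hf⟩ := hcut
  let sπ : (Fin n → ZMod 2) → Polynomial κ := fun G => ∏ π' ∈ Pi.erase π, π' ^ (ordG (v π') G / 2)
  let m : (Fin n → ZMod 2) → AdjoinRoot π := fun G => ρ (sπ G) / xG (fun i => ρ (a i)) G
  let mk' : Polynomial κ →ₗ[κ] AdjoinRoot π := (AdjoinRoot.mkₐ π : Polynomial κ →ₐ[κ] AdjoinRoot π).toLinearMap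
  let g : ((Fin n → ZMod 2) → Polynomial κ) →ₗ[κ] ((Fin n → ZMod 2) → AdjoinRoot π) :=
    LinearMap.pi fun G => (LinearMap.mulLeft κ (m G)) ∘ₗ mk' ∘ₗ LinearMap.proj G
  have hg : ∀ u G, g u G = m G * ρ (u G) := fun u G => rfl
  have hpb := AdjoinRoot.powerBasis' (hmon π hπ)
  have hfin : Module.Finite κ (AdjoinRoot π) := (AdjoinRoot.powerBasis' (hmon π hπ)).finite
  have hrank : Module.finrank κ (AdjoinRoot π) = π.natDegree := by
    rw [(AdjoinRoot.powerBasis' (hmon π hπ)).finrank, AdjoinRoot.powerBasis'_dim]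
  refine ⟨Module.finrank κ (Fin k → AdjoinRoot π),
    (Module.finBasis κ (Fin k → AdjoinRoot π)).equivFun.toLinearMap ∘ₗ (f.restrictScalars κ) ∘ₗ g, ?_, ?_⟩
  · rw [Module.finrank_pi_fintype]
    simp only [hrank, Finset.sum_const, Finset.card_univ, Fintype.card_fin, smul_eq_mul]
    rw [← mul_assoc]
    refine Nat.mul_le_mul_right _ (hk.trans (le_of_eq ?_))
    rw [Finset.card_filter]
    refine Finset.sum_congr rfl fun G _ => ?_
    by_cases h : par (v π) G = 1
    · rw [if_pos h, (par_eq_one _ _).1 h]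
    · rw [if_neg h]
      rw [par_eq_one] at h; omega
  · intro u hu
    rw [LinearMap.comp_apply, LinearEquiv.coe_coe, LinearEquiv.map_eq_zero_iff] at hu
    have h1 := hf (g u) hu
    rw [← AdjoinRoot.mk_eq_zero]
    show ρ _ = 0
    rw [map_sum]
    have h2 : ∀ G, ρ (u G ^ 2 * qG Pi l v G) = if par (v π) G = 1 then
        ρ (∏ π' ∈ Pi.erase π, π') * (xG (fun i => ρ (a i)) G * g u G ^ 2) else 0 := by
      intro G
      have hxa0 := hsq.1 G
      have hqe : qG Pi l v G = π ^ (1 - ordG (v π) G % 2) *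
          (Polynomial.C (xG l G)⁻¹ * ∏ π' ∈ Pi.erase π, π' ^ (1 - ordG (v π') G % 2)) := by
        rw [qG, ← Finset.mul_prod_erase _ _ hπ]; ring
      by_cases hG : par (v π) G = 1
      · rw [if_pos hG]
        have hN := (par_eq_one _ _).1 hG
        have hmul : xG a G * qG Pi l v G = (∏ π' ∈ Pi.erase π, π') * sπ G ^ 2 := by
          rw [hqe, hN, ha, xG_prod]
          simp only [sπ, ← Finset.prod_pow, ← Finset.prod_mul_distrib]
          have hl0 : xG l G ≠ 0 := mon_ne_zero hl _
          have hCC : Polynomial.C (xG l G) * Polynomial.C (xG l G)⁻¹ = 1 := by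
            rw [← Polynomial.C_mul, mul_inv_cancel₀ hl0, Polynomial.C_1]
          have : ∏ π' ∈ Pi.erase π, π' * (π' ^ (ordG (v π') G / 2)) ^ 2
              = (∏ π' ∈ Pi.erase π, π' ^ ordG (v π') G) * ∏ π' ∈ Pi.erase π, π' ^ (1 - ordG (v π') G % 2) := by
            rw [← Finset.prod_mul_distrib]
            refine Finset.prod_congr rfl fun π' _ => ?_
            rw [← pow_mul, ← pow_succ', ← pow_add]
            congr 1; omega
          rw [this]
          linear_combination ((∏ π' ∈ Pi.erase π, π' ^ ordG (v π') G) * ∏ π' ∈ Pi.erase π, π' ^ (1 - ordG (v π') G % 2)) * hCC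
        have hmul' := congrArg ρ hmul
        rw [map_mul, map_mul, map_pow, xG_map] at hmul'
        rw [hg, map_mul, map_pow]
        apply mul_left_cancel₀ hxa0
        simp only [m]
        field_simp
        linear_combination ρ (u G) ^ 2 * hmul'
      · rw [if_neg hG]
        have hN : ordG (v π) G % 2 = 0 := by
          rw [par_eq_one] at hG; omega
        have : ρ π = 0 := AdjoinRoot.mk_self
        rw [hqe, hN]; simp [this]
    rw [Finset.sum_congr rfl fun G _ => h2 G, ← Finset.sum_filter, ← Finset.mul_sum, h1, mul_zero]
end pi

/-! ### Local analysis at infinity -/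

theorem RelG_of_frac {n s e : ℕ} {Gs : Fin s → Fin n → ZMod 2} {R K : Type*} [CommRing R]
    [IsDomain R] [Field K] [Algebra R K] [IsFractionRing R K] {x : Fin (n + 1) → R}
    (h : RelG e Gs fun i => algebraMap R K (x i)) : RelG e Gs x := by
  obtain ⟨Z, Y, h0, h⟩ := h
  obtain ⟨b, hb⟩ := IsLocalization.exist_integer_multiples_of_finite (nonZeroDivisors R)
    (fun o : Option (Fin s) => o.elim Z Y)
  choose w hw using hb
  simp only [Algebra.smul_def] at hw
  have hinj := IsFractionRing.injective R K
  have hb0 : algebraMap R K b ≠ 0 := by simp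
  have hwZ : algebraMap R K (w none) = algebraMap R K b * Z := hw none
  have hwY : ∀ j, algebraMap R K (w (some j)) = algebraMap R K b * Y j := fun j => hw (some j)
  refine ⟨w none, fun j => w (some j), ?_, ?_⟩
  · rcases h0 with h0 | h0
    · left; intro h1
      rw [h1, map_zero] at hwZ
      exact mul_ne_zero hb0 h0 hwZ.symm
    · right
      obtain ⟨j, hj⟩ := Function.ne_iff.1 h0
      refine Function.ne_iff.2 ⟨j, fun h1 => mul_ne_zero hb0 hj ?_⟩
      rw [← hwY, h1]; simp
  · apply hinj
    rw [map_zero, ← mul_zero (algebraMap R K b ^ 2), ← h]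
    simp only [map_add, map_mul, map_sum, map_pow, hwZ, hwY, gfun_map, xG_map, mul_add,
      Finset.mul_sum]
    congr 1
    · ring
    · exact Finset.sum_congr rfl fun j _ => by ring

section infty
variable {κ : Type*} [Field κ]

theorem RelG_reflect {n s e : ℕ} (he : n + 2 ≤ 2 * e) {Gs : Fin s → Fin n → ZMod 2}
    {x : Fin (n + 1) → Polynomial κ} (D : ℕ) (hD : ∀ i, (x i).natDegree ≤ D)
    (h : RelG e Gs x) : RelG e Gs fun i => Polynomial.reflect D (x i) := by
  let K := FractionRing (Polynomial κ)
  let i : κ →+* K := (algebraMap (Polynomial κ) K).comp Polynomial.C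
  let t : K := algebraMap (Polynomial κ) K Polynomial.X
  have ht : t ≠ 0 := by
    simp [t]
  have hev : ∀ f : Polynomial κ, Polynomial.eval₂ i t f = algebraMap (Polynomial κ) K f := by
    intro f
    rw [← Polynomial.hom_eval₂, Polynomial.eval₂_C_X]
  have hinj := IsFractionRing.injective (Polynomial κ) K
  letI : Invertible t⁻¹ := ⟨t, mul_inv_cancel₀ ht, inv_mul_cancel₀ ht⟩
  have hrefl : ∀ (N : ℕ) (f : Polynomial κ), f.natDegree ≤ N →
      Polynomial.eval₂ i t⁻¹ f = t⁻¹ ^ N * algebraMap (Polynomial κ) K (Polynomial.reflect N f) := by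
    intro N f hf
    have := Polynomial.eval₂_reflect_mul_pow i t⁻¹ N f hf
    rw [← this, mul_comm, ← hev]
    rfl
  let φ : Polynomial κ →+* K := Polynomial.eval₂RingHom i t⁻¹
  have hφ : Function.Injective φ := by
    rw [injective_iff_map_eq_zero]
    intro f hf
    have h1 := hrefl f.natDegree f le_rfl
    have h2 : Polynomial.eval₂ i t⁻¹ f = 0 := hf
    rw [h2] at h1
    have h3 := (mul_eq_zero.1 h1.symm).resolve_left (pow_ne_zero _ (inv_ne_zero ht))
    rw [map_eq_zero_iff _ hinj, Polynomial.reflect_eq_zero_iff] at h3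
    exact h3
  have h1 := RelG_map φ hφ h
  have h2 : (fun j => φ (x j)) = fun j => t⁻¹ ^ D * algebraMap (Polynomial κ) K (Polynomial.reflect D (x j)) :=
    funext fun j => hrefl D (x j) (hD j)
  rw [h2] at h1
  exact RelG_of_frac (RelG_unsmul he (pow_ne_zero _ (inv_ne_zero ht)) h1)

theorem reflect_eq (D : ℕ) (f : Polynomial κ) (hf : f.natDegree ≤ D) :
    Polynomial.reflect D f = Polynomial.X ^ (D - f.natDegree) * f.reverse := by
  have := Polynomial.reflect_mul f 1 (F := f.natDegree) (G := D - f.natDegree) le_rfl (by simp)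
  rw [mul_one, Nat.add_sub_cancel' hf] at this
  rw [this, mul_comm, Polynomial.reflect_one]
  rfl

/-- The linear conditions at infinity. -/
theorem inf_cond {n s e : ℕ} (he : n + 2 ≤ 2 * e)
    (Gs : Fin s → Fin n → ZMod 2) (hinj : Function.Injective Gs) (hG0 : ∀ j, Gs j ≠ 0)
    (x : Fin (n + 1) → Polynomial κ) (hx : ∀ i, x i ≠ 0) (hrel : RelG e Gs x) (D : ℕ)
    (hD : ∀ i, (x i).natDegree ≤ D) (hD' : ∃ i, (x i).natDegree = D)
    (hT : Tiso fun i => (x i).coeff D) :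
    ∃ (k : ℕ) (f : ((Fin n → ZMod 2) → κ) →ₗ[κ] (Fin k → κ)),
      2 * k ≤ (Finset.univ.filter fun G => par (fun i => D - (x i).natDegree) G = 0).card ∧
      ∀ w, f w = 0 → ∑ G with par (fun i => D - (x i).natDegree) G = 0,
        xG (fun i => (x i).leadingCoeff) G * w G ^ 2 = 0 := by
  have hl : ∀ i, (x i).leadingCoeff ≠ 0 := fun i => by simpa using hx i
  have hsq : SqMult (xG fun i => (x i).leadingCoeff) := xG_sqMult hl
  by_cases hv : ∃ i j, D - (x i).natDegree ≠ D - (x j).natDegree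
  · have hρ : ∀ i, Polynomial.evalRingHom 0 (x i).reverse = (x i).leadingCoeff := fun i => by
      rw [Polynomial.coe_evalRingHom, ← Polynomial.coeff_zero_eq_eval_zero, Polynomial.coeff_zero_reverse]
    obtain ⟨p, z, hz, hsupp, h0⟩ := local_lemma loc_X he Gs hinj hG0
      (fun i => Polynomial.reflect D (x i)) (fun i => (x i).reverse) (fun i => D - (x i).natDegree)
      (fun i => reflect_eq D _ (hD i)) (fun i => by rw [hρ]; exact hl i) hv (RelG_reflect he D hD hrel)
    simp only [hρ] at h0
    exact class_cut _ hsq _ p 0 z hz hsupp h0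
  · push Not at hv
    obtain ⟨i0, hi0⟩ := hD'
    have hall : ∀ i, (x i).natDegree = D := fun i => by
      have := hv i i0
      have := hD i
      omega
    obtain ⟨z, hz, h0⟩ := hT
    refine class_cut _ hsq _ 0 0 z hz ?_ ?_
    · intro G hG
      exfalso; apply hG
      rw [par_eq]; simp [hall]
    · rw [← h0]
      refine Finset.sum_congr rfl fun G _ => ?_
      congr 2
      ext i; rw [Polynomial.leadingCoeff, hall]
end infty

/-! ### From the line to its points: specialization of isotropy relations -/

section glob
variable {κ : Type*} [Field κ]

/-- The degree of the squarefree part of `x^G`. -/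
def delG {n : ℕ} (Pi : Finset (Polynomial κ)) (v : Polynomial κ → Fin (n + 1) → ℕ)
    (G : Fin n → ZMod 2) : ℕ := ∑ π ∈ Pi, (ordG (v π) G % 2) * π.natDegree

theorem top_coeff {n : ℕ} (Pi : Finset (Polynomial κ)) (hmon : ∀ π ∈ Pi, π.Monic)
    (l : Fin (n + 1) → κ) (v : Polynomial κ → Fin (n + 1) → ℕ) (G : Fin n → ZMod 2)
    (u : Polynomial κ) (hu : u.natDegree ≤ delG Pi v G / 2) :
    (u ^ 2 * qG Pi l v G).natDegree ≤ (∏ π ∈ Pi, π).natDegree ∧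
    (u ^ 2 * qG Pi l v G).coeff (∏ π ∈ Pi, π).natDegree =
      if delG Pi v G % 2 = 0 then (xG l G)⁻¹ * u.coeff (delG Pi v G / 2) ^ 2 else 0 := by
  set δ := delG Pi v G with hδ
  set M := ∏ π ∈ Pi, π ^ (1 - ordG (v π) G % 2) with hM
  have hMm : M.Monic := Polynomial.monic_prod_of_monic _ _ fun π h => (hmon π h).pow _
  have hE : (∏ π ∈ Pi, π).natDegree = M.natDegree + δ := by
    rw [Polynomial.natDegree_prod_of_monic _ _ hmon, hM,
      Polynomial.natDegree_prod_of_monic _ _ (fun π h => (hmon π h).pow _), hδ, delG,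
      ← Finset.sum_add_distrib]
    refine Finset.sum_congr rfl fun π h => ?_
    rw [(hmon π h).natDegree_pow, ← add_mul]
    have : 1 - ordG (v π) G % 2 + ordG (v π) G % 2 = 1 := by omega
    rw [this, one_mul]
  have hu2 : (u ^ 2).natDegree ≤ 2 * (δ / 2) :=
    (Polynomial.natDegree_pow_le).trans (Nat.mul_le_mul_left _ hu)
  have hq : qG Pi l v G = Polynomial.C (xG l G)⁻¹ * M := rfl
  have hdeg : (u ^ 2 * qG Pi l v G).natDegree ≤ 2 * (δ / 2) + M.natDegree := by
    refine Polynomial.natDegree_mul_le.trans (add_le_add hu2 ?_)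
    rw [hq]; exact Polynomial.natDegree_C_mul_le _ _
  refine ⟨by rw [hE]; omega, ?_⟩
  split_ifs with hp
  · have h2 : (∏ π ∈ Pi, π).natDegree = 2 * (δ / 2) + M.natDegree := by rw [hE]; omega
    rw [h2, hq, mul_left_comm, Polynomial.coeff_C_mul,
      Polynomial.coeff_mul_add_eq_of_natDegree_le hu2 le_rfl, hMm.coeff_natDegree, mul_one,
      Polynomial.coeff_pow_of_natDegree_le hu]
  · exact Polynomial.coeff_eq_zero_of_natDegree_lt (by rw [hE]; omega)

theorem sq_part {n : ℕ} (Pi : Finset (Polynomial κ)) (l : Fin (n + 1) → κ) (hl : ∀ i, l i ≠ 0)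
    (v : Polynomial κ → Fin (n + 1) → ℕ) (G : Fin n → ZMod 2) :
    xG (fun i => Polynomial.C (l i) * ∏ π ∈ Pi, π ^ v π i) G * qG Pi l v G
      = (∏ π ∈ Pi, π) * (∏ π ∈ Pi, π ^ (ordG (v π) G / 2)) ^ 2 := by
  have h1 : Polynomial.C (xG l G) * Polynomial.C (xG l G)⁻¹ = 1 := by
    rw [← Polynomial.C_mul, mul_inv_cancel₀ (show xG l G ≠ 0 from mon_ne_zero hl _), Polynomial.C_1]
  rw [xG_prod, qG, mul_mul_mul_comm, h1, one_mul, ← Finset.prod_pow, ← Finset.prod_mul_distrib,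
    ← Finset.prod_mul_distrib]
  refine Finset.prod_congr rfl fun π _ => ?_
  rw [← pow_mul, ← pow_add, ← pow_succ']
  congr 1; omega

/-- Isotropy at `t = ∞` gives isotropy over `κ[t]`, for coordinates presented by their factorizations.
The unknowns are polynomials `u_G` of degree at most half that of the squarefree part of `x^G`; the
linear conditions at the finite places and at infinity are fewer than their coefficients, and
together force `∑ u_G² q_G`, which is divisible by `∏ π` and of smaller degree, to vanish. -/
theorem glob_T {n s e : ℕ} (he : n + 2 ≤ 2 * e)
    (Gs : Fin s → Fin n → ZMod 2) (hinj : Function.Injective Gs) (hG0 : ∀ j, Gs j ≠ 0)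
    (Pi : Finset (Polynomial κ)) (hirr : ∀ π ∈ Pi, Irreducible π) (hmon : ∀ π ∈ Pi, π.Monic)
    (l : Fin (n + 1) → κ) (hl : ∀ i, l i ≠ 0)
    (v : Polynomial κ → Fin (n + 1) → ℕ)
    (x : Fin (n + 1) → Polynomial κ)
    (hxdef : x = fun i => Polynomial.C (l i) * ∏ π ∈ Pi, π ^ v π i)
    (hrel : RelG e Gs x) (D : ℕ)
    (hD : ∀ i, (x i).natDegree ≤ D) (hD' : ∃ i, (x i).natDegree = D)
    (hT : Tiso fun i => (x i).coeff D) : Tiso x := by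
  classical
  have hPm : ∀ i, (∏ π ∈ Pi, π ^ v π i).Monic := fun i =>
    Polynomial.monic_prod_of_monic _ _ fun π h => (hmon π h).pow _
  have hlc : ∀ i, (x i).leadingCoeff = l i := by
    intro i; rw [hxdef]
    simp only [Polynomial.leadingCoeff_mul, Polynomial.leadingCoeff_C, (hPm i).leadingCoeff, mul_one]
  have hx : ∀ i, x i ≠ 0 := fun i h => hl i (by rw [← hlc, h, Polynomial.leadingCoeff_zero])
  have hnd : ∀ i, (x i).natDegree = ∑ π ∈ Pi, v π i * π.natDegree := by
    intro i; rw [hxdef]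
    simp only
    rw [Polynomial.natDegree_C_mul (hl i),
      Polynomial.natDegree_prod_of_monic _ _ (fun π h => (hmon π h).pow _)]
    exact Finset.sum_congr rfl fun π h => (hmon π h).natDegree_pow _
  have hpar : ∀ G, par (fun i => D - (x i).natDegree) G = 0 ↔ delG Pi v G % 2 = 0 := by
    intro G
    rw [par_eq_zero]
    have h1 : ordG (fun i => D - (x i).natDegree) G + ∑ π ∈ Pi, ordG (v π) G * π.natDegree
        = 2 * (D * hlf G) := by
      rw [mul_left_comm, ← two_hlf, ordG, Finset.mul_sum]
      simp only [ordG, Finset.sum_mul]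
      rw [Finset.sum_comm, ← Finset.sum_add_distrib]
      refine Finset.sum_congr rfl fun i _ => ?_
      have : ∑ π ∈ Pi, v π i * (evn n G i).val * π.natDegree = (x i).natDegree * (evn n G i).val := by
        rw [hnd, Finset.sum_mul]; exact Finset.sum_congr rfl fun π _ => by ring
      rw [this, ← add_mul, Nat.sub_add_cancel (hD i)]
    have h2 : (∑ π ∈ Pi, ordG (v π) G * π.natDegree) % 2 = delG Pi v G % 2 := by
      rw [delG, Finset.sum_nat_mod, Finset.sum_nat_mod Pi 2 (fun π => ordG (v π) G % 2 * π.natDegree)]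
      congr 1
      refine Finset.sum_congr rfl fun π _ => ?_
      rw [Nat.mod_mul_mod]
    omega
  have hrel' : RelG e Gs fun i => Polynomial.C (l i) * ∏ π ∈ Pi, π ^ v π i := hxdef ▸ hrel
  have hpi := fun π : Pi => pi_cond he Gs hinj hG0 Pi hirr hmon l hl v hrel' π.1 π.2
  choose K f hK hf using hpi
  obtain ⟨k, g, hk, hg⟩ := inf_cond he Gs hinj hG0 x hx hrel D hD hD' hT
  simp only [hpar, hlc] at hk hg
  let U := (G : Fin n → ZMod 2) → Polynomial.degreeLT κ (delG Pi v G / 2 + 1)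
  let ι : U →ₗ[κ] ((Fin n → ZMod 2) → Polynomial κ) :=
    LinearMap.pi fun G => (Submodule.subtype _) ∘ₗ LinearMap.proj G
  let co : ((Fin n → ZMod 2) → Polynomial κ) →ₗ[κ] ((Fin n → ZMod 2) → κ) :=
    LinearMap.pi fun G => (xG l G)⁻¹ • (Polynomial.lcoeff κ (delG Pi v G / 2)) ∘ₗ LinearMap.proj G
  let Φ : U →ₗ[κ] ((π : Pi) → (Fin (K π) → κ)) × (Fin k → κ) :=
    LinearMap.prod (LinearMap.pi fun π => f π ∘ₗ ι) (g ∘ₗ co ∘ₗ ι)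
  have hrk : Module.finrank κ (((π : Pi) → (Fin (K π) → κ)) × (Fin k → κ)) < Module.finrank κ U := by
    have h1 : Module.finrank κ U = ∑ G : Fin n → ZMod 2, (delG Pi v G / 2 + 1) := by
      rw [Module.finrank_pi_fintype]
      refine Finset.sum_congr rfl fun G _ => ?_
      rw [LinearEquiv.finrank_eq (Polynomial.degreeLTEquiv κ _), Module.finrank_fin_fun]
    have h2 : Module.finrank κ (((π : Pi) → (Fin (K π) → κ)) × (Fin k → κ)) = ∑ π, K π + k := by
      rw [Module.finrank_prod, Module.finrank_pi_fintype, Module.finrank_fin_fun]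
      simp only [Module.finrank_fin_fun]
    rw [h1, h2]
    have h3 : 2 * ∑ π, K π ≤ ∑ G, delG Pi v G := by
      rw [Finset.mul_sum]
      refine (Finset.sum_le_sum fun π _ => hK π).trans (le_of_eq ?_)
      simp only [delG]
      rw [Finset.sum_comm, ← Finset.sum_coe_sort Pi]
      exact Finset.sum_congr rfl fun π _ => by rw [Finset.sum_mul]
    have h4 : 2 * ∑ G : Fin n → ZMod 2, (delG Pi v G / 2 + 1) = ∑ G, delG Pi v G +
        (Finset.univ.filter fun G => delG Pi v G % 2 = 0).card + ∑ G : Fin n → ZMod 2, 1 := by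
      rw [Finset.card_filter, ← Finset.sum_add_distrib, ← Finset.sum_add_distrib, Finset.mul_sum]
      refine Finset.sum_congr rfl fun G _ => ?_
      split_ifs <;> omega
    have h5 : 0 < ∑ G : Fin n → ZMod 2, 1 := by simp
    omega
  obtain ⟨u, hu, hu0⟩ := Submodule.exists_mem_ne_zero_of_ne_bot
    (LinearMap.ker_ne_bot_of_finrank_lt (f := Φ) hrk)
  rw [LinearMap.mem_ker] at hu
  have hu1 : ∀ π : Pi, f π (ι u) = 0 := fun π => congrFun (congrArg Prod.fst hu) π
  have hu2 : g (co (ι u)) = 0 := congrArg Prod.snd hu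
  have hud : ∀ G, (ι u G).natDegree ≤ delG Pi v G / 2 := fun G => by
    have := (u G).2
    rw [Polynomial.mem_degreeLT] at this
    refine Polynomial.natDegree_le_of_degree_le (Order.le_of_lt_succ ?_)
    exact_mod_cast this
  have htc := fun G => top_coeff Pi hmon l v G _ (hud G)
  have hCm : (∏ π ∈ Pi, π).Monic := Polynomial.monic_prod_of_monic _ _ hmon
  have hS : ∑ G, ι u G ^ 2 * qG Pi l v G = 0 := by
    by_contra hne
    have hdvd : ∏ π ∈ Pi, π ∣ ∑ G, ι u G ^ 2 * qG Pi l v G := by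
      refine Finset.prod_dvd_of_coprime ?_ fun π h => hf ⟨π, h⟩ _ (hu1 ⟨π, h⟩)
      intro π h π' h' hne
      refine (EuclideanDomain.isCoprime_of_dvd ?_ ?_)
      · exact fun h0 => (hirr π h).ne_zero h0.1
      · intro z hz _ hz1 hz2
        obtain ⟨a, ha⟩ := hz1
        have hau : IsUnit a := ((hirr π h).isUnit_or_isUnit ha).resolve_left hz
        have h3 : Associated π z := ⟨hau.unit⁻¹, by rw [show π = z * a from ha, mul_assoc, IsUnit.mul_val_inv, mul_one]⟩
        have h4 : π ∣ π' := h3.dvd.trans hz2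
        exact hne (Polynomial.eq_of_monic_of_associated (hmon _ h) (hmon _ h')
          ((hirr π h).associated_of_dvd (hirr π' h') h4))
    have hle := Polynomial.natDegree_le_of_dvd hdvd hne
    have hle' : (∑ G, ι u G ^ 2 * qG Pi l v G).natDegree ≤ (∏ π ∈ Pi, π).natDegree :=
      Polynomial.natDegree_sum_le_of_forall_le _ _ fun G _ => (htc G).1
    have heq := le_antisymm hle' hle
    have : (∑ G, ι u G ^ 2 * qG Pi l v G).leadingCoeff = 0 := by
      rw [Polynomial.leadingCoeff, heq, Polynomial.finset_sum_coeff, ← hg _ hu2, Finset.sum_filter]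
      refine Finset.sum_congr rfl fun G _ => ?_
      rw [(htc G).2]
      refine if_congr Iff.rfl ?_ rfl
      have h0 : xG l G ≠ 0 := mon_ne_zero hl _
      show _ = xG l G * ((xG l G)⁻¹ * (ι u G).coeff _) ^ 2
      field_simp
    exact hne (Polynomial.leadingCoeff_eq_zero.1 this)
  let sG : (Fin n → ZMod 2) → Polynomial κ := fun G => ∏ π ∈ Pi, π ^ (ordG (v π) G / 2)
  have hsG : ∀ G, sG G ≠ 0 := fun G =>
    Finset.prod_ne_zero_iff.2 fun π h => pow_ne_zero _ (hirr π h).ne_zero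
  have hq0 : ∀ G, qG Pi l v G ≠ 0 := fun G => mul_ne_zero
    (by rw [Ne, Polynomial.C_eq_zero]; exact inv_ne_zero (mon_ne_zero hl _))
    (Finset.prod_ne_zero_iff.2 fun π h => pow_ne_zero _ (hirr π h).ne_zero)
  refine ⟨fun G => ι u G * qG Pi l v G * ∏ H ∈ Finset.univ.erase G, sG H, ?_, ?_⟩
  · intro h
    apply hu0
    funext G
    have h1 := congrFun h G
    replace h1 : ι u G * qG Pi l v G * ∏ H ∈ Finset.univ.erase G, sG H = 0 := h1
    simp only [mul_eq_zero, hq0, or_false] at h1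
    rcases h1 with h1 | h1
    · exact Subtype.ext h1
    · exact absurd h1 (Finset.prod_ne_zero_iff.2 fun H _ => hsG H)
  · have : ∀ G, xG x G * (ι u G * qG Pi l v G * ∏ H ∈ Finset.univ.erase G, sG H) ^ 2
        = ((∏ π ∈ Pi, π) * (∏ H, sG H) ^ 2) * (ι u G ^ 2 * qG Pi l v G) := by
      intro G
      have h1 := sq_part Pi l hl v G
      rw [← hxdef] at h1
      rw [← Finset.mul_prod_erase _ _ (Finset.mem_univ G)]
      calc _ = (xG x G * qG Pi l v G) * (ι u G ^ 2 * qG Pi l v G * (∏ H ∈ Finset.univ.erase G, sG H)^2) := by ring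
        _ = _ := by rw [h1]; ring
    simp only [this]
    rw [← Finset.mul_sum, hS, mul_zero]

/-- Isotropy spreads from the point at infinity to the whole affine line. -/
theorem glob_T' {n s e : ℕ} (he : n + 2 ≤ 2 * e)
    (Gs : Fin s → Fin n → ZMod 2) (hinj : Function.Injective Gs) (hG0 : ∀ j, Gs j ≠ 0)
    (x : Fin (n + 1) → Polynomial κ) (hx : ∀ i, x i ≠ 0)
    (hrel : RelG e Gs x) (D : ℕ)
    (hD : ∀ i, (x i).natDegree ≤ D) (hD' : ∃ i, (x i).natDegree = D)
    (hT : Tiso fun i => (x i).coeff D) : Tiso x := by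
  classical
  let nf := fun i => UniqueFactorizationMonoid.normalizedFactors (x i)
  let Pi : Finset (Polynomial κ) := Finset.univ.biUnion fun i => (nf i).toFinset
  have hmem : ∀ π ∈ Pi, ∃ i, π ∈ nf i := by
    intro π h
    simpa [Pi] using h
  refine glob_T he Gs hinj hG0 Pi ?_ ?_ (fun i => (x i).leadingCoeff)
    (fun i => Polynomial.leadingCoeff_ne_zero.2 (hx i)) (fun π i => (nf i).count π) x ?_ hrel D hD hD' hT
  · intro π h
    obtain ⟨i, hi⟩ := hmem π h
    exact UniqueFactorizationMonoid.irreducible_of_normalized_factor _ hi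
  · intro π h
    obtain ⟨i, hi⟩ := hmem π h
    have h1 := UniqueFactorizationMonoid.normalize_normalized_factor _ hi
    rw [← h1]
    exact Polynomial.monic_normalize (UniqueFactorizationMonoid.irreducible_of_normalized_factor _ hi).ne_zero
  · funext i
    rw [← Finset.prod_multiset_count_of_subset (nf i) Pi
      (Finset.subset_biUnion_of_mem (fun i => (nf i).toFinset) (Finset.mem_univ i))]
    exact (Polynomial.leadingCoeff_mul_prod_normalizedFactors (x i)).symm

/-- One step of the specialization argument: isotropy passes from the top coefficient vector of a
polynomial point of the special hypersurface to its lowest coefficient vector. -/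
theorem step_T {n s e : ℕ} (hn : 0 < n) (he : n + 2 ≤ 2 * e)
    (Gs : Fin s → Fin n → ZMod 2) (hinj : Function.Injective Gs) (hG0 : ∀ j, Gs j ≠ 0)
    (x : Fin (n + 1) → Polynomial κ)
    (hrel : (∀ i, x i ≠ 0) → RelG e Gs x) (D m : ℕ)
    (hD : ∀ i, (x i).natDegree ≤ D) (hD' : ∃ i, (x i).coeff D ≠ 0)
    (hm : ∀ i, ∀ j < m, (x i).coeff j = 0)
    (hT : Tiso fun i => (x i).coeff D) : Tiso fun i => (x i).coeff m := by
  by_cases hx : ∀ i, x i ≠ 0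
  · have hT' := glob_T' he Gs hinj hG0 x hx (hrel hx) D hD
      (hD'.imp fun i hi => le_antisymm (hD i) (Polynomial.le_natDegree_of_ne_zero hi)) hT
    have hdvd : ∀ i, (Polynomial.X : Polynomial κ) ^ m ∣ x i := fun i =>
      Polynomial.X_pow_dvd_iff.2 (hm i)
    choose y hy using hdvd
    have hT2 : Tiso y := by
      refine Tiso_unsmul (a := (Polynomial.X : Polynomial κ) ^ m) ?_ ?_
      · exact pow_ne_zero _ Polynomial.X_ne_zero
      · simpa only [← hy] using hT'
    obtain ⟨z, hz, h0⟩ := hT2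
    obtain ⟨q, -, w, hw, -, h1⟩ := loc_X.residue (fun G => xG y G) (fun _ => 0) (by simp) z hz
      (by simpa using h0)
    refine ⟨w, hw, ?_⟩
    rw [← h1]
    refine Finset.sum_congr rfl fun G _ => ?_
    rw [xG_map]
    congr 2
    funext i
    rw [hy i, show m = 0 + m by simp, pow_add, pow_zero, one_mul, Polynomial.coeff_X_pow_mul]
    exact Polynomial.coeff_zero_eq_eval_zero _
  · push Not at hx
    obtain ⟨i, hi⟩ := hx
    exact Tiso_of_zero (i := i) hn (by simp [hi])
end glob

/-! ### Reductions of algebras -/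

/-- A reduction `red : A → B` of the `K`-algebra `R` through `ι : A → R`: nonzero finite families
in `R` can be rescaled by a constant so as to lift to `A` with nonzero reduction. -/
structure IsRed (K : Type) [Field K] {A R B : Type} [CommRing A] [CommRing R] [CommRing B]
    [Algebra K R] (ι : A →+* R) (red : A →+* B) : Prop where
  zero : ∀ a, ι a = 0 → red a = 0
  prim : ∀ {I : Type} [Finite I] (r : I → R), r ≠ 0 → ∃ c : K, c ≠ 0 ∧ ∃ a : I → A,
    (∀ i, ι (a i) = algebraMap K R c * r i) ∧ ∃ i, red (a i) ≠ 0

section red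
variable {K : Type} [Field K] {A R B : Type} [CommRing A] [CommRing R] [CommRing B]
    [Algebra K R] {ι : A →+* R} {red : A →+* B}

theorem IsRed.prim1 (h : IsRed K ι red) (r : R) (hr : r ≠ 0) :
    ∃ c : K, c ≠ 0 ∧ ∃ a : A, ι a = algebraMap K R c * r ∧ red a ≠ 0 := by
  obtain ⟨c, hc, a, ha, i, hi⟩ := h.prim (fun _ : Unit => r) (fun h => hr (congrFun h ()))
  exact ⟨c, hc, a i, ha i, hi⟩

theorem IsRed.mv (h : IsRed K ι red) (σ : Type) :
    IsRed K (MvPolynomial.map ι : MvPolynomial σ A →+* MvPolynomial σ R) (MvPolynomial.map red) where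
  zero a ha := by
    ext m
    have := congrArg (coeff m) ha
    rw [coeff_map, coeff_zero] at this ⊢
    exact h.zero _ this
  prim {I} _ r hr := by
    classical
    have := Fintype.ofFinite I
    let s : Finset (σ →₀ ℕ) := Finset.univ.biUnion fun i => (r i).support
    obtain ⟨i0, hi0⟩ := Function.ne_iff.1 hr
    obtain ⟨m0, hm0⟩ := MvPolynomial.ne_zero_iff.1 hi0
    have hs : ∀ i m, m ∉ s → coeff m (r i) = 0 := by
      intro i m hm
      by_contra hne
      exact hm (Finset.mem_biUnion.2 ⟨i, Finset.mem_univ i, mem_support_iff.2 hne⟩)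
    have hm0s : m0 ∈ s := by
      by_contra hne; exact hm0 (hs _ _ hne)
    -- index the family of all coefficients by a type in universe zero
    let e := s.equivFin
    obtain ⟨c, hc, a, ha, ⟨i1, k1⟩, h1⟩ := h.prim (I := I × Fin s.card)
      (fun p => coeff (e.symm p.2).1 (r p.1))
      (fun hz => hm0 (by simpa using congrFun hz (i0, e ⟨m0, hm0s⟩)))
    have hco : ∀ i m, coeff m (∑ k, monomial (e.symm k).1 (a (i, k)))
        = if hm : m ∈ s then a (i, e ⟨m, hm⟩) else 0 := by
      intro i m
      rw [coeff_sum]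
      simp only [coeff_monomial]
      split_ifs with hm
      · rw [Finset.sum_eq_single (e ⟨m, hm⟩)]
        · simp
        · intro k _ hk
          rw [if_neg]
          rintro rfl
          exact hk (by simp)
        · simp
      · refine Finset.sum_eq_zero fun k _ => if_neg ?_
        rintro rfl
        exact hm (e.symm k).2
    refine ⟨c, hc, fun i => ∑ k, monomial (e.symm k).1 (a (i, k)), ?_, i1, ?_⟩
    · intro i
      ext m
      rw [coeff_map, hco, MvPolynomial.algebraMap_apply, coeff_C_mul]
      split_ifs with hm
      · rw [ha]; simp
      · rw [map_zero, hs _ _ hm, mul_zero]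
    · intro hz
      apply h1
      have := congrArg (coeff (e.symm k1).1) hz
      rw [coeff_map, hco, dif_pos (e.symm k1).2, coeff_zero] at this
      simpa using this

theorem IsRed.equiv (h : IsRed K ι red) {A' R' B' : Type} [CommRing A'] [CommRing R'] [CommRing B']
    [Algebra K R'] (ι' : A' →+* R') (red' : A' →+* B') (eA : A' ≃+* A) (eR : R' ≃ₐ[K] R)
    (eB : B' ≃+* B) (h1 : ∀ a, eR (ι' a) = ι (eA a)) (h2 : ∀ a, eB (red' a) = red (eA a)) :
    IsRed K ι' red' where
  zero a ha := by
    have := h1 a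
    rw [ha, map_zero] at this
    have := h.zero _ this.symm
    rwa [← h2, EmbeddingLike.map_eq_zero_iff] at this
  prim {I} _ r hr := by
    obtain ⟨i0, hi0⟩ := Function.ne_iff.1 hr
    obtain ⟨c, hc, a, ha, i, hi⟩ := h.prim (fun i => eR (r i))
      (fun hz => hi0 (by simpa using congrFun hz i0))
    refine ⟨c, hc, fun i => eA.symm (a i), fun i => eR.injective ?_, i, ?_⟩
    · rw [h1, RingEquiv.apply_symm_apply, ha, map_mul, AlgEquiv.commutes]
    · intro hz
      apply hi
      rw [← eA.apply_symm_apply (a i), ← h2, hz, map_zero]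

theorem IsRed.poly (h : IsRed K ι red) :
    IsRed K (Polynomial.mapRingHom ι) (Polynomial.mapRingHom red) := by
  refine (h.mv Unit).equiv _ _ (uniqueAlgEquiv A Unit).symm.toRingEquiv
    ((uniqueAlgEquiv R Unit).symm.restrictScalars K) (uniqueAlgEquiv B Unit).symm.toRingEquiv ?_ ?_
  · intro a
    show ((uniqueAlgEquiv R Unit).symm.toRingEquiv.toRingHom.comp (Polynomial.mapRingHom ι)) a =
      ((MvPolynomial.map ι).comp (uniqueAlgEquiv A Unit).symm.toRingEquiv.toRingHom) a
    congr 1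
    refine Polynomial.ringHom_ext (fun a => ?_) ?_ <;> simp
  · intro a
    show ((uniqueAlgEquiv B Unit).symm.toRingEquiv.toRingHom.comp (Polynomial.mapRingHom red)) a =
      ((MvPolynomial.map red).comp (uniqueAlgEquiv A Unit).symm.toRingEquiv.toRingHom) a
    congr 1
    refine Polynomial.ringHom_ext (fun a => ?_) ?_ <;> simp

/-- Polynomials in the variables `σ ≃ Option τ`, seen as polynomials in the distinguished one. -/
def sepEquiv {σ τ : Type} (e : σ ≃ Option τ) (R : Type) [CommRing R] :
    MvPolynomial σ R ≃ₐ[R] Polynomial (MvPolynomial τ R) :=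
  (renameEquiv R e).trans (optionEquivLeft R τ)

theorem sepEquiv_map {σ τ : Type} (e : σ ≃ Option τ) {R S : Type} [CommRing R] [CommRing S]
    (f : R →+* S) (p : MvPolynomial σ R) :
    sepEquiv e S (MvPolynomial.map f p) = (sepEquiv e R p).map (MvPolynomial.map f) := by
  show ((sepEquiv e S).toRingEquiv.toRingHom.comp (MvPolynomial.map f)) p =
    ((Polynomial.mapRingHom (MvPolynomial.map f)).comp (sepEquiv e R).toRingEquiv.toRingHom) p
  congr 1
  refine MvPolynomial.ringHom_ext (fun a => ?_) (fun i => ?_)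
  · simp [sepEquiv, optionEquivLeft_C]
  · rcases h : e i with _ | t
    · simp [sepEquiv, h]
    · simp [sepEquiv, h]

/-- Reductions pass to hypersurfaces whose equation is monic in one of the variables. -/
theorem IsRed.quot {σ τ : Type} (e : σ ≃ Option τ) (h : IsRed K ι red) (hι : Function.Injective ι)
    [Nontrivial R] [Nontrivial B]
    (F : MvPolynomial σ A) (hF : (sepEquiv e A F).Monic) :
    IsRed K ((Ideal.Quotient.mk (Ideal.span {MvPolynomial.map ι F})).comp (MvPolynomial.map ι))
      ((Ideal.Quotient.mk (Ideal.span {MvPolynomial.map red F})).comp (MvPolynomial.map red)) where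
  zero a ha := by
    rw [RingHom.comp_apply, Ideal.Quotient.eq_zero_iff_mem, Ideal.mem_span_singleton] at ha ⊢
    have h1 : sepEquiv e R (MvPolynomial.map ι F) ∣ sepEquiv e R (MvPolynomial.map ι a) := map_dvd _ ha
    rw [sepEquiv_map, sepEquiv_map, Polynomial.map_dvd_map _ (MvPolynomial.map_injective _ hι) hF] at h1
    exact map_dvd _ ((map_dvd_iff (sepEquiv e A)).1 h1)
  prim {I} _ r hr := by
    obtain ⟨i0, hi0⟩ := Function.ne_iff.1 hr
    set P := sepEquiv e R (MvPolynomial.map ι F) with hP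
    have hPm : P.Monic := by rw [hP, sepEquiv_map]; exact hF.map _
    have hlift : ∀ i, ∃ p : MvPolynomial σ R, Ideal.Quotient.mk (Ideal.span {MvPolynomial.map ι F}) p = r i ∧
        (sepEquiv e R p).degree < P.degree := by
      intro i
      obtain ⟨p, hp⟩ := Ideal.Quotient.mk_surjective (r i)
      refine ⟨(sepEquiv e R).symm (sepEquiv e R p %ₘ P), ?_, ?_⟩
      · rw [← hp, Ideal.Quotient.eq, Ideal.mem_span_singleton, ← map_dvd_iff (sepEquiv e R), map_sub,
          AlgEquiv.apply_symm_apply, ← hP]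
        refine ⟨-(sepEquiv e R p /ₘ P), ?_⟩
        have := Polynomial.modByMonic_add_div (sepEquiv e R p) P
        linear_combination this
      · rw [AlgEquiv.apply_symm_apply]
        exact Polynomial.degree_modByMonic_lt _ hPm
    choose p hp hdeg using hlift
    obtain ⟨c, hc, a, ha, i, hi⟩ := (h.mv σ).prim p (fun hz => hi0 (by
      rw [← hp, hz]; simp))
    refine ⟨c, hc, a, fun i => ?_, i, ?_⟩
    · rw [RingHom.comp_apply, ha, map_mul, hp]; rfl
    · rw [RingHom.comp_apply, Ne, Ideal.Quotient.eq_zero_iff_mem, Ideal.mem_span_singleton,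
        ← map_dvd_iff (sepEquiv e B), sepEquiv_map e red F]
      refine (hF.map _).not_dvd_of_degree_lt ?_ ?_
      · rwa [Ne, EmbeddingLike.map_eq_zero_iff]
      · rw [hF.degree_map, sepEquiv_map]
        refine lt_of_le_of_lt Polynomial.degree_map_le ?_
        have h1 : (sepEquiv e A (a i)).degree = (sepEquiv e R (MvPolynomial.map ι (a i))).degree := by
          rw [sepEquiv_map, Polynomial.degree_map_eq_of_injective (MvPolynomial.map_injective _ hι)]
        have h2 : P.degree = (sepEquiv e A F).degree := by
          rw [hP, sepEquiv_map, hF.degree_map]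
        rw [h1, ← h2, ha, map_mul]
        have h3 : sepEquiv e R (algebraMap K (MvPolynomial σ R) c) = Polynomial.C (MvPolynomial.C (algebraMap K R c)) := by
          rw [MvPolynomial.algebraMap_apply, ← MvPolynomial.algebraMap_eq, AlgEquiv.commutes]; rfl
        rw [h3]
        refine lt_of_le_of_lt ?_ (hdeg i)
        rw [← Polynomial.smul_eq_C_mul]
        exact Polynomial.degree_smul_le _ _

theorem IsRed.isDomain (h : IsRed K ι red) [IsDomain B] : IsDomain R := by
  have : Nontrivial R := by
    by_contra hn
    rw [not_nontrivial_iff_subsingleton] at hn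
    have := h.zero 1 (Subsingleton.elim _ _)
    exact one_ne_zero (red.map_one.symm.trans this)
  have : NoZeroDivisors R := ⟨by
    intro r r' hrr
    by_contra! hne
    obtain ⟨c, hc, a, ha, ha0⟩ := h.prim1 r hne.1
    obtain ⟨c', hc', a', ha', ha0'⟩ := h.prim1 r' hne.2
    have : ι (a * a') = 0 := by
      rw [map_mul, ha, ha', mul_mul_mul_comm, hrr, mul_zero]
    have := h.zero _ this
    rw [map_mul] at this
    exact (mul_ne_zero ha0 ha0') this⟩
  exact NoZeroDivisors.to_isDomain R
end red

section val
/-- A valuation ring of `L` and its residue field. -/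
theorem isRed_val {L : Type} [Field L] (V : ValuationSubring L) :
    IsRed L V.subtype (IsLocalRing.residue V) where
  zero a ha := by
    have : a = 0 := Subtype.ext ha
    rw [this, map_zero]
  prim {I} _ r hr := by
    have := Fintype.ofFinite I
    obtain ⟨i0, hi0⟩ := Function.ne_iff.1 hr
    obtain ⟨i, -, hi⟩ := Finset.exists_max_image Finset.univ (fun i => V.valuation (r i)) ⟨i0, Finset.mem_univ _⟩
    have hri : r i ≠ 0 := by
      intro h0
      have := hi i0 (Finset.mem_univ _)
      rw [h0, map_zero, le_zero_iff, map_eq_zero] at this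
      exact hi0 this
    have hle : ∀ j, V.valuation ((r i)⁻¹ * r j) ≤ 1 := by
      intro j
      rw [map_mul, map_inv₀]
      have h0 : 0 < V.valuation (r i) := by
        rw [zero_lt_iff]; simpa using hri
      rw [inv_mul_le_iff₀ h0, mul_one]
      exact hi j (Finset.mem_univ _)
    refine ⟨(r i)⁻¹, inv_ne_zero hri, fun j => ⟨_, (V.valuation_le_one_iff _).1 (hle j)⟩, fun j => rfl, i, ?_⟩
    have : (⟨(r i)⁻¹ * r i, (V.valuation_le_one_iff _).1 (hle i)⟩ : V) = 1 := Subtype.ext (inv_mul_cancel₀ hri)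
    show IsLocalRing.residue V ⟨(r i)⁻¹ * r i, _⟩ ≠ 0
    rw [this, map_one]
    exact one_ne_zero
end val

/-! ### The valuation of the function field attached to a reduction -/

section VL
variable {K : Type} [Field K] {A R B : Type} [CommRing A] [CommRing R] [CommRing B]
    [Algebra K R] {ι : A →+* R} {red : A →+* B} [IsDomain B] (h : IsRed K ι red)
    (O : ValuationSubring K) (oA : O →+* A) (hoA : ∀ μ : O, ι (oA μ) = algebraMap K R μ)
    (L : Type) [Field L] [Algebra R L] [IsFractionRing R L]

/-- The Gauss-type extension of `O` to `L = Frac R` attached to a reduction of `R`. -/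
def VL : ValuationSubring L where
  carrier := {z | ∃ a b, red b ≠ 0 ∧ z * algebraMap R L (ι b) = algebraMap R L (ι a)}
  mul_mem' := by
    rintro z w ⟨a, b, hb, hz⟩ ⟨a', b', hb', hw⟩
    refine ⟨a * a', b * b', by rw [map_mul]; exact mul_ne_zero hb hb', ?_⟩
    simp only [map_mul]; rw [← hz, ← hw]; ring
  one_mem' := ⟨1, 1, by simp, by simp⟩
  add_mem' := by
    rintro z w ⟨a, b, hb, hz⟩ ⟨a', b', hb', hw⟩
    refine ⟨a * b' + a' * b, b * b', by rw [map_mul]; exact mul_ne_zero hb hb', ?_⟩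
    simp only [map_mul, map_add]; rw [← hz, ← hw]; ring
  zero_mem' := ⟨0, 1, by simp, by simp⟩
  neg_mem' := by
    rintro z ⟨a, b, hb, hz⟩
    exact ⟨-a, b, hb, by rw [map_neg, map_neg, ← hz]; ring⟩
  mem_or_inv_mem' := by
    intro z
    by_cases hz : z = 0
    · left; exact ⟨0, 1, by simp, by simp [hz]⟩
    obtain ⟨p, q, hq, rfl⟩ := IsFractionRing.div_surjective (A := R) z
    have := h.isDomain
    have hq0 : q ≠ 0 := nonZeroDivisors.ne_zero hq
    have hp0 : p ≠ 0 := by rintro rfl; simp at hz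
    obtain ⟨c, hc, a, ha, ha0⟩ := h.prim1 p hp0
    obtain ⟨c', hc', b, hb, hb0⟩ := h.prim1 q hq0
    have hqL : algebraMap R L q ≠ 0 := by simpa using hq0
    have hpL : algebraMap R L p ≠ 0 := by simpa using hp0
    have h0 : ∀ c : K, c ≠ 0 → algebraMap R L (algebraMap K R c) ≠ 0 := by
      intro c hc
      simpa using hc
    rcases O.mem_or_inv_mem (c' / c) with hm | hm
    · left
      refine ⟨oA ⟨_, hm⟩ * a, b, hb0, ?_⟩
      rw [map_mul, hoA, ha, hb]
      simp only [map_mul]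
      have : algebraMap R L (algebraMap K R (c' / c)) * algebraMap R L (algebraMap K R c)
          = algebraMap R L (algebraMap K R c') := by
        rw [← map_mul, ← map_mul, div_mul_cancel₀ _ hc]
      rw [← mul_assoc (algebraMap R L (algebraMap K R (c' / c))), this]
      field_simp
    · right
      refine ⟨oA ⟨_, hm⟩ * b, a, ha0, ?_⟩
      rw [map_mul, hoA, ha, hb]
      simp only [map_mul]
      have : algebraMap R L (algebraMap K R (c' / c)⁻¹) * algebraMap R L (algebraMap K R c')
          = algebraMap R L (algebraMap K R c) := by
        rw [← map_mul, ← map_mul, inv_div, div_mul_cancel₀ _ hc']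
      rw [← mul_assoc (algebraMap R L (algebraMap K R (c' / c)⁻¹)), this]
      field_simp

theorem mem_VL (a : A) : algebraMap R L (ι a) ∈ VL h O oA hoA L :=
  ⟨a, 1, by simp, by simp⟩

/-- The tautological map from `A` to the extended valuation ring. -/
def VLhom : A →+* VL h O oA hoA L :=
  ((algebraMap R L).comp ι).codRestrict (VL h O oA hoA L) (mem_VL h O oA hoA L)

theorem VLhom_coe (a : A) : (VLhom h O oA hoA L a : L) = algebraMap R L (ι a) := rfl

theorem VL_res (a : A) : IsLocalRing.residue (VL h O oA hoA L) (VLhom h O oA hoA L a) = 0 ↔ red a = 0 := by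
  have := h.isDomain
  rw [IsLocalRing.residue_eq_zero_iff, IsLocalRing.mem_maximalIdeal, mem_nonunits_iff, not_iff_comm]
  constructor
  · intro hr
    have ha0 : algebraMap R L (ι a) ≠ 0 := by
      intro h0
      exact hr (h.zero a (by simpa using h0))
    refine IsUnit.of_mul_eq_one ⟨(algebraMap R L (ι a))⁻¹, 1, a, hr, ?_⟩ ?_
    · rw [inv_mul_cancel₀ ha0]; simp
    · exact Subtype.ext (mul_inv_cancel₀ ha0)
  · rintro hu h0
    obtain ⟨w, hw⟩ := hu.exists_right_inv
    obtain ⟨c, b, hb, hwb⟩ := w.2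
    have h1 : algebraMap R L (ι a) * (w : L) = 1 := congrArg Subtype.val hw
    have h2 : algebraMap R L (ι (b - a * c)) = 0 := by
      rw [map_sub, map_mul, map_sub, map_mul, ← hwb, ← mul_assoc, h1, one_mul, sub_self]
    have h3 := h.zero _ ((map_eq_zero_iff _ (IsFractionRing.injective R L)).1 h2)
    rw [map_sub, map_mul, h0, zero_mul, sub_zero] at h3
    exact hb h3

/-- The extended valuation has the same value group as its restriction to the constants. -/
theorem VL_scale (z : L) (hz : z ≠ 0) : ∃ c : K, c ≠ 0 ∧
    (VL h O oA hoA L).valuation z = (VL h O oA hoA L).valuation (algebraMap R L (algebraMap K R c)) := by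
  have := h.isDomain
  have hone : ∀ a, red a ≠ 0 → (VL h O oA hoA L).valuation (algebraMap R L (ι a)) = 1 := by
    intro a ha
    rw [Ne, ← VL_res h O oA hoA L] at ha
    replace ha := (IsLocalRing.residue_ne_zero_iff_isUnit _).1 ha
    rw [← VLhom_coe h O oA hoA L]
    exact (ValuationSubring.valuation_eq_one_iff _ _).1 ha
  have key : ∀ r : R, r ≠ 0 → ∃ c : K, c ≠ 0 ∧ (VL h O oA hoA L).valuation (algebraMap R L (algebraMap K R c)) *
      (VL h O oA hoA L).valuation (algebraMap R L r) = 1 := by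
    intro r hr
    obtain ⟨c, hc, a, ha, ha0⟩ := h.prim1 r hr
    refine ⟨c, hc, ?_⟩
    rw [← map_mul, ← map_mul, ← ha, hone a ha0]
  obtain ⟨p, q, hq, rfl⟩ := IsFractionRing.div_surjective (A := R) z
  have hq0 : q ≠ 0 := nonZeroDivisors.ne_zero hq
  have hp0 : p ≠ 0 := by rintro rfl; simp at hz
  obtain ⟨c, hc, h1⟩ := key p hp0
  obtain ⟨c', hc', h2⟩ := key q hq0
  refine ⟨c' / c, div_ne_zero hc' hc, ?_⟩
  let f : K →+* L := (algebraMap R L).comp (algebraMap K R)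
  have h3 : algebraMap R L (algebraMap K R (c' / c)) = f c' / f c := map_div₀ f _ _
  rw [h3, map_div₀, map_div₀, eq_inv_of_mul_eq_one_right h1, eq_inv_of_mul_eq_one_right h2]
  simp only [f, RingHom.comp_apply, div_eq_mul_inv, inv_inv]
  exact mul_comm _ _

/-- Isotropy over the residue field of the extended valuation descends to the reduction `B`, by
clearing denominators. -/
theorem VL_Tiso {n : ℕ} (x : Fin (n + 1) → A)
    (hT : Tiso fun i => IsLocalRing.residue (VL h O oA hoA L) (VLhom h O oA hoA L (x i))) :
    Tiso fun i => red (x i) := by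
  classical
  obtain ⟨z, hz, h0⟩ := hT
  set f := VLhom h O oA hoA L with hf
  set ρ := IsLocalRing.residue (VL h O oA hoA L) with hρ
  choose ζ hζ using fun G => IsLocalRing.residue_surjective (z G)
  choose a b hb hab using fun G => (ζ G).2
  have hab' : ∀ G, ζ G * f (b G) = f (a G) := fun G => Subtype.ext (hab G)
  have hρb : ∀ G, ρ (f (b G)) ≠ 0 := fun G => by rw [Ne, VL_res]; exact hb G
  have ha' : ∀ G, f (a G * ∏ H ∈ Finset.univ.erase G, b H) = ζ G * f (∏ H, b H) := by
    intro G
    rw [← Finset.mul_prod_erase _ _ (Finset.mem_univ G), map_mul, map_mul, ← hab', mul_assoc]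
  have hρβ : ρ (f (∏ H, b H)) ≠ 0 := by
    rw [map_prod, map_prod]; exact Finset.prod_ne_zero_iff.2 fun G _ => hρb G
  obtain ⟨G0, hG0⟩ := Function.ne_iff.1 hz
  refine ⟨fun G => red (a G * ∏ H ∈ Finset.univ.erase G, b H), Function.ne_iff.2 ⟨G0, ?_⟩, ?_⟩
  · show red _ ≠ 0
    rw [Ne, ← VL_res h O oA hoA L, ← hf, ha', map_mul, hζ]
    exact mul_ne_zero hG0 hρβ
  · have : ∑ G, xG (fun i => red (x i)) G * red (a G * ∏ H ∈ Finset.univ.erase G, b H) ^ 2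
        = red (∑ G, xG x G * (a G * ∏ H ∈ Finset.univ.erase G, b H) ^ 2) := by
      rw [map_sum]
      exact Finset.sum_congr rfl fun G _ => by rw [map_mul red (xG x G), xG_map, map_pow]
    rw [this, ← VL_res h O oA hoA L, ← hf, ← hρ, map_sum, map_sum]
    have h1 : ∀ G, ρ (f (xG x G * (a G * ∏ H ∈ Finset.univ.erase G, b H) ^ 2))
        = ρ (f (∏ H, b H)) ^ 2 * (xG (fun i => ρ (f (x i))) G * z G ^ 2) := by
      intro G
      rw [map_mul, map_pow, ha', xG_map, map_mul, xG_map, map_pow, map_mul, hζ]; ring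
    simp only [h1]
    rw [← Finset.mul_sum, h0, mul_zero]
end VL

/-! ### Anisotropy over the special hypersurface -/

/-- A diagonal form whose coefficients are distinct squarefree monomials is anisotropic, since its
terms have different parities of exponents. -/
theorem aniso_mono {k : Type} [CommRing k] [IsDomain k] : ∀ (N : ℕ) {ι : Type} [Fintype ι]
    (A : ι → Fin N → ZMod 2) (S : Set ι) (_ : Set.InjOn A S) (z : ι → MvPolynomial (Fin N) k)
    (_ : ∀ i, i ∉ S → z i = 0) (_ : ∑ i, (∏ t, X t ^ (A i t).val) * z i ^ 2 = 0), z = 0 := by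
  intro N
  induction N with
  | zero =>
    intro ι _ A S hS z hz h0
    funext i
    by_contra hi
    have hiS : i ∈ S := by by_contra h; exact hi (hz i h)
    rw [Finset.sum_eq_single i] at h0
    · simp at h0; exact hi h0
    · intro j _ hj
      rw [hz j]; · simp
      intro hjS
      exact hj (hS hjS hiS (funext fun t => t.elim0))
    · simp
  | succ N ih =>
    intro ι _ A S hS z hz h0
    classical
    by_contra hne
    -- split off the first variable and restrict to the support of the family
    let I := {i // i ∈ S}
    let e := finSuccEquiv k N
    have hsum : ∑ i : I, (Polynomial.X : Polynomial (MvPolynomial (Fin N) k)) ^ (A i.1 0).val *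
        Polynomial.C (∏ t, X t ^ (A i.1 (Fin.succ t)).val) * e (z i.1) ^ 2 = 0 := by
      have h1 := congrArg e h0
      rw [map_zero, map_sum] at h1
      rw [← h1]
      symm
      rw [← Finset.sum_subset (Finset.subset_univ (Finset.univ.filter (· ∈ S)))]
      · rw [← Finset.sum_subtype_eq_sum_filter, Finset.subtype_univ]
        refine Finset.sum_congr rfl fun i _ => ?_
        rw [map_mul, map_pow, Fin.prod_univ_succ, map_mul, map_pow, map_prod]
        simp only [map_pow, e, finSuccEquiv_X_zero, finSuccEquiv_X_succ, map_prod]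
      · intro i _ hi
        rw [hz i (by simpa using hi)]; simp
    have hW : (fun i : I => e (z i.1)) ≠ 0 := by
      obtain ⟨i, hi⟩ := Function.ne_iff.1 hne
      have hiS : i ∈ S := by by_contra h; exact hi (hz i h)
      refine Function.ne_iff.2 ⟨⟨i, hiS⟩, ?_⟩
      simpa using hi
    obtain ⟨q, hq, w, hw, hsupp, h2⟩ := loc_X.residue _ (fun i : I => (A i.1 0).val)
      (fun i => ZMod.val_lt _) _ hW hsum
    refine hw (ih (fun (i : I) t => A i.1 t.succ) {i | (A i.1 0).val = q} ?_ w ?_ ?_)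
    · intro i hi j hj hij
      refine Subtype.ext (hS i.2 j.2 (funext fun t => ?_))
      refine Fin.cases ?_ (fun t => congrFun hij t) t
      exact ZMod.val_injective 2 (hi.trans hj.symm)
    · intro i hi; exact hsupp i hi
    · simpa using h2

theorem evn_injective (n : ℕ) : Function.Injective (evn n) := by
  intro G H h
  funext i
  rw [← evn_succ G i, h, evn_succ]

theorem aniso_xG {k : Type} [CommRing k] [IsDomain k] (n : ℕ) :
    Aniso (xG (X : Fin (n + 1) → MvPolynomial (Fin (n + 1)) k)) := by
  intro z h0
  exact aniso_mono (n + 1) (evn n) Set.univ (evn_injective n).injOn z (by simp) h0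

/-- The values of the form `⟨x^G⟩` are closed under products. -/
theorem xG_values {n : ℕ} {E : Type*} [Field E] {x : Fin (n + 1) → E} (hx : ∀ i, x i ≠ 0)
    (u v : (Fin n → ZMod 2) → E) (hu : ∑ G, xG x G * u G ^ 2 ≠ 0) :
    ∃ w : (Fin n → ZMod 2) → E, ∑ G, xG x G * w G ^ 2 =
      (∑ G, xG x G * u G ^ 2) * ∑ G, xG x G * v G ^ 2 := by
  obtain ⟨T, hT⟩ := form_sim (xG x) (xG_sqMult hx) u hu
  exact ⟨T v, hT v⟩

/-- Division by a monic quadratic: if `Y² + γ` divides `∑ c v²`, then either it divides all `v`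
or `φ(u) = φ(b) (Y² + γ)` with `b ≠ 0` free of `Y`. -/
theorem quad_div {Q ι : Type*} [CommRing Q] [IsDomain Q] [Fintype ι] {c : ι → Q} (hc : Aniso c) (γ : Q)
    (v : ι → Polynomial Q)
    (h : (Polynomial.X ^ 2 + Polynomial.C γ) ∣ ∑ i, Polynomial.C (c i) * v i ^ 2) :
    (∀ i, (Polynomial.X ^ 2 + Polynomial.C γ) ∣ v i) ∨
    ∃ (u : ι → Polynomial Q) (b : ι → Q), b ≠ 0 ∧ ∑ i, Polynomial.C (c i) * u i ^ 2 =
      Polynomial.C (∑ i, c i * b i ^ 2) * (Polynomial.X ^ 2 + Polynomial.C γ) := by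
  set M : Polynomial Q := Polynomial.X ^ 2 + Polynomial.C γ with hM
  have hMm : M.Monic := Polynomial.monic_X_pow_add_C γ two_ne_zero
  have hMd : M.degree = 2 := Polynomial.degree_X_pow_add_C (by norm_num) γ
  let u := fun i => v i %ₘ M
  let a := fun i => (u i).coeff 0
  let b := fun i => (u i).coeff 1
  have hu : ∀ i, u i = Polynomial.C (b i) * Polynomial.X + Polynomial.C (a i) := by
    intro i
    refine Polynomial.eq_X_add_C_of_degree_le_one ?_
    have h1 := Polynomial.degree_modByMonic_lt (v i) hMm
    rw [hMd] at h1
    rw [Polynomial.degree_le_iff_coeff_zero]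
    intro m hm
    refine Polynomial.coeff_eq_zero_of_degree_lt (lt_of_lt_of_le h1 ?_)
    have : 1 < m := by exact_mod_cast hm
    exact_mod_cast this
  have hvu : ∀ i, M ∣ v i - u i := fun i => ⟨v i /ₘ M, by
    rw [sub_eq_iff_eq_add, add_comm]; exact (Polynomial.modByMonic_add_div (v i) M).symm⟩
  have hdu : M ∣ ∑ i, Polynomial.C (c i) * u i ^ 2 := by
    have : ∑ i, Polynomial.C (c i) * u i ^ 2 = ∑ i, Polynomial.C (c i) * v i ^ 2 -
        ∑ i, (v i - u i) * (Polynomial.C (c i) * (v i + u i)) := by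
      rw [← Finset.sum_sub_distrib]; refine Finset.sum_congr rfl fun i _ => by ring
    rw [this]
    exact dvd_sub h (Finset.dvd_sum fun i _ => Dvd.dvd.mul_right (hvu i) _)
  have hval : ∑ i, Polynomial.C (c i) * u i ^ 2 =
      Polynomial.C (∑ i, c i * b i ^ 2) * M +
      (Polynomial.C (2 * ∑ i, c i * (a i * b i)) * Polynomial.X +
        Polynomial.C (∑ i, c i * a i ^ 2 - (∑ i, c i * b i ^ 2) * γ)) := by
    have : ∀ i, Polynomial.C (c i) * u i ^ 2 = Polynomial.C (c i * b i ^ 2) * Polynomial.X ^ 2 +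
      (Polynomial.C (2 * (c i * (a i * b i))) * Polynomial.X + Polynomial.C (c i * a i ^ 2)) := by
      intro i; rw [hu i]; simp only [map_mul, map_pow, map_ofNat]; ring
    rw [Finset.sum_congr rfl fun i _ => this i, Finset.sum_add_distrib, Finset.sum_add_distrib,
      ← Finset.sum_mul, ← Finset.sum_mul, ← map_sum, ← map_sum, ← map_sum, ← Finset.mul_sum, hM]
    simp only [map_sub, map_mul]; ring
  have hzero : Polynomial.C (2 * ∑ i, c i * (a i * b i)) * Polynomial.X +
        Polynomial.C (∑ i, c i * a i ^ 2 - (∑ i, c i * b i ^ 2) * γ) = 0 := by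
    refine Polynomial.eq_zero_of_dvd_of_degree_lt (p := M) ?_ ?_
    · rw [hval] at hdu
      exact (dvd_add_right (Dvd.intro_left _ rfl)).1 hdu
    · rw [hMd]
      exact lt_of_le_of_lt (Polynomial.degree_linear_le) (by norm_num)
  by_cases hb : b = 0
  · left
    have ha : a = 0 := by
      apply hc
      have := congrArg (fun p => Polynomial.coeff p 0) hzero
      rw [hb] at this; simp only [Pi.zero_apply] at this
      simpa [Polynomial.coeff_C_zero, -map_sub, -map_sum, -map_pow, -map_mul] using this
    intro i
    have := hvu i
    rwa [hu i, hb, ha, show Polynomial.C ((0 : ι → Q) i) * Polynomial.X + Polynomial.C ((0 : ι → Q) i) = 0 by simp,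
      sub_zero] at this
  · right
    exact ⟨u, b, hb, by rw [hval, hzero, add_zero]⟩

set_option maxHeartbeats 800000 in
/-- The form `⟨x^G⟩` stays anisotropic over the function field of the quadric `g + ∑ x^{G_j} Y_j²` as
soon as its subform on the `G` different from all `G_j` does not represent `g`. -/
theorem nv_field {E0 : Type} [Field E0] [CharZero E0] {n r : ℕ} {x : Fin (n + 1) → E0}
    (hx : ∀ i, x i ≠ 0) (han : Aniso (xG x)) (Gs : Fin (r + 1) → Fin n → ZMod 2)
    (hinj : Function.Injective Gs) (g : E0)
    (hg : ∀ z : (Fin n → ZMod 2) → E0, (∀ j, z (Gs j) = 0) → ∑ G, xG x G * z G ^ 2 ≠ g)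
    (v : (Fin n → ZMod 2) → MvPolynomial (Fin (r + 1)) E0)
    (hdiv : (C g + ∑ j, C (xG x (Gs j)) * X j ^ 2) ∣ ∑ G, C (xG x G) * v G ^ 2) (G) :
    (C g + ∑ j, C (xG x (Gs j)) * X j ^ 2) ∣ v G := by
  set F' : MvPolynomial (Fin (r + 1)) E0 := C g + ∑ j, C (xG x (Gs j)) * X j ^ 2 with hF'
  set α := xG x (Gs 0) with hα
  have hα0 : α ≠ 0 := mon_ne_zero hx _
  let e := finSuccEquiv E0 r
  let β : MvPolynomial (Fin r) E0 := C g + ∑ j : Fin r, C (xG x (Gs j.succ)) * X j ^ 2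
  have heF : e F' = Polynomial.C (C α) * (Polynomial.X ^ 2 + Polynomial.C (C α⁻¹ * β)) := by
    have hC : ∀ t, e (C t) = Polynomial.C (C t) := fun t => by
      simp [e, finSuccEquiv_apply]
    have h1 : Polynomial.C (C α) * Polynomial.C (C α⁻¹ * β) = Polynomial.C β := by
      rw [← map_mul, ← mul_assoc, ← map_mul, mul_inv_cancel₀ hα0, map_one, one_mul]
    rw [mul_add, h1, hF', Fin.sum_univ_succ]
    simp only [map_add, map_sum, map_mul, map_pow, hC, β]
    simp only [e, finSuccEquiv_X_zero, finSuccEquiv_X_succ]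
    ring
  have hunit : IsUnit (Polynomial.C (C α : MvPolynomial (Fin r) E0)) :=
    ((isUnit_iff_ne_zero.2 hα0).map C).map Polynomial.C
  have hC : ∀ t, e (C t) = Polynomial.C (C t) := fun t => by simp [e, finSuccEquiv_apply]
  have hdiv' : (Polynomial.X ^ 2 + Polynomial.C (C α⁻¹ * β)) ∣
      ∑ G, Polynomial.C (C (xG x G)) * e (v G) ^ 2 := by
    have := map_dvd e hdiv
    rw [heF, hunit.mul_left_dvd] at this
    simpa [hC] using this
  rcases quad_div (aniso_mvPoly han) _ _ hdiv' with h | ⟨u, b, hb, hub⟩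
  · have h1 : e F' ∣ e (v G) := by rw [heF, hunit.mul_left_dvd]; exact h G
    have := map_dvd e.symm h1
    simpa using this
  · exfalso
    let Fr := FractionRing (MvPolynomial (Fin (r + 1)) E0)
    let ι := algebraMap (MvPolynomial (Fin (r + 1)) E0) Fr
    have hι : Function.Injective ι := IsFractionRing.injective _ _
    let b' := fun G => e.symm (Polynomial.C (b G))
    have hbb : ∑ G, C (xG x G) * b' G ^ 2 = e.symm (Polynomial.C (∑ G, C (xG x G) * b G ^ 2)) := by
      apply e.injective; simp [b', hC]
    have hbb0 : ∑ G, C (xG x G) * b' G ^ 2 ≠ 0 := by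
      intro h
      have h2 : b' = 0 := aniso_mvPoly han _ h
      refine hb (funext fun G => ?_)
      have := congrFun h2 G
      simpa [b'] using this
    have hmain : C α * ∑ G, C (xG x G) * e.symm (u G) ^ 2 = (∑ G, C (xG x G) * b' G ^ 2) * F' := by
      apply e.injective
      rw [map_mul, map_mul, heF, hbb, e.apply_symm_apply, hC]
      have : e (∑ G, C (xG x G) * e.symm (u G) ^ 2) = ∑ G, Polynomial.C (C (xG x G)) * u G ^ 2 := by
        simp [hC]
      rw [this, hub]; ring
    let y := fun i => ι (C (x i))
    have hy : ∀ i, y i ≠ 0 := fun i => by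
      simpa [y] using (map_ne_zero_iff ι hι).2 (by simpa using hx i)
    have hyG : ∀ G, ι (C (xG x G)) = xG y G := fun G => by
      rw [xG_map, xG_map]
    have hφ : ∀ w : (Fin n → ZMod 2) → MvPolynomial (Fin (r + 1)) E0,
        ι (∑ G, C (xG x G) * w G ^ 2) = ∑ G, xG y G * (ι (w G)) ^ 2 := fun w => by
      simp [hyG]
    have hb0 : ∑ G, xG y G * (ι (b' G)) ^ 2 ≠ 0 := by
      rw [← hφ]; exact (map_ne_zero_iff ι hι).2 hbb0
    obtain ⟨w1, hw1⟩ := xG_values hy _ (fun G => ι (e.symm (u G))) hb0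
    have hs1 : ∑ G, xG y G * ((Pi.single (Gs 0) 1 : (Fin n → ZMod 2) → Fr) G) ^ 2 = ι (C α) := by
      rw [Finset.sum_eq_single (Gs 0)]
      · simp [hyG, α]
      · intro j _ hj; simp [hj]
      · simp
    obtain ⟨w2, hw2⟩ := xG_values hy (Pi.single (Gs 0) 1) w1 (by
      rw [hs1]; exact (map_ne_zero_iff ι hι).2 (by simpa using hα0))
    obtain ⟨s, hs⟩ := IsLocalization.exist_integer_multiples_of_finite
      (nonZeroDivisors (MvPolynomial (Fin (r + 1)) E0)) w2
    choose w hw using hs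
    have hs0 : (s : MvPolynomial (Fin (r + 1)) E0) ≠ 0 := nonZeroDivisors.ne_zero s.2
    have hrel : ∑ G, C (xG x G) * w G ^ 2 = F' * ((∑ G, C (xG x G) * b' G ^ 2) * s) ^ 2 := by
      apply hι
      rw [hφ]
      have : ∀ G, ι (w G) = ι s * w2 G := fun G => by
        have := hw G; rw [Algebra.smul_def] at this; exact this
      calc ∑ G, xG y G * ι (w G) ^ 2 = ι s ^ 2 * ∑ G, xG y G * w2 G ^ 2 := by
            rw [Finset.mul_sum]; refine Finset.sum_congr rfl fun G _ => by rw [this]; ring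
        _ = ι s ^ 2 * (ι (C α) * (ι (∑ G, C (xG x G) * b' G ^ 2) * ι (∑ G, C (xG x G) * e.symm (u G) ^ 2))) := by
            rw [hw2, hs1, hw1, hφ, hφ]
        _ = ι ((s : MvPolynomial (Fin (r + 1)) E0) ^ 2 * (∑ G, C (xG x G) * b' G ^ 2) * (C α * ∑ G, C (xG x G) * e.symm (u G) ^ 2)) := by
            rw [map_mul, map_mul, map_mul, map_pow]; ring
        _ = _ := by rw [hmain]; exact congrArg ι (by ring)
    obtain ⟨z, hz, hz2⟩ := cp_iter (r + 1) (xG x) han g Gs hinj _ (mul_ne_zero hbb0 hs0) w hrel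
    exact hg z hz hz2

section cut
variable {k : Type} [Field k]

/-- The change of variables making `s = ∑ x_i` a coordinate in place of the last variable. -/
def cutHom (k : Type) [Field k] (n : ℕ) :
    MvPolynomial (Fin (n + 1)) k →+* Polynomial (MvPolynomial (Fin n) k) :=
  eval₂Hom (Polynomial.C.comp C)
    (Fin.snoc (α := fun _ => Polynomial (MvPolynomial (Fin n) k)) (fun i => Polynomial.C (X i))
      (Polynomial.X - ∑ i, Polynomial.C (X i)))

theorem cutHom_castSucc (n : ℕ) (i : Fin n) : cutHom k n (X i.castSucc) = Polynomial.C (X i) := by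
  simp [cutHom]

theorem cutHom_last (n : ℕ) :
    cutHom k n (X (Fin.last n)) = Polynomial.X - ∑ i, Polynomial.C (X i) := by
  simp [cutHom]

theorem cutHom_injective (n : ℕ) : Function.Injective (cutHom k n) := by
  let θ : Polynomial (MvPolynomial (Fin n) k) →+* MvPolynomial (Fin (n + 1)) k :=
    Polynomial.eval₂RingHom (rename Fin.castSucc).toRingHom (∑ i, X i)
  have : θ.comp (cutHom k n) = RingHom.id _ := by
    apply MvPolynomial.ringHom_ext
    · intro a; simp [θ, cutHom]
    · intro i
      refine Fin.lastCases ?_ (fun i => ?_) i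
      · rw [RingHom.comp_apply, cutHom_last]
        simp [θ, Fin.sum_univ_castSucc, Polynomial.eval₂_finset_sum]
      · rw [RingHom.comp_apply, cutHom_castSucc]; simp [θ]
  exact Function.LeftInverse.injective (g := θ) fun a => by
    simpa using congrArg (fun f : _ →+* _ => f a) this

/-- The subform of `⟨x^G⟩` on the `G` avoiding the last variable does not represent `g`, even up
to squares: it stays anisotropic modulo `ℓ = ∑ x_i`, so its values have even order at `ℓ`, while `g`
has order one. -/
theorem g_not_rep {n' e : ℕ} (he : 1 ≤ e)
    (z : (Fin (n' + 1) → ZMod 2) → MvPolynomial (Fin (n' + 2)) k)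
    (hz : ∀ G, G (Fin.last n') ≠ 0 → z G = 0)
    (f : MvPolynomial (Fin (n' + 2)) k) (hf : f ≠ 0) :
    ∑ G, xG X G * z G ^ 2 ≠ gfun e X * f ^ 2 := by
  classical
  intro h
  let ψ := cutHom k (n' + 1)
  have hψ : Function.Injective ψ := cutHom_injective _
  let hh : Polynomial (MvPolynomial (Fin (n' + 1)) k) := Polynomial.X ^ (2 * e - 1) +
    (Polynomial.C (X 0)) ^ (2 * e - (n' + 1) - 2) * ((∏ i, Polynomial.C (X i)) *
      (Polynomial.X - ∑ i, Polynomial.C (X i)))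
  have hg : ψ (gfun e X) = Polynomial.X * hh := by
    have hs : ∑ i, ψ (X i) = Polynomial.X := by
      rw [Fin.sum_univ_castSucc]
      simp only [ψ, cutHom_castSucc, cutHom_last]; ring
    have h0 : ψ (X 0) = Polynomial.C (X 0) := cutHom_castSucc (k := k) (n' + 1) 0
    have hp : ∏ i, ψ (X i) = (∏ i, Polynomial.C (X i)) *
      (Polynomial.X - ∑ i, Polynomial.C (X i)) := by
      rw [Fin.prod_univ_castSucc]
      simp only [ψ, cutHom_castSucc, cutHom_last]
    rw [gfun_map, gfun, hs, h0, hp]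
    obtain ⟨t, rfl⟩ : ∃ t, e = t + 1 := ⟨e - 1, by omega⟩
    rw [show 2 * (t + 1) = 2 * t + 1 + 1 by ring]
    simp only [hh, show 2 * (t + 1) - 1 = 2 * t + 1 by omega]
    rw [show 2 * (t + 1) = 2 * t + 1 + 1 by ring]
    ring
  have hh0 : Polynomial.evalRingHom 0 hh ≠ 0 := by
    have h1 : Polynomial.evalRingHom 0 hh =
      - (X 0 ^ (2 * e - (n' + 1) - 2) * ((∏ i, X i) * ∑ i, X i) : MvPolynomial (Fin (n' + 1)) k) := by
      simp [hh, Polynomial.eval_finset_sum, Polynomial.eval_prod, show 2 * e - 1 ≠ 0 by omega]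
    rw [h1, neg_ne_zero]
    refine mul_ne_zero (pow_ne_zero _ (X_ne_zero _)) (mul_ne_zero ?_ ?_)
    · exact Finset.prod_ne_zero_iff.2 fun i _ => X_ne_zero _
    · intro h2
      have := congrArg (eval (Pi.single 0 1)) h2
      simp at this
  let I := {G : Fin (n' + 1) → ZMod 2 // G (Fin.last n') = 0}
  let AA : I → Fin (n' + 1) → ZMod 2 := fun G t => evn (n' + 1) G.1 t.castSucc
  have hAA : Function.Injective AA := by
    intro G H hGH
    refine Subtype.ext (evn_injective _ (funext fun t => ?_))
    refine Fin.lastCases ?_ (fun t => congrFun hGH t) t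
    rw [← Fin.succ_last, evn_succ, evn_succ, G.2, H.2]
  let p : Option I → ℕ := fun o => o.elim 1 fun _ => 0
  let c : Option I → Polynomial (MvPolynomial (Fin (n' + 1)) k) :=
    fun o => o.elim (-hh) fun G => Polynomial.C (∏ t, X t ^ (AA G t).val)
  let W : Option I → Polynomial (MvPolynomial (Fin (n' + 1)) k) :=
    fun o => o.elim (ψ f) fun G => ψ (z G.1)
  have hxG : ∀ G : I, ψ (xG X G.1) = c (some G) := by
    intro G
    rw [xG_map, xG, mon, Fin.prod_univ_castSucc]
    rw [← Fin.succ_last, evn_succ, G.2]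
    simp only [ψ, cutHom_castSucc, c, Option.elim, AA]
    simp
  have hsum : ∑ o, Polynomial.X ^ p o * c o * W o ^ 2 = 0 := by
    have h1 := congrArg ψ h
    rw [map_sum, map_mul, map_pow, hg] at h1
    have h2 : ∑ G, ψ (xG X G * z G ^ 2) = ∑ G : I, c (some G) * (ψ (z G.1)) ^ 2 := by
      rw [← Finset.sum_subset (Finset.subset_univ
        (Finset.univ.filter fun G : Fin (n' + 1) → ZMod 2 => G (Fin.last n') = 0))]
      · rw [← Finset.sum_subtype_eq_sum_filter, Finset.subtype_univ]
        refine Finset.sum_congr rfl fun G _ => ?_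
        rw [map_mul, map_pow]
        exact congrArg (· * _) (hxG G)
      · intro G _ hG
        rw [hz G (by simpa using hG)]; simp
    rw [h2] at h1
    rw [Fintype.sum_option]
    simp only [p, W, Option.elim, pow_zero, one_mul]
    rw [h1]
    simp only [c, Option.elim]
    ring
  have hW : W ≠ 0 := by
    intro h0
    have := congrFun h0 none
    exact hf (hψ (by simpa [W] using this))
  obtain ⟨q, hq, w, hw, hsupp, h2⟩ := loc_X.residue c p (fun o => by cases o <;> simp [p]) W hW hsum
  rw [Fintype.sum_option] at h2
  interval_cases q
  · have hn : w none = 0 := hsupp none (by simp [p])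
    refine hw (aniso_mono (n' + 1) (fun o => o.elim 0 AA) (Set.range some) ?_ w ?_ ?_)
    · rintro _ ⟨G, rfl⟩ _ ⟨H, rfl⟩ hGH
      exact congrArg some (hAA hGH)
    · intro o ho
      cases o with
      | none => exact hn
      | some G => exact absurd ⟨G, rfl⟩ ho
    · rw [Fintype.sum_option]
      rw [hn] at h2 ⊢
      simpa [c] using h2
  · have hs : ∀ G : I, w (some G) = 0 := fun G => hsupp _ (by simp [p])
    simp only [hs] at h2
    have : w none = 0 := by
      have h3 : -(Polynomial.evalRingHom 0 hh) * w none ^ 2 = 0 := by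
        simpa [c] using h2
      exact (pow_eq_zero_iff two_ne_zero).1 ((mul_eq_zero.1 h3).resolve_left (neg_ne_zero.2 hh0))
    refine hw (funext fun o => ?_)
    cases o with
    | none => exact this
    | some G => exact hs G

/-- The same over the fraction field. -/
theorem g_not_rep_frac {n' e : ℕ} (he : 1 ≤ e) {E : Type} [Field E]
    [Algebra (MvPolynomial (Fin (n' + 2)) k) E] [IsFractionRing (MvPolynomial (Fin (n' + 2)) k) E]
    (z : (Fin (n' + 1) → ZMod 2) → E)
    (hz : ∀ G, G (Fin.last n') ≠ 0 → z G = 0) :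
    ∑ G, xG (fun i => algebraMap (MvPolynomial (Fin (n' + 2)) k) E (X i)) G * z G ^ 2 ≠
      gfun e (fun i => algebraMap (MvPolynomial (Fin (n' + 2)) k) E (X i)) := by
  intro h
  obtain ⟨s, hs⟩ := IsLocalization.exist_integer_multiples_of_finite
      (nonZeroDivisors (MvPolynomial (Fin (n' + 2)) k)) z
  choose w hw using hs
  have hs0 : (s : MvPolynomial (Fin (n' + 2)) k) ≠ 0 := nonZeroDivisors.ne_zero s.2
  have hι := IsFractionRing.injective (MvPolynomial (Fin (n' + 2)) k) E
  refine g_not_rep he w (fun G hG => ?_) s hs0 (hι ?_)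
  · apply hι
    rw [hw, hz G hG]; simp
  · rw [map_mul, gfun_map, ← h, map_sum, map_pow, Finset.sum_mul]
    refine Finset.sum_congr rfl fun G _ => ?_
    rw [map_mul, map_pow, xG_map, hw, Algebra.smul_def]; ring
end cut

theorem isUnit_of_dvd_mul_pow {Q : Type*} [CommRing Q] [IsDomain Q] {p q β : Q} (hp : Prime p)
    (hq : Prime q) (hpβ : ¬ p ∣ β) (hqβ : ¬ q ∣ β) (t : ℕ) : ∀ (c c' : Q) (_ : c * c' = p * q ^ t)
    (_ : c ∣ β), IsUnit c := by
  induction t with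
  | zero =>
    intro c c' h hc
    have hpc : ¬ p ∣ c := fun h => hpβ (h.trans hc)
    have h1 : p ∣ c * c' := ⟨1, by rw [h]; simp⟩
    obtain ⟨u, rfl⟩ := (hp.dvd_or_dvd h1).resolve_left hpc
    refine IsUnit.of_mul_eq_one u (mul_left_cancel₀ hp.ne_zero ?_)
    linear_combination h
  | succ t ih =>
    intro c c' h hc
    have hqc : ¬ q ∣ c := fun h => hqβ (h.trans hc)
    have h1 : q ∣ c * c' := ⟨p * q ^ t, by rw [h]; ring⟩
    obtain ⟨u, rfl⟩ := (hq.dvd_or_dvd h1).resolve_left hqc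
    refine ih c u (mul_left_cancel₀ hq.ne_zero ?_) hc
    linear_combination h

theorem quad_irred {Q : Type*} [CommRing Q] [IsDomain Q] {p q β : Q} (hp : Prime p)
    (hq : Prime q) (hpq : ¬ p ∣ q) (hpβ : ¬ p ∣ β) (hqβ : ¬ q ∣ β) (t : ℕ) :
    Irreducible (Polynomial.C (p * q ^ t) * Polynomial.X ^ 2 + Polynomial.C β) := by
  have hα : p * q ^ t ≠ 0 := mul_ne_zero hp.ne_zero (pow_ne_zero _ hq.ne_zero)
  set f := Polynomial.C (p * q ^ t) * Polynomial.X ^ 2 + Polynomial.C β with hf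
  have hfd : f.natDegree = 2 := by
    rw [hf]; generalize p * q ^ t = α at hα; compute_degree!
  have hf2 : f.coeff 2 = p * q ^ t := by simp [hf, Polynomial.coeff_C, Polynomial.coeff_X_pow, Polynomial.coeff_X, -map_mul, -map_add, -map_pow]
  have hf1 : f.coeff 1 = 0 := by simp [hf, Polynomial.coeff_C, Polynomial.coeff_X_pow, Polynomial.coeff_X, -map_mul, -map_add, -map_pow]
  have hf0 : f.coeff 0 = β := by simp [hf]
  have hf0' : f ≠ 0 := fun h => hα (by rw [← hf2, h]; simp)
  -- a factor of degree zero is a common divisor of both coefficients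
  have key : ∀ a b : Polynomial Q, f = a * b → a.natDegree = 0 → IsUnit a := by
    intro a b hab ha
    obtain ⟨c, rfl⟩ := Polynomial.natDegree_eq_zero.1 ha
    refine Polynomial.isUnit_C.2 (isUnit_of_dvd_mul_pow hp hq hpβ hqβ t c (b.coeff 2) ?_ ⟨b.coeff 0, ?_⟩)
    · rw [← hf2, hab, Polynomial.coeff_C_mul]
    · rw [← hf0, hab, Polynomial.coeff_C_mul]
  -- a product of two linear factors: `p` divides exactly one of the leading coefficients
  have key2 : ∀ a1 b1 a2 b2 : Q, a1 * a2 = p * q ^ t → a1 * b2 + b1 * a2 = 0 → b1 * b2 = β →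
      p ∣ a1 → False := by
    rintro a1 b1 a2 b2 h2 h1 h0 ⟨u, rfl⟩
    have h3 : u * a2 = q ^ t := mul_left_cancel₀ hp.ne_zero (by linear_combination h2)
    have h4 : ¬ p ∣ a2 := fun h => hpq (hp.dvd_of_dvd_pow (h3 ▸ h.mul_left u))
    have h5 : p ∣ b1 * a2 := ⟨-(u * b2), by linear_combination h1⟩
    exact hpβ (h0 ▸ ((hp.dvd_or_dvd h5).resolve_right h4).mul_right b2)
  refine ⟨fun hu => ?_, fun a b hab => ?_⟩
  · have := Polynomial.natDegree_eq_zero_of_isUnit hu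
    omega
  · have ha0 : a ≠ 0 := fun h => hf0' (by rw [hab, h, zero_mul])
    have hb0 : b ≠ 0 := fun h => hf0' (by rw [hab, h, mul_zero])
    have hdeg : a.natDegree + b.natDegree = 2 := by
      rw [← Polynomial.natDegree_mul ha0 hb0, ← hab, hfd]
    rcases Nat.lt_or_ge 0 a.natDegree with h1 | h1
    · rcases Nat.lt_or_ge 0 b.natDegree with h2 | h2
      · exfalso
        have ha := Polynomial.eq_X_add_C_of_natDegree_le_one (p := a) (by omega)
        have hb := Polynomial.eq_X_add_C_of_natDegree_le_one (p := b) (by omega)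
        generalize a.coeff 1 = a1 at ha
        generalize a.coeff 0 = b1 at ha
        generalize b.coeff 1 = a2 at hb
        generalize b.coeff 0 = b2 at hb
        have hprod : f = Polynomial.C (a1 * a2) * Polynomial.X ^ 2 +
            Polynomial.C (a1 * b2 + b1 * a2) * Polynomial.X + Polynomial.C (b1 * b2) := by
          rw [hab, ha, hb]; simp only [map_mul, map_add]; ring
        have e2 : a1 * a2 = p * q ^ t := by
          rw [← hf2, hprod]; simp [Polynomial.coeff_X, Polynomial.coeff_C, -map_mul, -map_add]
        have e1 : a1 * b2 + b1 * a2 = 0 := by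
          rw [← hf1, hprod]
          simp [Polynomial.coeff_X, Polynomial.coeff_C, Polynomial.coeff_X_pow, -map_mul, -map_add]
        have e0 : b1 * b2 = β := by
          rw [← hf0, hprod]; simp
        rcases hp.dvd_or_dvd (a := a1) (b := a2) ⟨q ^ t, e2⟩ with h | h
        · exact key2 a1 b1 a2 b2 e2 e1 e0 h
        · exact key2 a2 b2 a1 b1 (by linear_combination e2) (by linear_combination e1)
            (by linear_combination e0) h
      · exact Or.inr (key b a (by rw [hab, mul_comm]) (by omega))
    · exact Or.inl (key a b hab (by omega))

/-! ### The special hypersurface -/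

section F0
variable {n r : ℕ} {R S : Type*} [CommRing R] [CommRing S]

/-- The pure `x`-part of the special form. -/
def cF (d : ℕ) (x : Fin (n + 1) → R) : R := x 0 ^ (d % 2) * gfun (d / 2) x

/-- Exponents modulo two of the coefficient attached to `G`: the even set `G`, altered at `0`
to have the parity of `d`. -/
def AF (d : ℕ) (G : Fin n → ZMod 2) : Fin (n + 1) → ZMod 2 := evn n G + Pi.single 0 (d : ZMod 2)

/-- Half of the degree missing in `mon x (AF d G)` to reach `d - 2`. -/
def hF (d : ℕ) (G : Fin n → ZMod 2) : ℕ := (d - 2 - ∑ i, (AF d G i).val) / 2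

/-- The coefficient of `y_j²`, a form of degree `d - 2` in `x`. -/
def aF (d : ℕ) (x : Fin (n + 1) → R) (G : Fin n → ZMod 2) : R :=
  mon x (AF d G) * (x 1 ^ hF d G) ^ 2

/-- The special form as an expression in elements of a ring. -/
def F0expr (d : ℕ) (Gs : Fin (r + 1) → Fin n → ZMod 2) (x : Fin (n + 1) → R)
    (y : Fin (r + 1) → R) : R := cF d x + ∑ j, aF d x (Gs j) * y j ^ 2

/-- The equation of the special hypersurface. -/
def F0 (d : ℕ) (Gs : Fin (r + 1) → Fin n → ZMod 2) (R : Type*) [CommRing R] :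
    MvPolynomial (Fin (n + 1) ⊕ Fin (r + 1)) R :=
  F0expr d Gs (fun i => X (Sum.inl i)) (fun j => X (Sum.inr j))

theorem cF_map (f : R →+* S) (d : ℕ) (x : Fin (n + 1) → R) :
    f (cF d x) = cF d (fun i => f (x i)) := by
  simp [cF, gfun_map]

theorem aF_map (f : R →+* S) (d : ℕ) (x : Fin (n + 1) → R) (G) :
    f (aF d x G) = aF d (fun i => f (x i)) G := by
  simp [aF, mon_map]

theorem F0expr_map (f : R →+* S) (d : ℕ) (Gs : Fin (r + 1) → Fin n → ZMod 2) (x : Fin (n + 1) → R)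
    (y : Fin (r + 1) → R) :
    f (F0expr d Gs x y) = F0expr d Gs (fun i => f (x i)) (fun j => f (y j)) := by
  simp [F0expr, cF_map, aF_map]

theorem F0_map (f : R →+* S) (d : ℕ) (Gs : Fin (r + 1) → Fin n → ZMod 2) :
    MvPolynomial.map f (F0 d Gs R) = F0 d Gs S := by
  simp [F0, F0expr_map]

theorem mon_single_cast (d : ℕ) (x : Fin (n + 1) → R) (i) :
    mon x (Pi.single i (d : ZMod 2)) = x i ^ (d % 2) := by
  rw [mon, Finset.prod_eq_single i]
  · simp [ZMod.val_natCast]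
  · intro j _ hj; simp [hj]
  · simp

theorem aF_eq (d : ℕ) (x : Fin (n + 1) → R) (G) :
    aF d x G * (mon x (evn n G * Pi.single 0 (d : ZMod 2))) ^ 2 =
      x 0 ^ (d % 2) * (xG x G * (x 1 ^ hF d G) ^ 2) := by
  have := mon_add x (evn n G) (Pi.single 0 (d : ZMod 2))
  rw [mon_single_cast] at this
  rw [aF, AF, xG]
  linear_combination (x 1 ^ hF d G) ^ 2 * this

theorem AF_card (d : ℕ) (hd : n + 3 ≤ d) (G : Fin n → ZMod 2) :
    ∑ i, (AF d G i).val + 2 * hF d G = d - 2 := by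
  have h1 : ∑ i, (AF d G i).val ≤ n + 1 := by
    calc ∑ i, (AF d G i).val ≤ ∑ i : Fin (n + 1), 1 :=
          Finset.sum_le_sum fun i _ => Nat.lt_succ_iff.1 (ZMod.val_lt _)
      _ = n + 1 := by simp
  have h2 : ((∑ i, (AF d G i).val : ℕ) : ZMod 2) = (d : ZMod 2) := by
    rw [Nat.cast_sum]
    simp [AF, Finset.sum_add_distrib, evn_sum]
  rw [ZMod.natCast_eq_natCast_iff] at h2
  have h3 : (∑ i, (AF d G i).val) % 2 = d % 2 := h2
  rw [hF]
  omega
end F0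

section prime
variable {n' r : ℕ}

/-- One of the coefficients is linear in the last variable and involves only one other variable. -/
theorem exists_special (d : ℕ) (hn : 1 ≤ n') : ∃ G : Fin (n' + 1) → ZMod 2, G (Fin.last n') = 1 ∧
    ∃ t : ℕ, ∀ {R : Type} [CommRing R] (x : Fin (n' + 2) → R),
      aF d x G = x (Fin.last _) * x 1 ^ t := by
  have h1l : (1 : Fin (n' + 2)) ≠ Fin.last _ := by
    intro h; have := congrArg Fin.val h; simp at this; omega
  have h0l : (0 : Fin (n' + 2)) ≠ Fin.last _ := by
    intro h; have := congrArg Fin.val h; simp at this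
  rcases Nat.even_or_odd d with hd | hd
  · have hd0 : (d : ZMod 2) = 0 := (ZMod.natCast_eq_zero_iff _ _).2 hd.two_dvd
    refine ⟨pairG 1 (Fin.last _), ?_, 1 + 2 * hF d (pairG 1 (Fin.last (n' + 1))), ?_⟩
    · have h := congrFun (evn_pairG (1 : Fin (n' + 2)) (Fin.last _)) (Fin.last n').succ
      rw [evn_succ] at h
      rw [h, Fin.succ_last]; simp [h1l.symm]
    · intro R _ x
      have := xG_pairG x h1l
      rw [xG] at this
      rw [aF, AF, hd0, Pi.single_zero, add_zero, this]; ring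
  · have hd0 : (d : ZMod 2) = 1 := by
      obtain ⟨t, rfl⟩ := hd
      push_cast; rw [show (2 : ZMod 2) = 0 from rfl]; ring
    refine ⟨pairG 0 (Fin.last _), ?_, 2 * hF d (pairG 0 (Fin.last (n' + 1))), ?_⟩
    · have h := congrFun (evn_pairG (0 : Fin (n' + 2)) (Fin.last _)) (Fin.last n').succ
      rw [evn_succ] at h
      rw [h, Fin.succ_last]; simp [h0l.symm]
    · intro R _ x
      rw [aF, AF, hd0, evn_pairG, add_comm (Pi.single 0 1), add_assoc, CharTwo.add_self_eq_zero,
        add_zero, mon_single]; ring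

theorem F0expr_unit {R : Type*} [CommRing R] {n : ℕ} (hn : 0 < n) (d : ℕ)
    (Gs : Fin (r + 1) → Fin n → ZMod 2) :
    F0expr d Gs (Pi.single 0 1 : Fin (n + 1) → R) 0 = 1 := by
  have : ∏ i, (Pi.single 0 1 : Fin (n + 1) → R) i = 0 :=
    Finset.prod_eq_zero (Finset.mem_univ (Fin.last n)) (by
      rw [Pi.single_eq_of_ne]; intro h; have := congrArg Fin.val h; simp at this; omega)
  simp [F0expr, cF, gfun, this]

theorem F0_prime {k : Type} [Field k] (hn : 1 ≤ n') (d : ℕ) (Gs : Fin (r + 1) → Fin (n' + 1) → ZMod 2)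
    (hinj : Function.Injective Gs) (hGs : ∀ G, G (Fin.last n') = 1 → ∃ j, Gs j = G) :
    Prime (F0 d Gs k) := by
  classical
  obtain ⟨G1, hG1, t, ht⟩ := exists_special (n' := n') d hn
  obtain ⟨j1, hj1⟩ := hGs G1 hG1
  let σ := Fin (n' + 2) ⊕ Fin (r + 1)
  let τ := {s : σ // s ≠ Sum.inr j1}
  let e : σ ≃ Option τ := (Equiv.optionSubtypeNe (Sum.inr j1 : σ)).symm
  let x' : Fin (n' + 2) → MvPolynomial τ k := fun i => X ⟨Sum.inl i, by simp⟩
  let y' : Fin (r + 1) → MvPolynomial τ k := fun j =>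
    if h : j = j1 then 0 else X ⟨Sum.inr j, fun h' => h (Sum.inr_injective h')⟩
  have hex : ∀ i, sepEquiv e k (X (Sum.inl i)) = Polynomial.C (x' i) := fun i => by
    have : e (Sum.inl i) = some ⟨Sum.inl i, by simp⟩ :=
      Equiv.optionSubtypeNe_symm_of_ne (by simp)
    simp [sepEquiv, this, x']
  have hey : ∀ j, j ≠ j1 → sepEquiv e k (X (Sum.inr j)) = Polynomial.C (y' j) := fun j hj => by
    have : e (Sum.inr j) = some ⟨Sum.inr j, fun h' => hj (Sum.inr_injective h')⟩ :=
      Equiv.optionSubtypeNe_symm_of_ne (fun h' => hj (Sum.inr_injective h'))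
    simp [sepEquiv, this, y', hj]
  have hey1 : sepEquiv e k (X (Sum.inr j1)) = Polynomial.X := by
    have : e (Sum.inr j1) = none := Equiv.optionSubtypeNe_symm_self _
    simp [sepEquiv, this]
  have hF : sepEquiv e k (F0 d Gs k) =
      Polynomial.C (x' (Fin.last _) * x' 1 ^ t) * Polynomial.X ^ 2 + Polynomial.C (F0expr d Gs x' y') := by
    rw [← ht, F0]
    have := F0expr_map (sepEquiv e k).toRingEquiv.toRingHom d Gs (fun i => X (Sum.inl i)) (fun j => X (Sum.inr j))
    refine Eq.trans this ?_
    rw [F0expr_map]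
    simp only [F0expr]
    rw [← Finset.add_sum_erase _ _ (Finset.mem_univ j1),
      ← Finset.add_sum_erase Finset.univ (fun j => aF d (fun i => Polynomial.C (x' i)) (Gs j) * Polynomial.C (y' j) ^ 2)
        (Finset.mem_univ j1)]
    have hx2 : (fun i => (sepEquiv e k).toRingEquiv.toRingHom (X (Sum.inl i))) = fun i => Polynomial.C (x' i) :=
      funext hex
    rw [hx2, aF_map]
    have hy2 : (sepEquiv e k).toRingEquiv.toRingHom (X (Sum.inr j1)) = Polynomial.X := hey1
    rw [hy2, hj1]
    have hy3 : y' j1 = 0 := by simp [y']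
    rw [hy3]
    have hs : ∑ j ∈ Finset.univ.erase j1, aF d (fun i => Polynomial.C (x' i)) (Gs j) *
        (sepEquiv e k).toRingEquiv.toRingHom (X (Sum.inr j)) ^ 2 =
        ∑ j ∈ Finset.univ.erase j1, aF d (fun i => Polynomial.C (x' i)) (Gs j) * Polynomial.C (y' j) ^ 2 := by
      refine Finset.sum_congr rfl fun j hj => ?_
      have : (sepEquiv e k).toRingEquiv.toRingHom (X (Sum.inr j)) = Polynomial.C (y' j) :=
        hey j (Finset.ne_of_mem_erase hj)
      rw [this]
    rw [hs]
    simp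
    ring
  -- evaluation at `x = (1, 0, …, 0)`, `y = 0`
  let ev : MvPolynomial τ k →+* k := eval fun s => Sum.elim (Pi.single 0 1 : Fin (n' + 2) → k) (fun _ => 0) s.1
  have hev : ev (F0expr d Gs x' y') = 1 := by
    rw [F0expr_map, ← F0expr_unit (R := k) (n := n' + 1) (by omega) d Gs]
    congr 1
    · funext i; simp [ev, x']
    · funext j; by_cases h : j = j1 <;> simp [ev, y', h]
  have hnd : ∀ i : Fin (n' + 2), i ≠ 0 → ¬ x' i ∣ F0expr d Gs x' y' := by
    rintro i hi ⟨u, hu⟩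
    have := congrArg ev hu
    rw [hev, map_mul] at this
    have h0 : ev (x' i) = 0 := by simp [ev, x', hi]
    rw [h0, zero_mul] at this
    exact one_ne_zero this
  have hl0 : Fin.last (n' + 1) ≠ 0 := by
    intro h; have := congrArg Fin.val h; simp at this
  have h1l : (1 : Fin (n' + 2)) ≠ Fin.last _ := by
    intro h; have := congrArg Fin.val h; simp at this; omega
  rw [← MulEquiv.prime_iff (sepEquiv e k), hF, ← irreducible_iff_prime]
  refine quad_irred (X_prime) (X_prime) ?_ (hnd _ hl0) (hnd _ (by simp)) t
  rw [X_dvd_X]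
  intro h
  exact h1l.symm (Sum.inl_injective (congrArg Subtype.val h))
end prime

section transfer
variable {n' r : ℕ} {k : Type} [Field k]

set_option maxHeartbeats 800000 in
/-- Over the coordinate ring of the special hypersurface the form `⟨x^G⟩` stays anisotropic. -/
theorem F0_aniso_aux [CharZero k] {E0 : Type} [Field E0] [Algebra (MvPolynomial (Fin (n' + 2)) k) E0]
    [IsFractionRing (MvPolynomial (Fin (n' + 2)) k) E0] (hn : 1 ≤ n') (d : ℕ) (hd : 2 ≤ d)
    (Gs : Fin (r + 1) → Fin (n' + 1) → ZMod 2)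
    (hinj : Function.Injective Gs) (hGs : ∀ G, G (Fin.last n') = 1 → ∃ j, Gs j = G)
    (v : (Fin (n' + 1) → ZMod 2) → MvPolynomial (Fin (n' + 2) ⊕ Fin (r + 1)) k)
    (hv : F0 d Gs k ∣ ∑ G, xG (fun i => X (Sum.inl i)) G * v G ^ 2) (G) : F0 d Gs k ∣ v G := by
  let P := MvPolynomial (Fin (n' + 2)) k
  let ι := algebraMap P E0
  have hι : Function.Injective ι := IsFractionRing.injective _ _
  have : CharZero E0 := charZero_of_injective_algebraMap hι
  let x : Fin (n' + 2) → E0 := fun i => ι (X i)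
  have hx : ∀ i, x i ≠ 0 := fun i => (map_ne_zero_iff ι hι).2 (X_ne_zero _)
  let m : Fin (r + 1) → E0 := fun j =>
    x 1 ^ hF d (Gs j) / mon x (evn _ (Gs j) * Pi.single 0 (d : ZMod 2))
  have hm : ∀ j, m j ≠ 0 := fun j => div_ne_zero (pow_ne_zero _ (hx 1)) (mon_ne_zero hx _)
  have ham : ∀ j, aF d x (Gs j) = x 0 ^ (d % 2) * xG x (Gs j) * m j ^ 2 := by
    intro j
    have h1 := aF_eq d x (Gs j)
    have h2 := mon_ne_zero hx (evn _ (Gs j) * Pi.single 0 (d : ZMod 2))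
    simp only [m]
    rw [div_pow, mul_div_assoc', eq_div_iff (pow_ne_zero _ h2), h1]; ring
  let Q := MvPolynomial (Fin (r + 1)) E0
  let Ψ : MvPolynomial (Fin (n' + 2) ⊕ Fin (r + 1)) k →+* Q :=
    eval₂Hom ((C.comp ι).comp C) (Sum.elim (fun i => C (x i)) fun j => C (m j)⁻¹ * X j)
  let F' : Q := C (gfun (d / 2) x) + ∑ j, C (xG x (Gs j)) * X j ^ 2
  have hΨl : ∀ i, Ψ (X (Sum.inl i)) = C (x i) := fun i => by simp [Ψ]
  have hΨr : ∀ i, Ψ (X (Sum.inr i)) = C (m i)⁻¹ * X i := fun i => by simp [Ψ]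
  have hΨF : Ψ (F0 d Gs k) = C (x 0 ^ (d % 2)) * F' := by
    rw [F0, F0expr_map, F0expr]
    simp only [hΨl, hΨr]
    rw [mul_add, Finset.mul_sum]
    refine congrArg₂ (· + ·) ?_ (Finset.sum_congr rfl fun j _ => ?_)
    · exact (cF_map (C : E0 →+* Q) d x).symm.trans (map_mul C _ _)
    · have h1 : aF d (fun i => (C (x i) : Q)) (Gs j) = C (x 0 ^ (d % 2)) * C (xG x (Gs j)) * C (m j) ^ 2 := by
        rw [← aF_map (C : E0 →+* Q), ham, map_mul, map_mul, map_pow (C : E0 →+* Q) (m j)]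
      have h2 : (C (m j) * C (m j)⁻¹ : Q) = 1 := by rw [← map_mul, mul_inv_cancel₀ (hm j), map_one]
      rw [h1]
      linear_combination (C (x 0 ^ (d % 2)) * C (xG x (Gs j)) * X j ^ 2 * (C (m j) * C (m j)⁻¹ + 1)) * h2
  have hΨinl : ∀ q : P, Ψ (rename Sum.inl q) = C (ι q) := by
    intro q
    have : (Ψ.comp (rename Sum.inl).toRingHom) = (C.comp ι : P →+* Q) := by
      apply MvPolynomial.ringHom_ext
      · intro a; simp [Ψ]
      · intro i; simp [Ψ, x]
    exact congrArg (fun f : P →+* Q => f q) this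
  have hΨinj : Function.Injective Ψ := by
    let Θ : Q →+* Q := eval₂Hom C fun j => C (m j) * X j
    let sw : MvPolynomial (Fin (n' + 2) ⊕ Fin (r + 1)) k →+* MvPolynomial (Fin (r + 1)) P :=
      eval₂Hom (C.comp C) (Sum.elim (fun i => C (X i)) X)
    let back : MvPolynomial (Fin (r + 1)) P →+* MvPolynomial (Fin (n' + 2) ⊕ Fin (r + 1)) k :=
      eval₂Hom (rename Sum.inl).toRingHom fun j => X (Sum.inr j)
    have hback : back.comp sw = RingHom.id _ := by
      apply MvPolynomial.ringHom_ext
      · intro a; simp [back, sw]; exact rename_C _ _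
      · rintro (i | j)
        · simp [back, sw]; exact rename_X _ _
        · simp [back, sw]
    have hsw : Function.Injective sw := Function.LeftInverse.injective (g := back) fun a =>
      congrArg (fun f : MvPolynomial (Fin (n' + 2) ⊕ Fin (r + 1)) k →+* _ => f a) hback
    have hcomp : Θ.comp Ψ = (MvPolynomial.map ι).comp sw := by
      apply MvPolynomial.ringHom_ext
      · intro a
        simp [Θ, Ψ, sw]; exact eval₂Hom_C _ _ _
      · rintro (i | j)
        · simp [Θ, Ψ, sw, x]; exact eval₂Hom_C _ _ _
        · have : C (m j)⁻¹ * (C (m j) * X j) = (X j : Q) := by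
            rw [← mul_assoc, ← map_mul, inv_mul_cancel₀ (hm j), map_one, one_mul]
          simp [Θ, Ψ, sw]
          refine Eq.trans (congrArg₂ (· * ·) (eval₂Hom_C _ _ _) (eval₂Hom_X' _ _ _)) this
    have : Function.Injective (Θ.comp Ψ) := by
      rw [hcomp]
      exact (MvPolynomial.map_injective _ hι).comp hsw
    exact Function.Injective.of_comp (f := Θ) (by simpa using this)
  have hden : ∀ a : E0, ∃ q : P, q ≠ 0 ∧ ∃ p : P, ι p = ι q * a := by
    intro a
    obtain ⟨p, q, hq, rfl⟩ := IsFractionRing.div_surjective (A := P) a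
    have hq0 := nonZeroDivisors.ne_zero hq
    exact ⟨q, hq0, p, by rw [mul_div_cancel₀]; exact (map_ne_zero_iff ι hι).2 hq0⟩
  -- every polynomial over the fraction field comes from below, up to a denominator
  have hsurj : ∀ t : Q, ∃ q : P, q ≠ 0 ∧ ∃ s, Ψ s = C (ι q) * t := by
    intro t
    induction t using MvPolynomial.induction_on with
    | C a =>
      obtain ⟨q, hq, p, hp⟩ := hden a
      exact ⟨q, hq, rename Sum.inl p, by rw [hΨinl, hp, map_mul]⟩
    | add t1 t2 h1 h2 =>
      obtain ⟨q1, hq1, s1, hs1⟩ := h1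
      obtain ⟨q2, hq2, s2, hs2⟩ := h2
      refine ⟨q1 * q2, mul_ne_zero hq1 hq2, rename Sum.inl q2 * s1 + rename Sum.inl q1 * s2, ?_⟩
      rw [map_add, map_mul, map_mul, hs1, hs2, hΨinl, hΨinl, map_mul, map_mul]; ring
    | mul_X t j h =>
      obtain ⟨q1, hq1, s1, hs1⟩ := h
      obtain ⟨q, hq, p, hp⟩ := hden (m j)
      refine ⟨q1 * q, mul_ne_zero hq1 hq, rename Sum.inl p * s1 * X (Sum.inr j), ?_⟩
      rw [map_mul, map_mul, hs1, hΨinl, hΨr, hp, map_mul, map_mul, map_mul]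
      have : C (m j) * (C (m j)⁻¹ * X j) = (X j : Q) := by
            rw [← mul_assoc, ← map_mul, mul_inv_cancel₀ (hm j), map_one, one_mul]
      linear_combination (C (ι q1) * C (ι q) * t) * this
  have hx0 : x 0 ^ (d % 2) ≠ 0 := pow_ne_zero _ (hx 0)
  have hunit : IsUnit (C (x 0 ^ (d % 2)) : Q) := (isUnit_iff_ne_zero.2 hx0).map C
  have hF'nu : ¬ IsUnit F' := by
    intro hu
    rw [isUnit_iff_eq_C_of_isReduced] at hu
    obtain ⟨a, -, ha⟩ := hu
    have h2 := congrArg (coeff (Finsupp.single 0 2)) ha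
    have hne : (0 : Fin (r + 1) →₀ ℕ) ≠ Finsupp.single 0 2 := by
      intro h; have := DFunLike.congr_fun h 0; simp at this
    rw [coeff_C, if_neg hne, coeff_add, coeff_C, if_neg hne, zero_add, coeff_sum,
      Finset.sum_eq_single 0] at h2
    · rw [coeff_C_mul, coeff_X_pow, if_pos rfl, mul_one] at h2
      exact mon_ne_zero hx _ h2
    · intro j _ hj
      rw [coeff_C_mul, coeff_X_pow, if_neg, mul_zero]
      intro h
      exact hj ((Finsupp.single_left_inj (by norm_num)).1 h)
    · simp
  have hprime := F0_prime (k := k) hn d Gs hinj hGs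
  have hnd : ∀ q : P, q ≠ 0 → ¬ F0 d Gs k ∣ rename Sum.inl q := by
    intro q hq h
    have h1 := map_dvd Ψ h
    rw [hΨF, hunit.mul_left_dvd, hΨinl] at h1
    exact hF'nu (isUnit_of_dvd_unit h1 ((isUnit_iff_ne_zero.2 ((map_ne_zero_iff ι hι).2 hq)).map C))
  have hdiv : F' ∣ ∑ G, C (xG x G) * Ψ (v G) ^ 2 := by
    have h1 := map_dvd Ψ hv
    rw [hΨF, hunit.mul_left_dvd, map_sum] at h1
    convert h1 using 1
    refine Finset.sum_congr rfl fun G _ => ?_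
    rw [map_mul, map_pow, xG_map, xG_map]
    simp only [hΨl]
  have han : Aniso (xG x) := by
    have := aniso_frac (K := E0) (aniso_xG (k := k) (n' + 1))
    simpa only [xG_map] using this
  have hg : ∀ z : (Fin (n' + 1) → ZMod 2) → E0, (∀ j, z (Gs j) = 0) →
      ∑ G, xG x G * z G ^ 2 ≠ gfun (d / 2) x := by
    intro z hz
    refine g_not_rep_frac (k := k) (by omega) z fun G hG => ?_
    obtain ⟨j, rfl⟩ := hGs G (by
      generalize G (Fin.last n') = b at hG
      revert b; decide)
    exact hz j
  obtain ⟨t, ht⟩ := nv_field hx han Gs hinj _ hg (fun G => Ψ (v G)) hdiv G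
  obtain ⟨q, hq, s, hs⟩ := hsurj t
  have hfin : rename Sum.inl (q * X 0 ^ (d % 2)) * v G = F0 d Gs k * s := by
    apply hΨinj
    rw [map_mul Ψ, map_mul Ψ, hΨF, hs, hΨinl, map_mul ι, map_pow ι, map_mul (C : E0 →+* Q)]
    rw [show Ψ (v G) = F' * t from ht]
    ring
  exact (hprime.dvd_or_dvd ⟨s, hfin⟩).resolve_left
    (hnd _ (mul_ne_zero hq (pow_ne_zero _ (X_ne_zero _))))

theorem F0_aniso [CharZero k] (hn : 1 ≤ n') (d : ℕ) (hd : 2 ≤ d)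
    (Gs : Fin (r + 1) → Fin (n' + 1) → ZMod 2)
    (hinj : Function.Injective Gs) (hGs : ∀ G, G (Fin.last n') = 1 → ∃ j, Gs j = G)
    (v : (Fin (n' + 1) → ZMod 2) → MvPolynomial (Fin (n' + 2) ⊕ Fin (r + 1)) k)
    (hv : F0 d Gs k ∣ ∑ G, xG (fun i => X (Sum.inl i)) G * v G ^ 2) (G) : F0 d Gs k ∣ v G :=
  F0_aniso_aux (E0 := FractionRing (MvPolynomial (Fin (n' + 2)) k)) hn d hd Gs hinj hGs v hv G

/-- The form `⟨x^G⟩` is anisotropic over the coordinate ring of the special hypersurface. -/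
theorem F0_quot_aniso [CharZero k] (hn : 1 ≤ n') (d : ℕ) (hd : 2 ≤ d)
    (Gs : Fin (r + 1) → Fin (n' + 1) → ZMod 2)
    (hinj : Function.Injective Gs) (hGs : ∀ G, G (Fin.last n') = 1 → ∃ j, Gs j = G) :
    Aniso (xG fun i => Ideal.Quotient.mk (Ideal.span {F0 d Gs k}) (X (Sum.inl i))) := by
  intro z hz
  choose v hv using fun G => Ideal.Quotient.mk_surjective (z G)
  funext G
  rw [← hv G]
  refine Ideal.Quotient.eq_zero_iff_mem.2 (Ideal.mem_span_singleton.2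
    (F0_aniso hn d hd Gs hinj hGs v ?_ G))
  rw [← Ideal.mem_span_singleton, ← Ideal.Quotient.eq_zero_iff_mem, map_sum, ← hz]
  refine Finset.sum_congr rfl fun G _ => ?_
  rw [map_mul, map_pow, xG_map, hv]
end transfer

/-! ### Rational paths on the hypersurface -/

section Ft
variable {n r : ℕ} {A : Type*} [CommRing A] {R S : Type*} [CommRing R] [CommRing S]

/-- The monomials allowed in degree `d` and multiplicity `d - 2` along `{x = 0}`. -/
def Allowed (d : ℕ) (m : (Fin (n + 1) ⊕ Fin (r + 1)) →₀ ℕ) : Prop :=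
  (∑ i, m (Sum.inl i)) + (∑ j, m (Sum.inr j)) = d ∧ d - 2 ≤ ∑ i, m (Sum.inl i)

/-- Homogenization in the `y`-variables: the value at `(x, Y, Z)` of the polynomial obtained from `F`
(of degree at most two in `y`) by inserting `Z` to make it a quadratic form in `(Y, Z)`. -/
def Ft (φ : A →+* R) (F : MvPolynomial (Fin (n + 1) ⊕ Fin (r + 1)) A) (x : Fin (n + 1) → R)
    (Y : Fin (r + 1) → R) (Z : R) : R :=
  ∑ m ∈ F.support, φ (coeff m F) * ((∏ i, x i ^ m (Sum.inl i)) * (∏ j, Y j ^ m (Sum.inr j)) *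
    Z ^ (2 - ∑ j, m (Sum.inr j)))

theorem Ft_eq (φ : A →+* R) (F : MvPolynomial (Fin (n + 1) ⊕ Fin (r + 1)) A) (x : Fin (n + 1) → R)
    (Y : Fin (r + 1) → R) (Z : R) (T : Finset _) (hT : F.support ⊆ T) :
    Ft φ F x Y Z = ∑ m ∈ T, φ (coeff m F) * ((∏ i, x i ^ m (Sum.inl i)) *
      (∏ j, Y j ^ m (Sum.inr j)) * Z ^ (2 - ∑ j, m (Sum.inr j))) := by
  refine Finset.sum_subset hT fun m _ hm => ?_
  rw [notMem_support_iff.1 hm]; simp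

theorem Ft_add (φ : A →+* R) (F G : MvPolynomial (Fin (n + 1) ⊕ Fin (r + 1)) A) (x : Fin (n + 1) → R)
    (Y : Fin (r + 1) → R) (Z : R) : Ft φ (F + G) x Y Z = Ft φ F x Y Z + Ft φ G x Y Z := by
  classical
  rw [Ft_eq φ (F + G) x Y Z (F.support ∪ G.support) support_add,
    Ft_eq φ F x Y Z (F.support ∪ G.support) Finset.subset_union_left,
    Ft_eq φ G x Y Z (F.support ∪ G.support) Finset.subset_union_right, ← Finset.sum_add_distrib]
  refine Finset.sum_congr rfl fun m _ => ?_
  rw [coeff_add, map_add, add_mul]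

theorem Ft_zero (φ : A →+* R) (x : Fin (n + 1) → R)
    (Y : Fin (r + 1) → R) (Z : R) : Ft φ 0 x Y Z = 0 := by
  simp [Ft]

theorem Ft_sum {ι : Type*} (s : Finset ι) (φ : A →+* R)
    (F : ι → MvPolynomial (Fin (n + 1) ⊕ Fin (r + 1)) A) (x : Fin (n + 1) → R)
    (Y : Fin (r + 1) → R) (Z : R) : Ft φ (∑ i ∈ s, F i) x Y Z = ∑ i ∈ s, Ft φ (F i) x Y Z := by
  classical
  induction s using Finset.induction_on with
  | empty => simp [Ft_zero]
  | insert a s ha ih => rw [Finset.sum_insert ha, Ft_add, ih, Finset.sum_insert ha]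

theorem Ft_monomial (φ : A →+* R) (m : (Fin (n + 1) ⊕ Fin (r + 1)) →₀ ℕ) (a : A)
    (x : Fin (n + 1) → R) (Y : Fin (r + 1) → R) (Z : R) :
    Ft φ (monomial m a) x Y Z = φ a * ((∏ i, x i ^ m (Sum.inl i)) *
      (∏ j, Y j ^ m (Sum.inr j)) * Z ^ (2 - ∑ j, m (Sum.inr j))) := by
  classical
  rw [Ft_eq φ _ x Y Z {m} support_monomial_subset, Finset.sum_singleton, coeff_monomial, if_pos rfl]

theorem Ft_nat (f : R →+* S) (φ : A →+* R) (F : MvPolynomial (Fin (n + 1) ⊕ Fin (r + 1)) A)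
    (x : Fin (n + 1) → R) (Y : Fin (r + 1) → R) (Z : R) :
    f (Ft φ F x Y Z) = Ft (f.comp φ) F (fun i => f (x i)) (fun j => f (Y j)) (f Z) := by
  simp [Ft]

theorem Ft_map {B : Type*} [CommRing B] (ψ : A →+* B) (φ : B →+* R)
    (F : MvPolynomial (Fin (n + 1) ⊕ Fin (r + 1)) A)
    (x : Fin (n + 1) → R) (Y : Fin (r + 1) → R) (Z : R) :
    Ft φ (MvPolynomial.map ψ F) x Y Z = Ft (φ.comp ψ) F x Y Z := by
  rw [Ft_eq φ _ x Y Z F.support (support_map_subset _ _), Ft]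
  simp [coeff_map]

theorem Ft_one (φ : A →+* R) (F : MvPolynomial (Fin (n + 1) ⊕ Fin (r + 1)) A)
    (x : Fin (n + 1) → R) (Y : Fin (r + 1) → R) :
    Ft φ F x Y 1 = eval₂ φ (Sum.elim x Y) F := by
  rw [eval₂_eq', Ft]
  simp

theorem Ft_smul (φ : A →+* R) (F : MvPolynomial (Fin (n + 1) ⊕ Fin (r + 1)) A) {d : ℕ}
    (hF : ∀ m, coeff m F ≠ 0 → Allowed d m) (hd : 2 ≤ d)
    (x : Fin (n + 1) → R) (Y : Fin (r + 1) → R) (Z l u : R) :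
    Ft φ F (fun i => l * x i) (fun j => l * u * Y j) (u * Z) = l ^ d * u ^ 2 * Ft φ F x Y Z := by
  rw [Ft, Ft, Finset.mul_sum]
  refine Finset.sum_congr rfl fun m hm => ?_
  obtain ⟨h1, h2⟩ := hF m (mem_support_iff.1 hm)
  have h3 : u ^ 2 = u ^ (∑ j, m (Sum.inr j)) * u ^ (2 - ∑ j, m (Sum.inr j)) := by
    rw [← pow_add]; congr 1; omega
  simp only [mul_pow, Finset.prod_mul_distrib, Finset.prod_pow_eq_pow_sum]
  rw [h3, ← h1, pow_add]
  ring

theorem Ft_inl (φ : A →+* R) (p : MvPolynomial (Fin (n + 1)) A)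
    (x : Fin (n + 1) → R) (Y : Fin (r + 1) → R) (Z : R) :
    Ft φ (rename Sum.inl p) x Y Z = eval₂ φ x p * Z ^ 2 := by
  classical
  induction p using MvPolynomial.induction_on' with
  | monomial u a =>
    rw [rename_monomial, Ft_monomial, eval₂_monomial]
    have h1 : ∀ i, (u.mapDomain (Sum.inl : _ → Fin (n + 1) ⊕ Fin (r + 1))) (Sum.inl i) = u i :=
      fun i => Finsupp.mapDomain_apply Sum.inl_injective _ _
    have h2 : ∀ j, (u.mapDomain (Sum.inl : _ → Fin (n + 1) ⊕ Fin (r + 1))) (Sum.inr j) = 0 :=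
      fun i => Finsupp.mapDomain_notin_range _ _ (by simp)
    rw [Finsupp.prod_fintype _ _ (by simp)]
    simp [h1, h2]; ring
  | add p q hp hq => rw [map_add, Ft_add, hp, hq, eval₂_add, add_mul]

theorem Ft_inr (φ : A →+* R) (p : MvPolynomial (Fin (n + 1)) A) (j : Fin (r + 1))
    (x : Fin (n + 1) → R) (Y : Fin (r + 1) → R) (Z : R) :
    Ft φ (rename Sum.inl p * X (Sum.inr j) ^ 2) x Y Z = eval₂ φ x p * Y j ^ 2 := by
  classical
  induction p using MvPolynomial.induction_on' with
  | monomial u a =>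
    rw [rename_monomial, X_pow_eq_monomial, monomial_mul, mul_one, Ft_monomial, eval₂_monomial]
    have h1 : ∀ i, (u.mapDomain (Sum.inl : _ → Fin (n + 1) ⊕ Fin (r + 1))) (Sum.inl i) = u i :=
      fun i => Finsupp.mapDomain_apply Sum.inl_injective _ _
    have h2 : ∀ j, (u.mapDomain (Sum.inl : _ → Fin (n + 1) ⊕ Fin (r + 1))) (Sum.inr j) = 0 :=
      fun i => Finsupp.mapDomain_notin_range _ _ (by simp)
    have h3 : ∀ i, (Finsupp.single (Sum.inr j : Fin (n + 1) ⊕ Fin (r + 1)) 2) (Sum.inr i) =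
      if i = j then 2 else 0 := fun i => by
        rw [Finsupp.single_apply]; simp [eq_comm]
    rw [Finsupp.prod_fintype _ _ (by simp)]
    simp only [Finsupp.add_apply, h1, h2, h3, zero_add]
    simp [mul_assoc]
  | add p q hp hq => rw [map_add, add_mul, Ft_add, hp, hq, eval₂_add, add_mul]

theorem Ft_F0 (φ : A →+* R) (d : ℕ) (Gs : Fin (r + 1) → Fin n → ZMod 2)
    (x : Fin (n + 1) → R) (Y : Fin (r + 1) → R) (Z : R) :
    Ft φ (F0 d Gs A) x Y Z = cF d x * Z ^ 2 + ∑ j, aF d x (Gs j) * Y j ^ 2 := by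
  have hc : cF d (fun i => (X (Sum.inl i) : MvPolynomial (Fin (n + 1) ⊕ Fin (r + 1)) A)) =
      rename Sum.inl (cF d (X : Fin (n + 1) → MvPolynomial (Fin (n + 1)) A)) := by
    have := cF_map (rename Sum.inl : MvPolynomial (Fin (n + 1)) A →ₐ[A]
      MvPolynomial (Fin (n + 1) ⊕ Fin (r + 1)) A).toRingHom d X
    simpa using this.symm
  have ha : ∀ G, aF d (fun i => (X (Sum.inl i) : MvPolynomial (Fin (n + 1) ⊕ Fin (r + 1)) A)) G =
      rename Sum.inl (aF d (X : Fin (n + 1) → MvPolynomial (Fin (n + 1)) A) G) := by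
    intro G
    have := aF_map (rename Sum.inl : MvPolynomial (Fin (n + 1)) A →ₐ[A]
      MvPolynomial (Fin (n + 1) ⊕ Fin (r + 1)) A).toRingHom d X G
    simpa using this.symm
  have hc' : eval₂ φ x (cF d X) = cF d x := by
    have := cF_map (eval₂Hom φ x) d X
    simpa using this
  have ha' : ∀ G, eval₂ φ x (aF d X G) = aF d x G := by
    intro G
    have := aF_map (eval₂Hom φ x) d X G
    simpa using this
  rw [F0, F0expr, Ft_add, Ft_sum, hc, Ft_inl, hc']
  simp only [ha, Ft_inr, ha']

/-- Clearing square factors: a zero of the special form gives one of `⟨g, x^{G_j}⟩`. -/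
theorem RelG_of_Ft [IsDomain R] (d : ℕ) (Gs : Fin (r + 1) → Fin n → ZMod 2)
    (x : Fin (n + 1) → R) (hx : ∀ i, x i ≠ 0) (Y : Fin (r + 1) → R) (Z : R) (hYZ : Z ≠ 0 ∨ Y ≠ 0)
    (h : cF d x * Z ^ 2 + ∑ j, aF d x (Gs j) * Y j ^ 2 = 0) : RelG (d / 2) Gs x := by
  classical
  let w : Fin (r + 1) → R := fun j => mon x (evn n (Gs j) * Pi.single 0 (d : ZMod 2))
  have hw : ∀ j, w j ≠ 0 := fun j => mon_ne_zero hx _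
  let W := ∏ j, w j
  have hW : W ≠ 0 := Finset.prod_ne_zero_iff.2 fun j _ => hw j
  let W' : Fin (r + 1) → R := fun j => ∏ i ∈ Finset.univ.erase j, w i
  have hW' : ∀ j, W' j ≠ 0 := fun j => Finset.prod_ne_zero_iff.2 fun j _ => hw j
  have hWW : ∀ j, W = w j * W' j := fun j => (Finset.mul_prod_erase _ _ (Finset.mem_univ j)).symm
  refine ⟨W * Z, fun j => x 1 ^ hF d (Gs j) * W' j * Y j, ?_, ?_⟩
  · rcases hYZ with hZ | hY
    · exact Or.inl (mul_ne_zero hW hZ)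
    · obtain ⟨j, hj⟩ := Function.ne_iff.1 hY
      exact Or.inr (Function.ne_iff.2 ⟨j, mul_ne_zero (mul_ne_zero (pow_ne_zero _ (hx 1)) (hW' j)) hj⟩)
  · refine (mul_eq_zero.1 ?_).resolve_left (pow_ne_zero (d % 2) (hx 0))
    have h2 : W ^ 2 * (cF d x * Z ^ 2 + ∑ j, aF d x (Gs j) * Y j ^ 2) = 0 := by rw [h, mul_zero]
    rw [← h2, mul_add, mul_add, Finset.mul_sum, Finset.mul_sum, cF]
    refine congrArg₂ (· + ·) (by ring) (Finset.sum_congr rfl fun j _ => ?_)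
    have h3 := aF_eq d x (Gs j)
    rw [hWW j]
    linear_combination -(W' j ^ 2 * Y j ^ 2) * h3
end Ft

/-- A rational path on the hypersurface over a valued field specializes, after rescaling its
`x`-coordinates, to an isotropy relation for the special form over the residue field. -/
theorem path_rel {n r d : ℕ} (hd : 2 ≤ d) {L O : Type} [Field L] (V : ValuationSubring L) [CommRing O]
    (oV : O →+* V) (F : MvPolynomial (Fin (n + 1) ⊕ Fin (r + 1)) O)
    (hA : ∀ m, coeff m F ≠ 0 → Allowed d m) (Gs : Fin (r + 1) → Fin n → ZMod 2)
    (hF : MvPolynomial.map ((IsLocalRing.residue V).comp oV) F = F0 d Gs (IsLocalRing.ResidueField V))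
    (x : Fin (n + 1) → Polynomial L) (y : Fin (r + 1) → Polynomial L)
    (hxy : eval₂ (Polynomial.C.comp (V.subtype.comp oV)) (Sum.elim x y) F = 0)
    {l : L} (hl : l ≠ 0) (b : Fin (n + 1) → Polynomial V)
    (hb : ∀ i, Polynomial.mapRingHom V.subtype (b i) = Polynomial.C l * x i)
    (hb0 : ∀ i, Polynomial.mapRingHom (IsLocalRing.residue V) (b i) ≠ 0) :
    RelG (d / 2) Gs fun i => Polynomial.mapRingHom (IsLocalRing.residue V) (b i) := by
  obtain ⟨c, hc, a, ha, ha0⟩ := (isRed_val V).poly.prim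
    (fun o : Option (Fin (r + 1)) => o.elim 1 fun j => Polynomial.C l * y j)
    (Function.ne_iff.2 ⟨none, one_ne_zero⟩)
  have hz : Ft ((Polynomial.C).comp oV) F b (fun j => a (some j)) (a none) = 0 := by
    have hinj : Function.Injective (Polynomial.mapRingHom V.subtype) :=
      Polynomial.map_injective _ V.subtype_injective
    refine hinj ?_
    rw [Ft_nat, map_zero]
    have e1 : (fun i => Polynomial.mapRingHom V.subtype (b i)) = fun i => Polynomial.C l * x i :=
      funext hb
    have e2 : (fun j => Polynomial.mapRingHom V.subtype (a (some j))) =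
        fun j => Polynomial.C l * Polynomial.C c * y j := by
      funext j
      rw [ha]
      show Polynomial.C c * (Polynomial.C l * y j) = _
      ring
    have e3 : Polynomial.mapRingHom V.subtype (a none) = Polynomial.C c * 1 := ha none
    have e4 : (Polynomial.mapRingHom V.subtype).comp (Polynomial.C.comp oV) =
        Polynomial.C.comp (V.subtype.comp oV) := by
      ext o; simp
    rw [e1, e2, e3, e4, Ft_smul _ F hA hd, Ft_one, hxy, mul_zero]
  have hz2 := congrArg (Polynomial.mapRingHom (IsLocalRing.residue V)) hz
  rw [Ft_nat, map_zero] at hz2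
  have e5 : (Polynomial.mapRingHom (IsLocalRing.residue V)).comp (Polynomial.C.comp oV) =
      Polynomial.C.comp ((IsLocalRing.residue V).comp oV) := by
    ext o; simp
  rw [e5, ← Ft_map, hF, Ft_F0] at hz2
  refine RelG_of_Ft d Gs _ hb0 _ _ ?_ hz2
  obtain ⟨i, hi⟩ := ha0
  cases i with
  | none => exact Or.inl hi
  | some j => exact Or.inr (Function.ne_iff.2 ⟨j, hi⟩)

/-! ### Descent along the Newton polygon -/

/-- Descent along the Newton polygon of `N`: a property of indices which passes from the right to the
left end of each edge passes from the top index `D` to `0`. -/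
theorem newton_descent {Γ : Type*} [LinearOrderedCommGroupWithZero Γ] (N : ℕ → Γ) (S : Set Γ)
    (T : ℕ → Prop) (D : ℕ)
    (hroot : ∀ i j, i < j → N j ≠ 0 → ∃ c ∈ S, c ^ (j - i) * N j = N i)
    (hstep : ∀ c ∈ S, c ≠ 0 → ∀ i j, i < j → N j ≠ 0 → (∀ l, N l * c ^ l ≤ N j * c ^ j) →
      (∀ l, j < l → N l * c ^ l < N j * c ^ j) → N i * c ^ i = N j * c ^ j →
      (∀ l, l < i → N l * c ^ l < N j * c ^ j) → T j → T i)
    (hD : N D ≠ 0) (hD' : ∀ l, D < l → N l = 0) (h0 : N 0 ≠ 0) (hT : T D) : T 0 := by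
  classical
  have main : ∀ j, N j ≠ 0 → (∀ c, c ≠ 0 → (∃ i < j, N i * c ^ i = N j * c ^ j) →
      ∀ l, j < l → N l * c ^ l < N j * c ^ j) → T j → T 0 := by
    intro j
    induction j using Nat.strong_induction_on with
    | _ j ih =>
      intro hj hinv hTj
      rcases Nat.eq_zero_or_pos j with rfl | hpos
      · exact hTj
      choose! cr hcS hcr using fun i (hi : i < j) => hroot i j hi hj
      obtain ⟨i0, hi0, hmax⟩ := Finset.exists_max_image (Finset.range j) cr ⟨0, by simpa using hpos⟩
      rw [Finset.mem_range] at hi0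
      set c := cr i0 with hc
      have hc0 : c ≠ 0 := by
        intro h
        have h1 : cr 0 ≤ 0 := h ▸ hmax 0 (by simpa using hpos)
        have h2 : cr 0 = 0 := le_zero_iff.1 h1
        have := hcr 0 hpos
        rw [h2, zero_pow (by omega), zero_mul] at this
        exact h0 this.symm
      have hcj : ∀ i, i < j → N j * c ^ j = c ^ (j - i) * N j * c ^ i := by
        intro i hi
        rw [mul_comm (c ^ (j - i)), mul_assoc, ← pow_add]
        congr 2; omega
      have hle : ∀ i, i < j → N i * c ^ i ≤ N j * c ^ j := by
        intro i hi
        rw [hcj i hi, ← hcr i hi]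
        gcongr
        exact hmax i (by simpa using hi)
      have heq : N i0 * c ^ i0 = N j * c ^ j := by
        rw [hcj i0 hi0, ← hcr i0 hi0]
      have hgt := hinv c hc0 ⟨i0, hi0, heq⟩
      have hex : ∃ i, N i * c ^ i = N j * c ^ j := ⟨i0, heq⟩
      set i := Nat.find hex with hidef
      have hi : N i * c ^ i = N j * c ^ j := Nat.find_spec hex
      have hij : i < j := lt_of_le_of_lt (Nat.find_min' hex heq) hi0
      have hlt : ∀ l, l < i → N l * c ^ l < N j * c ^ j := fun l hl =>
        lt_of_le_of_ne (hle l (hl.trans hij)) (Nat.find_min hex hl)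
      have hall : ∀ l, N l * c ^ l ≤ N j * c ^ j := by
        intro l
        rcases lt_trichotomy l j with h | h | h
        · exact hle l h
        · rw [h]
        · exact (hgt l h).le
      have hTi := hstep c (hcS i0 hi0) hc0 i j hij hj hall hgt hi hlt hTj
      have hNi : N i ≠ 0 := by
        intro h
        rw [h, zero_mul] at hi
        exact mul_ne_zero hj (pow_ne_zero _ hc0) hi.symm
      refine ih i hij hNi ?_ hTi
      rintro c' hc' ⟨i', hi', he'⟩ l hl
      have hcc : c' < c := by
        by_contra hcon
        push Not at hcon
        have h1 := hlt i' hi'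
        rw [← hi] at h1
        have e1 : c ^ i = c ^ (i - i') * c ^ i' := by rw [← pow_add]; congr 1; omega
        have e2 : c' ^ i = c' ^ (i - i') * c' ^ i' := by rw [← pow_add]; congr 1; omega
        rw [e1, ← mul_assoc] at h1
        rw [e2, ← mul_assoc] at he'
        have h2 := lt_of_mul_lt_mul_right h1 zero_le
        rw [mul_left_injective₀ (pow_ne_zero _ hc') he'] at h2
        exact absurd h2 (not_lt.2 (by gcongr))
      rcases eq_or_ne (N l) 0 with hNl | hNl
      · rw [hNl, zero_mul]
        exact zero_lt_iff.2 (mul_ne_zero hNi (pow_ne_zero _ hc'))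
      · have h1 := hall l
        rw [← hi] at h1
        have e1 : c ^ l = c ^ (l - i) * c ^ i := by rw [← pow_add]; congr 1; omega
        have e2 : c' ^ l = c' ^ (l - i) * c' ^ i := by rw [← pow_add]; congr 1; omega
        rw [e1, ← mul_assoc] at h1
        rw [e2, ← mul_assoc]
        have h2 := le_of_mul_le_mul_right h1 (zero_lt_iff.2 (pow_ne_zero _ hc0))
        refine mul_lt_mul_of_pos_right (lt_of_lt_of_le ?_ h2) (zero_lt_iff.2 (pow_ne_zero _ hc'))
        refine mul_lt_mul_of_pos_left ?_ (zero_lt_iff.2 hNl)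
        exact pow_lt_pow_left₀ hcc zero_le (by omega)
  refine main D hD (fun c hc _ l hl => ?_) hT
  rw [hD' l hl, zero_mul]
  exact zero_lt_iff.2 (mul_ne_zero hD (pow_ne_zero _ hc))

section TT
variable {n : ℕ} {L : Type} [Field L] (V : ValuationSubring L)

/-- The point of projective space with coordinates `w` specializes, in the residue field of `V`,
to a point whose Pfister form is isotropic. -/
def TT (w : Fin (n + 1) → L) : Prop :=
  ∃ b : Fin (n + 1) → V, (∃ μ : L, μ ≠ 0 ∧ ∀ i, (b i : L) = μ * w i) ∧
    (∃ i, IsLocalRing.residue V (b i) ≠ 0) ∧ Tiso fun i => IsLocalRing.residue V (b i)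

theorem TT.tiso {V : ValuationSubring L} {w : Fin (n + 1) → L} (h : TT V w) (b : Fin (n + 1) → V) (μ : L) (hμ : μ ≠ 0)
    (hb : ∀ i, (b i : L) = μ * w i) (hb0 : ∃ i, IsLocalRing.residue V (b i) ≠ 0) :
    Tiso fun i => IsLocalRing.residue V (b i) := by
  obtain ⟨b', ⟨μ', hμ', hb'⟩, ⟨i0, hi0⟩, hT⟩ := h
  obtain ⟨i1, hi1⟩ := hb0
  obtain ⟨w1, hw1⟩ := ((IsLocalRing.residue_ne_zero_iff_isUnit _).1 hi1).exists_right_inv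
  set δ : V := b' i1 * w1 with hδ
  have hw1' : (b i1 : L) * (w1 : L) = 1 := congrArg Subtype.val hw1
  have hδ' : ∀ i, b' i = δ * b i := by
    intro i
    refine Subtype.ext ?_
    show (b' i : L) = (b' i1 : L) * (w1 : L) * (b i : L)
    rw [hb i1] at hw1'
    rw [hb', hb', hb]
    linear_combination (-μ' * w i) * hw1'
  have hδ0 : IsLocalRing.residue V δ ≠ 0 := by
    intro h
    apply hi0
    rw [hδ', map_mul, h, zero_mul]
  refine Tiso_unsmul hδ0 ?_
  simpa only [hδ', map_mul] using hT

theorem residue_eq_zero_iff_val (b : V) : IsLocalRing.residue V b = 0 ↔ V.valuation (b : L) < 1 := by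
  rw [IsLocalRing.residue_eq_zero_iff, ValuationSubring.valuation_lt_one_iff]

/-- Along a rational path on the hypersurface, isotropy of the specialized Pfister form
propagates from the point at infinity to the origin. -/
theorem path_descent {K : Type} [Field K] [IsAlgClosed K] (f : K →+* L)
    (hscale : ∀ z : L, z ≠ 0 → ∃ c : K, c ≠ 0 ∧ V.valuation z = V.valuation (f c))
    {r d : ℕ} (hn : 0 < n) (hd : n + 3 ≤ d) {O : Type} [CommRing O]
    (oV : O →+* V) (F : MvPolynomial (Fin (n + 1) ⊕ Fin (r + 1)) O)
    (hA : ∀ m, coeff m F ≠ 0 → Allowed d m) (Gs : Fin (r + 1) → Fin n → ZMod 2)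
    (hinj : Function.Injective Gs) (hG0 : ∀ j, Gs j ≠ 0)
    (hF : MvPolynomial.map ((IsLocalRing.residue V).comp oV) F = F0 d Gs (IsLocalRing.ResidueField V))
    (x : Fin (n + 1) → Polynomial L) (y : Fin (r + 1) → Polynomial L)
    (hxy : eval₂ (Polynomial.C.comp (V.subtype.comp oV)) (Sum.elim x y) F = 0)
    (D : ℕ) (hD : ∀ i, (x i).natDegree ≤ D) (hD' : ∃ i, (x i).coeff D ≠ 0)
    (h0 : ∃ i, (x i).coeff 0 ≠ 0) (hT : TT V fun i => (x i).coeff D) :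
    TT V fun i => (x i).coeff 0 := by
  classical
  have hmax : ∀ j, ∃ c : K, (∀ i, V.valuation ((x i).coeff j) ≤ V.valuation (f c)) ∧
      ∃ i, V.valuation ((x i).coeff j) = V.valuation (f c) := by
    intro j
    obtain ⟨i0, -, hi0⟩ := Finset.exists_max_image Finset.univ
      (fun i => V.valuation ((x i).coeff j)) Finset.univ_nonempty
    rcases eq_or_ne ((x i0).coeff j) 0 with h | h
    · refine ⟨0, fun i => ?_, i0, by rw [h, map_zero f]⟩
      have := hi0 i (Finset.mem_univ i)
      rwa [h, map_zero, ← map_zero V.valuation, ← map_zero f] at this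
    · obtain ⟨c, hc, he⟩ := hscale _ h
      exact ⟨c, fun i => he ▸ hi0 i (Finset.mem_univ i), i0, he⟩
  choose m hm hm' using hmax
  have hmne : ∀ j, (∃ i, (x i).coeff j ≠ 0) → V.valuation (f (m j)) ≠ 0 := by
    rintro j ⟨i, hi⟩ h
    have := hm j i
    rw [h, le_zero_iff, map_eq_zero] at this
    exact hi this
  refine newton_descent (fun j => V.valuation (f (m j))) (Set.range fun c => V.valuation (f c))
    (fun j => TT V fun i => (x i).coeff j) D ?_ ?_ (hmne D hD') ?_ (hmne 0 h0) hT
  · intro i j hij hj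
    obtain ⟨c, hc⟩ := IsAlgClosed.exists_pow_nat_eq (m i / m j) (n := j - i) (by omega)
    have hmj : m j ≠ 0 := by rintro h; simp [h] at hj
    refine ⟨_, ⟨c, rfl⟩, ?_⟩
    show V.valuation (f c) ^ (j - i) * V.valuation (f (m j)) = V.valuation (f (m i))
    rw [← map_pow, ← map_pow, hc, ← map_mul, ← map_mul, div_mul_cancel₀ _ hmj]
  · rintro _ ⟨c, rfl⟩ hc0 i j hij hj hall hgt heq hlt hTj
    replace hc0 : V.valuation (f c) ≠ 0 := hc0
    have hfc : f c ≠ 0 := by rintro h; simp [h] at hc0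
    have hfm : f (m j) ≠ 0 := by rintro h; simp [h] at hj
    set l : L := (f (m j) * f c ^ j)⁻¹ with hl
    have hl0 : l ≠ 0 := inv_ne_zero (mul_ne_zero hfm (pow_ne_zero _ hfc))
    have hvl : V.valuation l = (V.valuation (f (m j)) * V.valuation (f c) ^ j)⁻¹ := by
      rw [hl, map_inv₀, map_mul, map_pow]
    have hpos : 0 < V.valuation (f (m j)) * V.valuation (f c) ^ j :=
      zero_lt_iff.2 (mul_ne_zero hj (pow_ne_zero _ hc0))
    have hval : ∀ k i, V.valuation (l * (f c ^ k * (x i).coeff k)) =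
        V.valuation ((x i).coeff k) * V.valuation (f c) ^ k /
          (V.valuation (f (m j)) * V.valuation (f c) ^ j) := by
      intro k i
      rw [map_mul, hvl, map_mul, map_pow, div_eq_mul_inv]
      ac_rfl
    have hvle : ∀ k i, V.valuation ((x i).coeff k) * V.valuation (f c) ^ k ≤
        V.valuation (f (m k)) * V.valuation (f c) ^ k := fun k i => by
      gcongr; exact hm k i
    have hmem : ∀ k i, l * (f c ^ k * (x i).coeff k) ∈ V := by
      intro k i
      rw [← ValuationSubring.valuation_le_one_iff, hval]
      exact div_le_one_of_le₀ ((hvle k i).trans (hall k)) hpos.le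
    let q : Polynomial L := Polynomial.C (f c) * Polynomial.X
    let x' : Fin (n + 1) → Polynomial L := fun i => (x i).comp q
    have hx' : ∀ i k, (x' i).coeff k = f c ^ k * (x i).coeff k := by
      intro i k
      simp only [x', q]
      rw [Polynomial.comp_C_mul_X_coeff, mul_comm]
    have hlift : ∀ i, ∃ b : Polynomial V, Polynomial.map V.subtype b = Polynomial.C l * x' i := by
      intro i
      have : Polynomial.C l * x' i ∈ Polynomial.lifts V.subtype := by
        rw [Polynomial.lifts_iff_coeff_lifts]
        intro k
        rw [Polynomial.coeff_C_mul, hx']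
        exact ⟨⟨_, hmem k i⟩, rfl⟩
      exact (Polynomial.mem_lifts _).1 this
    choose b hb using hlift
    have hbc : ∀ k i, ((b i).coeff k : L) = l * (f c ^ k * (x i).coeff k) := by
      intro k i
      have := congrArg (fun p => Polynomial.coeff p k) (hb i)
      simp only [Polynomial.coeff_map, Polynomial.coeff_C_mul, hx'] at this
      exact this
    have hbc' : ∀ k i, ((b i).coeff k : L) = l * f c ^ k * (x i).coeff k := by
      intro k i; rw [hbc, mul_assoc]
    have hzero : ∀ k, V.valuation (f (m k)) * V.valuation (f c) ^ k <
        V.valuation (f (m j)) * V.valuation (f c) ^ j → ∀ i,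
        (Polynomial.mapRingHom (IsLocalRing.residue V) (b i)).coeff k = 0 := by
      intro k hk i
      rw [Polynomial.coe_mapRingHom, Polynomial.coeff_map, residue_eq_zero_iff_val, hbc, hval]
      exact (div_lt_one₀ hpos).2 ((hvle k i).trans_lt hk)
    have hnz : ∀ k, V.valuation (f (m k)) * V.valuation (f c) ^ k =
        V.valuation (f (m j)) * V.valuation (f c) ^ j → ∃ i,
        IsLocalRing.residue V ((b i).coeff k) ≠ 0 := by
      intro k hk
      obtain ⟨i, hi⟩ := hm' k
      refine ⟨i, ?_⟩
      rw [Ne, residue_eq_zero_iff_val, hbc, hval, hi, hk, div_self hpos.ne']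
      exact lt_irrefl _
    have hxy' : eval₂ (Polynomial.C.comp (V.subtype.comp oV))
        (Sum.elim x' fun j => (y j).comp q) F = 0 := by
      have h1 := congrArg (Polynomial.compRingHom q) hxy
      rw [map_zero, MvPolynomial.eval₂_comp_left] at h1
      have e1 : (Polynomial.compRingHom q).comp (Polynomial.C.comp (V.subtype.comp oV)) =
          Polynomial.C.comp (V.subtype.comp oV) := by
        ext o; simp
      have e2 : (Polynomial.compRingHom q : Polynomial L → Polynomial L) ∘ Sum.elim x y =
          Sum.elim x' fun j => (y j).comp q := by
        funext s; cases s <;> rfl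
      rwa [e1, e2] at h1
    have key := step_T hn (e := d / 2) (by omega) Gs hinj hG0
      (fun i => Polynomial.mapRingHom (IsLocalRing.residue V) (b i))
      (path_rel (by omega) V oV F hA Gs hF x' _ hxy' hl0 b hb) j i
      (fun i => Polynomial.natDegree_le_iff_coeff_eq_zero.2 fun k hk => hzero k (hgt k hk) i)
      (by
        obtain ⟨i, hi⟩ := hnz j rfl
        exact ⟨i, by rwa [Polynomial.coe_mapRingHom, Polynomial.coeff_map]⟩)
      (fun i k hk => hzero k (hlt k hk) i)
      (by
        simp only [Polynomial.coe_mapRingHom, Polynomial.coeff_map]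
        exact hTj.tiso (fun i => (b i).coeff j) _ (mul_ne_zero hl0 (pow_ne_zero _ hfc))
          (hbc' j) (hnz j rfl))
    simp only [Polynomial.coe_mapRingHom, Polynomial.coeff_map] at key
    exact ⟨fun k => (b k).coeff i, ⟨_, mul_ne_zero hl0 (pow_ne_zero _ hfc), hbc' i⟩, hnz i heq, key⟩
  · intro k hk
    obtain ⟨i, hi⟩ := hm' k
    show V.valuation (f (m k)) = 0
    rw [← hi, Polynomial.coeff_eq_zero_of_natDegree_lt ((hD i).trans_lt hk), map_zero]
end TT

/-! ### Lines in affine space and the obstruction to rationality -/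

theorem coeff_prod_of_le {R ι : Type*} [CommRing R] (s : Finset ι) (f : ι → Polynomial R) (e : ι → ℕ)
    (h : ∀ i ∈ s, (f i).natDegree ≤ e i) :
    (∏ i ∈ s, f i).natDegree ≤ ∑ i ∈ s, e i ∧
      (∏ i ∈ s, f i).coeff (∑ i ∈ s, e i) = ∏ i ∈ s, (f i).coeff (e i) := by
  classical
  induction s using Finset.induction_on with
  | empty => simp
  | insert a s ha ih =>
    obtain ⟨h1, h2⟩ := ih fun i hi => h i (Finset.mem_insert_of_mem hi)
    have h3 := h a (Finset.mem_insert_self a s)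
    rw [Finset.prod_insert ha, Finset.sum_insert ha, Finset.prod_insert ha]
    exact ⟨Polynomial.natDegree_mul_le_of_le h3 h1, by
      rw [Polynomial.coeff_mul_add_eq_of_natDegree_le h3 h1, h2]⟩

section lines
variable {M : ℕ} {K L : Type*} [Field K] [Field L] [Algebra K L] (τ : Fin M → L) (θ : Fin M → K)

/-- Restriction of a polynomial to the line `u ↦ τ + u θ`. -/
def onLine : MvPolynomial (Fin M) K →ₐ[K] Polynomial L :=
  aeval fun s => Polynomial.C (τ s) + Polynomial.C (algebraMap K L (θ s)) * Polynomial.X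

theorem onLine_coeff_zero (p : MvPolynomial (Fin M) K) : (onLine τ θ p).coeff 0 = aeval τ p := by
  have : (Polynomial.aeval (0 : L)).toRingHom.comp (onLine τ θ).toRingHom = (aeval τ : _ →ₐ[K] L).toRingHom := by
    apply MvPolynomial.ringHom_ext
    · intro r; simp [onLine, Polynomial.algebraMap_apply]
    · intro i; simp [onLine]
  have h2 := congrArg (fun g => g p) this
  simp only [RingHom.comp_apply, AlgHom.toRingHom_eq_coe, RingHom.coe_coe] at h2
  rw [← h2, Polynomial.coeff_zero_eq_aeval_zero]

theorem onLine_monomial (a : Fin M →₀ ℕ) (c : K) :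
    (onLine τ θ (monomial a c)).natDegree ≤ a.degree ∧
      (onLine τ θ (monomial a c)).coeff a.degree = algebraMap K L (eval θ (monomial a c)) := by
  have h := coeff_prod_of_le Finset.univ
    (fun s => (Polynomial.C (τ s) + Polynomial.C (algebraMap K L (θ s)) * Polynomial.X) ^ a s) a
    (fun s _ => by
      refine (Polynomial.natDegree_pow_le).trans ?_
      have : (Polynomial.C (τ s) + Polynomial.C (algebraMap K L (θ s)) * Polynomial.X).natDegree ≤ 1 := by
        rw [add_comm]; exact Polynomial.natDegree_linear_le
      nlinarith)
  have e : onLine τ θ (monomial a c) = Polynomial.C (algebraMap K L c) * ∏ s,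
      (Polynomial.C (τ s) + Polynomial.C (algebraMap K L (θ s)) * Polynomial.X) ^ a s := by
    rw [onLine, aeval_monomial, Finsupp.prod_fintype _ _ (by simp)]
    rfl
  have hdeg : a.degree = ∑ s, a s := Finsupp.degree_eq_sum a
  rw [e, hdeg]
  refine ⟨(Polynomial.natDegree_C_mul_le _ _).trans h.1, ?_⟩
  rw [Polynomial.coeff_C_mul, h.2, eval_monomial, Finsupp.prod_fintype _ _ (by simp), map_mul, map_prod]
  congr 1
  refine Finset.prod_congr rfl fun s _ => ?_
  have := Polynomial.coeff_pow_of_natDegree_le (m := a s) (n := 1)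
    (p := Polynomial.C (τ s) + Polynomial.C (algebraMap K L (θ s)) * Polynomial.X)
    (by rw [add_comm]; exact Polynomial.natDegree_linear_le)
  rw [mul_one] at this
  rw [this]
  simp

theorem onLine_top (p : MvPolynomial (Fin M) K) (D : ℕ) (hp : p.totalDegree ≤ D) :
    (onLine τ θ p).natDegree ≤ D ∧
      (onLine τ θ p).coeff D = algebraMap K L (eval θ (homogeneousComponent D p)) := by
  classical
  have hle : ∀ a ∈ p.support, a.degree ≤ D := fun a ha => by
    refine le_trans ?_ hp
    exact le_totalDegree ha
  have e : onLine τ θ p = ∑ a ∈ p.support, onLine τ θ (monomial a (coeff a p)) := by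
    conv_lhs => rw [p.as_sum]
    rw [map_sum]
  constructor
  · rw [e]
    exact Polynomial.natDegree_sum_le_of_forall_le _ _ fun a ha =>
      (onLine_monomial τ θ a _).1.trans (hle a ha)
  · rw [e, Polynomial.finset_sum_coeff, homogeneousComponent_apply, map_sum, map_sum,
      Finset.sum_filter]
    refine Finset.sum_congr rfl fun a ha => ?_
    split_ifs with hD
    · rw [← hD]; exact (onLine_monomial τ θ a _).2
    · exact Polynomial.coeff_eq_zero_of_natDegree_lt
        ((onLine_monomial τ θ a _).1.trans_lt (lt_of_le_of_ne (hle a ha) hD))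

/-- Finitely many polynomials, not all zero, have top-degree parts not all vanishing at a
suitable direction. -/
theorem exists_direction [Infinite K] {I : Type*} [Fintype I] (P : I → MvPolynomial (Fin M) K) (hP : P ≠ 0) :
    ∃ (D : ℕ) (θ : Fin M → K), (∀ i, (P i).totalDegree ≤ D) ∧
      ∃ i, eval θ (homogeneousComponent D (P i)) ≠ 0 := by
  classical
  obtain ⟨i1, hi1⟩ := Function.ne_iff.1 hP
  obtain ⟨i0, h0, hmax⟩ := Finset.exists_max_image (Finset.univ.filter fun i => P i ≠ 0)
    (fun i => (P i).totalDegree) ⟨i1, by simpa using hi1⟩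
  have hi0 : P i0 ≠ 0 := by simpa using h0
  refine ⟨(P i0).totalDegree, ?_⟩
  have hne : homogeneousComponent (P i0).totalDegree (P i0) ≠ 0 := by
    obtain ⟨a, ha, hdeg⟩ := Finset.exists_mem_eq_sup _ (support_nonempty.2 hi0)
      fun s : Fin M →₀ ℕ => s.sum fun _ e => e
    intro h
    have h2 := congrArg (coeff a) h
    rw [coeff_homogeneousComponent, if_pos, coeff_zero] at h2
    · exact (mem_support_iff.1 ha) h2
    · rw [totalDegree, hdeg]; rfl
  have : ∃ θ, eval θ (homogeneousComponent (P i0).totalDegree (P i0)) ≠ 0 := by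
    by_contra hcon
    push Not at hcon
    exact hne (MvPolynomial.funext fun θ => by rw [hcon, map_zero])
  obtain ⟨θ, hθ⟩ := this
  refine ⟨θ, fun i => ?_, i0, hθ⟩
  by_cases hi : P i = 0
  · rw [hi]; simp
  · exact hmax i (by simpa using hi)
end lines

/-- The binary subform `⟨1, x_i x_j⟩` is isotropic if `-x_i x_j` is a square. -/
theorem Tiso_of_sq {n : ℕ} (hn : 0 < n) {R : Type*} [CommRing R] [Nontrivial R] (x : Fin (n + 1) → R) (s : R)
    (i j : Fin (n + 1)) (hij : i ≠ j) (h : x i * x j = - s ^ 2) : Tiso x := by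
  classical
  have hne : pairG i j ≠ 0 := by
    intro h0
    have := evn_pairG i j
    rw [h0, map_zero] at this
    have h1 := congrFun this i
    simp [hij] at h1
  refine ⟨Pi.single 0 s + Pi.single (pairG i j) 1, ?_, ?_⟩
  · refine Function.ne_iff.2 ⟨pairG i j, ?_⟩
    simp [hne]
  · rw [← Finset.add_sum_erase _ _ (Finset.mem_univ (0 : Fin n → ZMod 2)),
      ← Finset.add_sum_erase _ _ (Finset.mem_erase.2 ⟨hne, Finset.mem_univ (pairG i j)⟩),
      Finset.sum_eq_zero]
    · simp [hne, hne.symm, xG_zero, xG_pairG x hij, h]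
    · intro G hG
      simp only [Finset.mem_erase] at hG
      simp [hG.1, hG.2.1]

/-- Obstruction to rationality: if the special fibre of a reduction of `R` carries an anisotropic Pfister
form in the reductions of the `x`-coordinates, then `Frac R` is not purely transcendental. -/
theorem no_rational {K : Type} [Field K] [IsAlgClosed K] {A R B : Type} [CommRing A] [CommRing R]
    [CommRing B] [Algebra K R] {ι : A →+* R} {red : A →+* B} [IsDomain B] (h : IsRed K ι red)
    (O : ValuationSubring K) (oA : O →+* A) (hoA : ∀ μ : O, ι (oA μ) = algebraMap K R μ)
    (hloc : ∀ μ : O, IsLocalRing.residue O μ = 0 → red (oA μ) = 0)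
    (L : Type) [Field L] [Algebra R L] [IsFractionRing R L] [Algebra K L] [IsScalarTower K R L]
    {n r d : ℕ} (hn : 0 < n) (hd : n + 3 ≤ d) (F : MvPolynomial (Fin (n + 1) ⊕ Fin (r + 1)) O)
    (hA : ∀ m, coeff m F ≠ 0 → Allowed d m) (Gs : Fin (r + 1) → Fin n → ZMod 2)
    (hinj : Function.Injective Gs) (hG0 : ∀ j, Gs j ≠ 0)
    (hF : MvPolynomial.map (IsLocalRing.residue O) F = F0 d Gs (IsLocalRing.ResidueField O))
    (ξ : Fin (n + 1) ⊕ Fin (r + 1) → A)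
    (hξ : eval₂ (ι.comp oA) (fun s => ι (ξ s)) F = 0)
    (hT : ¬ Tiso fun i => red (ξ (Sum.inl i)))
    {M : ℕ} {E : Type} [Field E] [Algebra (MvPolynomial (Fin M) K) E]
    [IsFractionRing (MvPolynomial (Fin M) K) E] [Algebra K E]
    [IsScalarTower K (MvPolynomial (Fin M) K) E] (Φ : L ≃ₐ[K] E) : False := by
  classical
  have hdomR := h.isDomain
  let V := VL h O oA hoA L
  let v : A →+* V := VLhom h O oA hoA L
  have hv : ∀ a, (v a : L) = algebraMap R L (ι a) := fun a => rfl
  let oV : O →+* V := v.comp oA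
  have hoV : ∀ μ : O, (oV μ : L) = algebraMap K L μ := by
    intro μ
    rw [IsScalarTower.algebraMap_apply K R L, ← hoA]
    rfl
  have hres : ∀ a, IsLocalRing.residue V (v a) = 0 ↔ red a = 0 := VL_res h O oA hoA L
  have hFV : MvPolynomial.map ((IsLocalRing.residue V).comp oV) F =
      F0 d Gs (IsLocalRing.ResidueField V) := by
    rw [← sub_eq_zero, ← F0_map ((IsLocalRing.residue V).comp oV) d Gs, ← map_sub]
    ext m
    rw [coeff_map, coeff_zero]
    have h1 : IsLocalRing.residue O (coeff m (F - F0 d Gs O)) = 0 := by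
      rw [← coeff_map, map_sub, hF, F0_map, sub_self, coeff_zero]
    exact (hres _).2 (hloc _ h1)
  -- coordinates of the generic point, transported to the rational function field
  let z : Fin (n + 1) ⊕ Fin (r + 1) → L := fun s => algebraMap R L (ι (ξ s))
  obtain ⟨⟨Q, hQ⟩, hQint⟩ := IsLocalization.exist_integer_multiples_of_finite
    (nonZeroDivisors (MvPolynomial (Fin M) K)) (fun s => Φ (z s))
  replace hQ : Q ≠ 0 := nonZeroDivisors.ne_zero hQ
  choose P hP using hQint
  replace hP : ∀ s, algebraMap _ E (P s) = algebraMap _ E Q * Φ (z s) := by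
    intro s; rw [hP, Algebra.smul_def]
  have hEinj : Function.Injective (algebraMap (MvPolynomial (Fin M) K) E) := IsFractionRing.injective _ _
  have hzF : eval₂ ((algebraMap K L).comp O.subtype) z F = 0 := by
    have h1 := congrArg (algebraMap R L) hξ
    rw [map_zero, MvPolynomial.eval₂_comp_left] at h1
    have e1 : (algebraMap R L).comp (ι.comp oA) = (algebraMap K L).comp O.subtype := by
      ext μ
      exact hoV μ
    rw [e1] at h1
    exact h1
  have hΦF : eval₂ ((algebraMap K E).comp O.subtype) (fun s => Φ (z s)) F = 0 := by
    have h1 := congrArg (Φ : L →+* E) hzF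
    rw [map_zero, MvPolynomial.eval₂_comp_left] at h1
    have e1 : (Φ : L →+* E).comp ((algebraMap K L).comp O.subtype) = (algebraMap K E).comp O.subtype := by
      ext μ
      exact Φ.commutes _
    rw [e1] at h1
    exact h1
  have hPF : eval₂ ((C : K →+* MvPolynomial (Fin M) K).comp O.subtype) P F = 0 := by
    refine hEinj ?_
    rw [map_zero, MvPolynomial.eval₂_comp_left]
    have e1 : (algebraMap (MvPolynomial (Fin M) K) E).comp (C.comp O.subtype) =
        (algebraMap K E).comp O.subtype := by
      ext μ
      exact (IsScalarTower.algebraMap_apply K (MvPolynomial (Fin M) K) E _).symm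
    have e2 : (algebraMap (MvPolynomial (Fin M) K) E) ∘ P =
        Sum.elim (fun i => algebraMap _ E Q * Φ (z (Sum.inl i)))
          (fun j => algebraMap _ E Q * Φ (z (Sum.inr j))) := by
      funext s
      cases s <;> simp [hP]
    have e3 : (fun s => Φ (z s)) = Sum.elim (fun i => Φ (z (Sum.inl i))) (fun j => Φ (z (Sum.inr j))) := by
      funext s; cases s <;> rfl
    rw [e3, ← Ft_one] at hΦF
    have h2 := Ft_smul ((algebraMap K E).comp O.subtype) F hA (by omega)
      (fun i => Φ (z (Sum.inl i))) (fun j => Φ (z (Sum.inr j))) 1 (algebraMap _ E Q) 1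
    rw [hΦF, mul_zero] at h2
    simp only [mul_one] at h2
    rw [Ft_one] at h2
    rw [e1, e2]
    exact h2
  -- the inverse isomorphism on polynomials
  let τ : Fin M → L := fun s => Φ.symm (algebraMap (MvPolynomial (Fin M) K) E (X s))
  have hτ : ∀ p, aeval τ p = Φ.symm (algebraMap (MvPolynomial (Fin M) K) E p) := by
    have : (aeval τ : MvPolynomial (Fin M) K →ₐ[K] L) =
        (Φ.symm : E →ₐ[K] L).comp (IsScalarTower.toAlgHom K (MvPolynomial (Fin M) K) E) := by
      apply MvPolynomial.algHom_ext
      intro i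
      simp [τ]
    intro p
    rw [this]; rfl
  let q : L := Φ.symm (algebraMap (MvPolynomial (Fin M) K) E Q)
  have hq : q ≠ 0 := by
    simpa [q] using hQ
  have hPτ : ∀ s, aeval τ (P s) = q * z s := by
    intro s
    rw [hτ, hP, map_mul]
    simp [q]
  have hred : ∀ i, red (ξ (Sum.inl i)) ≠ 0 := fun i hi => hT (Tiso_of_zero hn hi)
  have hz0 : ∀ i, z (Sum.inl i) ≠ 0 := by
    intro i hi
    exact hred i (h.zero _ ((map_eq_zero_iff _ (IsFractionRing.injective R L)).1 hi))
  have hP0 : (fun i => P (Sum.inl i)) ≠ 0 := by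
    refine Function.ne_iff.2 ⟨0, fun h0 => ?_⟩
    have := hPτ (Sum.inl 0)
    rw [show P (Sum.inl 0) = 0 from h0, map_zero] at this
    exact mul_ne_zero hq (hz0 0) this.symm
  obtain ⟨D, θ, hPD, i1, hi1⟩ := exists_direction (K := K) (fun i => P (Sum.inl i)) hP0
  have hline : eval₂ (Polynomial.C.comp (V.subtype.comp oV))
      (Sum.elim (fun i => onLine τ θ (P (Sum.inl i))) (fun j => onLine τ θ (P (Sum.inr j)))) F = 0 := by
    have h1 := congrArg (onLine τ θ : MvPolynomial (Fin M) K →+* Polynomial L) hPF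
    rw [map_zero, MvPolynomial.eval₂_comp_left] at h1
    have e1 : (onLine τ θ : MvPolynomial (Fin M) K →+* Polynomial L).comp (C.comp O.subtype) =
        Polynomial.C.comp (V.subtype.comp oV) := by
      ext1 μ
      simp only [RingHom.comp_apply]
      show onLine τ θ (C (μ : K)) = Polynomial.C (oV μ : L)
      rw [hoV, onLine, aeval_C]; rfl
    have e2 : (onLine τ θ : MvPolynomial (Fin M) K →+* Polynomial L) ∘ P = Sum.elim (fun i => onLine τ θ (P (Sum.inl i)))
        (fun j => onLine τ θ (P (Sum.inr j))) := by
      funext s; cases s <;> rfl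
    rwa [e1, e2] at h1
  have hscale : ∀ w : L, w ≠ 0 → ∃ c : K, c ≠ 0 ∧ V.valuation w = V.valuation (algebraMap K L c) := by
    intro w hw
    obtain ⟨c, hc, he⟩ := VL_scale h O oA hoA L w hw
    exact ⟨c, hc, by rw [IsScalarTower.algebraMap_apply K R L]; exact he⟩
  -- the point at infinity of the line is constant
  let ω : Fin (n + 1) → K := fun i => eval θ (homogeneousComponent D (P (Sum.inl i)))
  have hTTD : TT V fun i => (onLine τ θ (P (Sum.inl i))).coeff D := by
    simp only [fun i => (onLine_top τ θ (P (Sum.inl i)) D (hPD i)).2]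
    obtain ⟨i0, -, hmax⟩ := Finset.exists_max_image Finset.univ (fun i => O.valuation (ω i))
      ⟨i1, Finset.mem_univ _⟩
    have hω0 : ω i0 ≠ 0 := by
      intro h0
      have := hmax i1 (Finset.mem_univ _)
      rw [h0, map_zero, le_zero_iff, map_eq_zero] at this
      exact hi1 this
    have hmem : ∀ i, (ω i0)⁻¹ * ω i ∈ O := by
      intro i
      rw [← ValuationSubring.valuation_le_one_iff, map_mul, map_inv₀, ← div_eq_inv_mul]
      exact div_le_one_of_le₀ (hmax i (Finset.mem_univ _)) zero_le
    let b : Fin (n + 1) → O := fun i => ⟨_, hmem i⟩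
    have hi01 : (0 : Fin (n + 1)) ≠ Fin.last n := by
      intro h0
      have := congrArg Fin.val h0
      simp at this; omega
    obtain ⟨s, hs⟩ := IsAlgClosed.exists_pow_nat_eq (-((b 0 : K) * b (Fin.last n))) (n := 2) (by norm_num)
    have hsO : s ∈ O := by
      have h1 : s ^ 2 ∈ O := by
        rw [hs]; exact neg_mem (mul_mem (b 0).2 (b (Fin.last n)).2)
      rw [← ValuationSubring.valuation_le_one_iff, map_pow] at h1
      rw [← ValuationSubring.valuation_le_one_iff]
      exact (pow_le_one_iff (by norm_num)).1 h1
    have hsb : b 0 * b (Fin.last n) = - (⟨s, hsO⟩ : O) ^ 2 := by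
      refine Subtype.ext ?_
      show (b 0 : K) * b (Fin.last n) = - s ^ 2
      rw [hs, neg_neg]
    refine ⟨fun i => oV (b i), ⟨algebraMap K L (ω i0)⁻¹, by simpa using hω0, fun i => ?_⟩, ⟨i0, ?_⟩, ?_⟩
    · rw [hoV, ← map_mul]
    · have : b i0 = 1 := Subtype.ext (inv_mul_cancel₀ hω0)
      show IsLocalRing.residue V (oV (b i0)) ≠ 0
      rw [this, map_one, map_one]; exact one_ne_zero
    · refine Tiso_of_sq hn _ (IsLocalRing.residue V (oV ⟨s, hsO⟩)) 0 (Fin.last n) hi01 ?_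
      rw [← map_mul, ← map_mul, hsb, map_neg, map_neg, map_pow, map_pow]
  have hTT0 := path_descent V (algebraMap K L) hscale hn hd oV F hA Gs hinj hG0 hFV
    (fun i => onLine τ θ (P (Sum.inl i))) (fun j => onLine τ θ (P (Sum.inr j))) hline D
    (fun i => (onLine_top τ θ _ D (hPD i)).1)
    ⟨i1, by
      rw [(onLine_top τ θ _ D (hPD i1)).2]
      simpa using hi1⟩
    ⟨0, by
      rw [onLine_coeff_zero, hPτ]
      exact mul_ne_zero hq (hz0 0)⟩ hTTD
  refine hT (VL_Tiso h O oA hoA L (fun i => ξ (Sum.inl i)) ?_)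
  refine hTT0.tiso (fun i => v (ξ (Sum.inl i))) q⁻¹ (inv_ne_zero hq) (fun i => ?_) ⟨0, ?_⟩
  · rw [onLine_coeff_zero, hPτ, inv_mul_cancel_left₀ hq]
    rfl
  · rw [Ne, hres]; exact hred 0

/-! ### Degenerating to the special hypersurface -/

section allowed
variable {n r : ℕ} {R : Type*} [CommRing R]

/-- The bidegree: `x`-variables have weight `(1,0)`, `y`-variables have weight `(0,1)`. -/
def bw (n r : ℕ) : Fin (n + 1) ⊕ Fin (r + 1) → ℕ × ℕ := Sum.elim (fun _ => (1, 0)) (fun _ => (0, 1))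

theorem weight_bw (m : (Fin (n + 1) ⊕ Fin (r + 1)) →₀ ℕ) :
    Finsupp.weight (bw n r) m = (∑ i, m (Sum.inl i), ∑ j, m (Sum.inr j)) := by
  rw [Finsupp.weight_apply, Finsupp.sum_fintype _ _ (by simp), Fintype.sum_sum_type]
  ext <;> simp [bw, Prod.fst_sum, Prod.snd_sum]

theorem bw_X (i : Fin (n + 1)) :
    IsWeightedHomogeneous (bw n r) (X (Sum.inl i) : MvPolynomial _ R) (1, 0) :=
  isWeightedHomogeneous_X R (bw n r) (Sum.inl i)

theorem bw_pow {p : MvPolynomial (Fin (n + 1) ⊕ Fin (r + 1)) R} {a b : ℕ} (k : ℕ)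
    (hp : IsWeightedHomogeneous (bw n r) p (a, b)) :
    IsWeightedHomogeneous (bw n r) (p ^ k) (k * a, k * b) := by
  simpa using hp.pow k

theorem bw_mul {p q : MvPolynomial (Fin (n + 1) ⊕ Fin (r + 1)) R} {a b a' b' : ℕ}
    (hp : IsWeightedHomogeneous (bw n r) p (a, b)) (hq : IsWeightedHomogeneous (bw n r) q (a', b')) :
    IsWeightedHomogeneous (bw n r) (p * q) (a + a', b + b') := by
  simpa using hp.mul hq

theorem bw_mon (A : Fin (n + 1) → ZMod 2) :
    IsWeightedHomogeneous (bw n r) (mon (fun i => (X (Sum.inl i) : MvPolynomial _ R)) A)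
      (∑ i, (A i).val, 0) := by
  have := IsWeightedHomogeneous.prod Finset.univ
    (fun i => (X (Sum.inl i) : MvPolynomial (Fin (n + 1) ⊕ Fin (r + 1)) R) ^ (A i).val)
    (fun i => ((A i).val, 0)) (w := bw n r) (fun i _ => by simpa using bw_pow (A i).val (bw_X (R := R) i))
  have e : ∑ i, (((A i).val, 0) : ℕ × ℕ) = (∑ i, (A i).val, 0) := by
    ext <;> simp [Prod.fst_sum, Prod.snd_sum]
  rw [e] at this
  exact this

theorem bw_cF (d : ℕ) (hd : n + 3 ≤ d) :
    IsWeightedHomogeneous (bw n r) (cF d fun i => (X (Sum.inl i) : MvPolynomial _ R)) (d, 0) := by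
  have hl : IsWeightedHomogeneous (bw n r)
      (∑ i, (X (Sum.inl i) : MvPolynomial (Fin (n + 1) ⊕ Fin (r + 1)) R)) (1, 0) :=
    IsWeightedHomogeneous.sum _ _ _ fun i _ => bw_X i
  have hp : IsWeightedHomogeneous (bw n r)
      (∏ i, (X (Sum.inl i) : MvPolynomial (Fin (n + 1) ⊕ Fin (r + 1)) R)) (n + 1, 0) := by
    have := IsWeightedHomogeneous.prod Finset.univ
      (fun i => (X (Sum.inl i) : MvPolynomial (Fin (n + 1) ⊕ Fin (r + 1)) R))
      (fun i => (1, 0)) (w := bw n r) (fun i _ => bw_X i)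
    simpa using this
  have h1 := bw_pow (2 * (d / 2)) hl
  have h2 := bw_mul (bw_mul hl (bw_pow (2 * (d / 2) - n - 2) (bw_X (R := R) (r := r) (0 : Fin (n + 1))))) hp
  have h3 : 1 + (2 * (d / 2) - n - 2) * 1 + (n + 1) = 2 * (d / 2) * 1 := by omega
  rw [h3] at h2
  have h4 := bw_mul (bw_pow (d % 2) (bw_X (R := R) (r := r) (0 : Fin (n + 1)))) (h1.add h2)
  have h5 : d % 2 * 1 + 2 * (d / 2) * 1 = d := by omega
  rw [h5] at h4
  simpa [cF, gfun] using h4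

theorem bw_aF (d : ℕ) (hd : n + 3 ≤ d) (G : Fin n → ZMod 2) (j : Fin (r + 1)) :
    IsWeightedHomogeneous (bw n r) (aF d (fun i => (X (Sum.inl i) : MvPolynomial _ R)) G *
      X (Sum.inr j) ^ 2) (d - 2, 2) := by
  have hj : IsWeightedHomogeneous (bw n r) (X (Sum.inr j) : MvPolynomial _ R) (0, 1) :=
    isWeightedHomogeneous_X R (bw n r) (Sum.inr j)
  have h1 := bw_mul (bw_mul (bw_mon (R := R) (r := r) (AF d G))
    (bw_pow 2 (bw_pow (hF d G) (bw_X (R := R) (r := r) (1 : Fin (n + 1)))))) (bw_pow 2 hj)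
  have h2 : ∑ i, (AF d G i).val + 2 * (hF d G * 1) + 2 * 0 = d - 2 := by
    rw [← AF_card d hd G]; ring
  rw [h2] at h1
  simpa [aF] using h1

theorem F0_allowed (d : ℕ) (hd : n + 3 ≤ d) (Gs : Fin (r + 1) → Fin n → ZMod 2) (m)
    (hm : coeff m (F0 d Gs R) ≠ 0) : Allowed d m := by
  rw [F0, F0expr, coeff_add, coeff_sum] at hm
  have : coeff m (cF d fun i => (X (Sum.inl i) : MvPolynomial (Fin (n + 1) ⊕ Fin (r + 1)) R)) ≠ 0 ∨
      ∃ j, coeff m (aF d (fun i => (X (Sum.inl i) : MvPolynomial _ R)) (Gs j) * X (Sum.inr j) ^ 2) ≠ 0 := by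
    by_contra hcon
    push Not at hcon
    exact hm (by rw [hcon.1, Finset.sum_eq_zero fun j _ => hcon.2 j, add_zero])
  rcases this with h | ⟨j, h⟩
  · have := bw_cF d hd h
    rw [weight_bw, Prod.mk.injEq] at this
    exact ⟨by omega, by omega⟩
  · have := bw_aF d hd (Gs j) j h
    rw [weight_bw, Prod.mk.injEq] at this
    exact ⟨by omega, by omega⟩
end allowed

/-- Enumeration of a set of `r + 1` nonzero vectors containing those with last entry `1`. -/
theorem exists_Gs {n' r : ℕ} (h1 : 2 ^ n' ≤ r + 1) (h2 : r + 1 ≤ 2 ^ (n' + 1) - 1) :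
    ∃ Gs : Fin (r + 1) → Fin (n' + 1) → ZMod 2, Function.Injective Gs ∧ (∀ j, Gs j ≠ 0) ∧
      ∀ G, G (Fin.last n') = 1 → ∃ j, Gs j = G := by
  classical
  let s : Finset (Fin (n' + 1) → ZMod 2) := Finset.univ.filter fun G => G (Fin.last n') = 1
  let t : Finset (Fin (n' + 1) → ZMod 2) := Finset.univ.erase 0
  have hst : s ⊆ t := by
    intro G hG
    simp only [s, t, Finset.mem_filter, Finset.mem_univ, true_and, Finset.mem_erase, and_true] at hG ⊢
    rintro rfl
    simp at hG
  have hs : s.card ≤ r + 1 := by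
    refine le_trans ?_ h1
    have hinj : Set.InjOn (fun (G : Fin (n' + 1) → ZMod 2) (i : Fin n') => G i.castSucc) s := by
      intro G hG H hH hGH
      simp only [s, Finset.coe_filter, Finset.mem_univ, true_and, Set.mem_setOf_eq] at hG hH
      funext i
      refine Fin.lastCases ?_ (fun i => ?_) i
      · rw [hG, hH]
      · exact congrFun hGH i
    calc s.card = (s.image fun G i => G (Fin.castSucc i)).card := (Finset.card_image_of_injOn hinj).symm
      _ ≤ Fintype.card (Fin n' → ZMod 2) := Finset.card_le_univ _
      _ = 2 ^ n' := by simp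
  have ht : t.card = 2 ^ (n' + 1) - 1 := by
    rw [Finset.card_erase_of_mem (Finset.mem_univ _), Finset.card_univ]
    simp
  obtain ⟨u, hsu, hut, hu⟩ := Finset.exists_subsuperset_card_eq hst hs (ht ▸ h2)
  let e := u.equivFinOfCardEq hu
  refine ⟨fun j => (e.symm j : Fin (n' + 1) → ZMod 2), fun a b hab => e.symm.injective (Subtype.ext hab),
    fun j => (Finset.mem_erase.1 (hut (e.symm j).2)).1, fun G hG => ?_⟩
  have hGu : G ∈ u := hsu (by simpa [s] using hG)
  exact ⟨e ⟨G, hGu⟩, by simp⟩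

/-- The conclusion for a hypersurface over a valuation ring reducing to the special one. -/
theorem special_reduction {n' r d : ℕ} (hn : 1 ≤ n') (hd : n' + 4 ≤ d) (O : ValuationSubring ℂ)
    [CharZero (IsLocalRing.ResidueField O)] {τ : Type} (e : Fin (n' + 2) ⊕ Fin (r + 1) ≃ Option τ)
    (F : MvPolynomial (Fin (n' + 2) ⊕ Fin (r + 1)) O)
    (hA : ∀ m, coeff m F ≠ 0 → Allowed d m) (hmonic : (sepEquiv e O F).Monic)
    (Gs : Fin (r + 1) → Fin (n' + 1) → ZMod 2)
    (hinj : Function.Injective Gs) (hG0 : ∀ j, Gs j ≠ 0)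
    (hGs : ∀ G, G (Fin.last n') = 1 → ∃ j, Gs j = G)
    (hF : MvPolynomial.map (IsLocalRing.residue O) F = F0 d Gs (IsLocalRing.ResidueField O)) :
    IsDomain (MvPolynomial (Fin (n' + 2) ⊕ Fin (r + 1)) ℂ ⧸
        Ideal.span {MvPolynomial.map O.subtype F}) ∧
      ¬ IsStablyRationalSpec (MvPolynomial (Fin (n' + 2) ⊕ Fin (r + 1)) ℂ ⧸
        Ideal.span {MvPolynomial.map O.subtype F}) := by
  have hred := (isRed_val O).quot e O.subtype_injective F hmonic
  have hprime := F0_prime (k := IsLocalRing.ResidueField O) hn d Gs hinj hGs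
  have han := F0_quot_aniso (k := IsLocalRing.ResidueField O) hn d (by omega) Gs hinj hGs
  rw [← hF] at hprime han
  have hdomB : IsDomain (MvPolynomial (Fin (n' + 2) ⊕ Fin (r + 1)) (IsLocalRing.ResidueField O) ⧸
      Ideal.span {MvPolynomial.map (IsLocalRing.residue O) F}) :=
    (Ideal.Quotient.isDomain_iff_prime _).2 ((Ideal.span_singleton_prime hprime.ne_zero).2 hprime)
  have hdom := hred.isDomain
  refine ⟨hdom, ?_⟩
  rintro ⟨m, M, ⟨Φ⟩⟩
  have hmv := hred.mv (Fin m)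
  refine no_rational (M := M) hmv O (C.comp C) (fun μ => ?_) (fun μ hμ => ?_)
    (FractionRing (MvPolynomial (Fin m) (MvPolynomial (Fin (n' + 2) ⊕ Fin (r + 1)) ℂ ⧸
        Ideal.span {MvPolynomial.map O.subtype F}))) (by omega) (by omega) F hA Gs hinj hG0 hF
    (fun s => C (X s)) ?_ ?_ Φ
  · simp only [RingHom.comp_apply, map_C]
    rfl
  · simp [hμ]
  · have h0 : C (σ := Fin m) (Ideal.Quotient.mk (Ideal.span {MvPolynomial.map O.subtype F})
        (MvPolynomial.map O.subtype F)) = 0 := by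
      rw [Ideal.Quotient.eq_zero_iff_mem.2 (Ideal.mem_span_singleton_self _), map_zero]
    rw [← h0]
    have hhom : ∀ P : MvPolynomial (Fin (n' + 2) ⊕ Fin (r + 1)) O,
        eval₂ ((MvPolynomial.map (σ := Fin m) ((Ideal.Quotient.mk
          (Ideal.span {MvPolynomial.map O.subtype F})).comp (MvPolynomial.map O.subtype))).comp
            (C.comp C)) (fun s => MvPolynomial.map ((Ideal.Quotient.mk
          (Ideal.span {MvPolynomial.map O.subtype F})).comp (MvPolynomial.map O.subtype))
            (C (X s))) P =
        C (Ideal.Quotient.mk (Ideal.span {MvPolynomial.map O.subtype F})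
          (MvPolynomial.map O.subtype P)) := by
      intro P
      induction P using MvPolynomial.induction_on with
      | C a => simp
      | add p q hp hq => simp only [eval₂_add, hp, hq, map_add]
      | mul_X p s hp =>
        rw [eval₂_mul, hp, eval₂_X]
        simp only [map_mul, map_C, RingHom.comp_apply]
    exact hhom F
  · rintro ⟨z, hz, hz0⟩
    refine hz (aniso_mvPoly (σ := Fin m) han z ?_)
    rw [← hz0]
    refine Finset.sum_congr rfl fun G _ => ?_
    beta_reduce
    rw [xG_map]
    simp

/-! ### Very general members -/

/-- A family of complex numbers algebraically independent over `ℚ` specializes to any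
prescribed family of integers at some place of `ℂ` with residue characteristic zero. -/
theorem exists_place {S : Type} (α : S → ℂ)
    (hα : Function.Injective (aeval α : MvPolynomial S ℚ →ₐ[ℚ] ℂ)) (a : S → ℤ) :
    ∃ O : ValuationSubring ℂ, CharZero (IsLocalRing.ResidueField O) ∧
      ∃ β : S → O, (∀ s, O.subtype (β s) = α s) ∧
        ∀ s, IsLocalRing.residue O (β s) = (a s : IsLocalRing.ResidueField O) := by
  let f : MvPolynomial S ℚ →+* ℂ := (aeval α : MvPolynomial S ℚ →ₐ[ℚ] ℂ).toRingHom
  let g : MvPolynomial S ℚ ≃+* f.range :=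
    RingEquiv.ofBijective f.rangeRestrict
      ⟨fun x y h => hα (congrArg Subtype.val h), f.rangeRestrict_surjective⟩
  let ev : MvPolynomial S ℚ →+* ℚ := (aeval (fun s => (a s : ℚ))).toRingHom
  let I : Ideal f.range := (RingHom.ker ev).comap (g.symm : f.range →+* MvPolynomial S ℚ)
  have hI : I ≠ ⊤ := by
    intro h
    have h1 : (1 : f.range) ∈ I := by rw [h]; trivial
    have h2 : ev (g.symm 1) = 0 := h1
    simp at h2
  obtain ⟨O, hO, hnu⟩ := Ideal.image_subset_nonunits_valuationSubring I hI
  have hmem : ∀ p, f p ∈ O := fun p => hO ⟨p, rfl⟩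
  have hα' : ∀ s, α s ∈ O := fun s => by
    have := hmem (X s)
    simpa [f] using this
  have hQ : ∀ q : ℚ, (q : ℂ) ∈ O := fun q => by
    have := hmem (C q)
    simpa [f] using this
  refine ⟨O, ?_, fun s => ⟨α s, hα' s⟩, fun s => rfl, fun s => ?_⟩
  · let q : ℚ →+* O := (algebraMap ℚ ℂ).codRestrict O.toSubring hQ
    exact charZero_of_injective_ringHom (f := (IsLocalRing.residue O).comp q)
      (RingHom.injective _)
  · have hx : f (X s - C (a s : ℚ)) ∈ O.nonunits := by
      refine hnu ⟨g (X s - C (a s : ℚ)), ?_, rfl⟩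
      change ev (g.symm (g _)) = 0
      simp [ev]
    have hx2 : ((⟨α s, hα' s⟩ - (a s : O) : O) : ℂ) ∈ O.nonunits := by
      simpa [f] using hx
    rw [ValuationSubring.coe_mem_nonunits_iff, ← IsLocalRing.residue_eq_zero_iff, map_sub,
      map_intCast, sub_eq_zero] at hx2
    exact hx2

/-- A homogeneous form of degree `d` containing the monomial `X_{s₀}^d` with coefficient one is monic
in the variable `X_{s₀}`. -/
theorem sep_monic {σ τ : Type} [Fintype σ] (e : σ ≃ Option τ) (s0 : σ) (he : e s0 = none)
    {R : Type} [CommRing R] {d : ℕ} (F : MvPolynomial σ R)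
    (h : ∀ m, coeff m F ≠ 0 → ∑ s, m s = d) (h1 : coeff (Finsupp.single s0 d) F = 1) :
    (sepEquiv e R F).Monic := by
  classical
  let M : ℕ → (τ →₀ ℕ) → (σ →₀ ℕ) := fun k t => Finsupp.equivMapDomain e.symm (t.optionElim k)
  have hM : ∀ k t s, M k t s = (e s).elim k t := fun k t s => by
    simp [M, Finsupp.equivMapDomain_apply]
  have hc : ∀ k t, coeff t ((sepEquiv e R F).coeff k) = coeff (M k t) F := fun k t => by
    have h2 : Finsupp.mapDomain e (M k t) = t.optionElim k := by
      rw [← Finsupp.equivMapDomain_eq_mapDomain, ← Finsupp.equivMapDomain_trans]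
      simp
    rw [sepEquiv, AlgEquiv.trans_apply, optionEquivLeft_coeff_coeff, ← h2]
    exact coeff_rename_mapDomain e e.injective F _
  refine Polynomial.monic_of_natDegree_le_of_coeff_eq_one d ?_ ?_
  · rw [Polynomial.natDegree_le_iff_coeff_eq_zero]
    intro k hk
    ext t
    rw [hc, coeff_zero]
    by_contra hne
    have h3 := h _ hne
    have h4 : M k t s0 ≤ ∑ s, M k t s := Finset.single_le_sum (fun _ _ => Nat.zero_le _)
      (Finset.mem_univ s0)
    rw [hM, he] at h4
    simp only [Option.elim_none] at h4
    omega
  · ext t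
    rw [hc, coeff_one]
    split_ifs with ht
    · rw [← h1]
      congr 1
      ext s
      rw [hM, ← ht, Finsupp.single_apply]
      split_ifs with hs
      · rw [← hs, he, Option.elim_none]
      · cases hes : e s with
        | none => exact absurd (e.injective (he.trans hes.symm)) hs
        | some x => simp
    · by_contra hne
      have h3 := h _ hne
      obtain ⟨x, hx⟩ : ∃ x, t x ≠ 0 := by
        by_contra hcon
        push Not at hcon
        exact ht (Finsupp.ext fun x => (hcon x).symm)
      have hne2 : s0 ≠ e.symm (some x) := by
        intro hh
        rw [hh] at he
        simp at he
      have h4 : ∑ s ∈ {s0, e.symm (some x)}, M d t s ≤ ∑ s, M d t s :=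
        Finset.sum_le_sum_of_subset (Finset.subset_univ _)
      rw [Finset.sum_pair hne2, hM, hM, he] at h4
      simp only [Option.elim_none, Equiv.apply_symm_apply, Option.elim_some] at h4
      omega

theorem coeff_F0_top {R : Type*} [CommRing R] {n r : ℕ} (hn : 0 < n) (d : ℕ) (hd : n + 3 ≤ d)
    (Gs : Fin (r + 1) → Fin n → ZMod 2) :
    coeff (Finsupp.single (Sum.inl 0) d) (F0 d Gs R) = 1 := by
  classical
  have h1 : eval (Sum.elim (Pi.single 0 1) 0) (F0 d Gs R) = 1 := by
    have h2 := F0expr_unit (R := R) hn d Gs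
    rw [F0expr] at h2
    rw [F0, F0expr, map_add, map_sum, cF_map]
    simp only [map_mul, aF_map, map_pow, eval_X, Sum.elim_inl, Sum.elim_inr]
    exact h2
  rw [← h1, eval_eq']
  rw [Finset.sum_eq_single (Finsupp.single (Sum.inl 0) d)]
  · rw [Finset.prod_eq_one, mul_one]
    intro s _
    rcases s with i | j
    · by_cases hi : i = 0
      · subst hi; simp
      · have : (Sum.inl 0 : Fin (n + 1) ⊕ Fin (r + 1)) ≠ Sum.inl i := fun h =>
          hi (Sum.inl_injective h).symm
        simp [Finsupp.single_apply, this]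
    · simp
  · intro m hm hne
    have hA := F0_allowed d hd Gs m (mem_support_iff.1 hm)
    obtain ⟨s, hs, hs0⟩ : ∃ s, s ≠ Sum.inl 0 ∧ m s ≠ 0 := by
      by_contra hcon
      push Not at hcon
      apply hne
      have hi : ∀ i, i ≠ 0 → m (Sum.inl i) = 0 := fun i hi => hcon _ (fun h => hi (Sum.inl_injective h))
      have h2 := hA.1
      rw [Finset.sum_eq_single 0 (fun i _ h => hi i h) (by simp),
        Finset.sum_eq_zero (fun j _ => hcon (Sum.inr j) (by simp)), add_zero] at h2
      ext s
      by_cases hs : s = Sum.inl 0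
      · rw [hs, h2, Finsupp.single_eq_same]
      · rw [hcon s hs, Finsupp.single_apply, if_neg (Ne.symm hs)]
    rw [Finset.prod_eq_zero (Finset.mem_univ s), mul_zero]
    rcases s with i | j
    · have hi : i ≠ 0 := fun h => hs (by rw [h])
      simp [hi, hs0]
    · simp [hs0]
  · intro h
    rw [notMem_support_iff.1 h, zero_mul]

/-- The conclusion for every member of the linear system whose coefficients are algebraically
independent over `ℚ`. -/
theorem generic_member {n' r d : ℕ} (hn : 1 ≤ n') (hd : n' + 4 ≤ d)
    (Gs : Fin (r + 1) → Fin (n' + 1) → ZMod 2)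
    (hinj : Function.Injective Gs) (hG0 : ∀ j, Gs j ≠ 0)
    (hGs : ∀ G, G (Fin.last n') = 1 → ∃ j, Gs j = G)
    (v : MultHypSpace (n' + 1) r d)
    (hv : Function.Injective (aeval (fun m : {m // Allowed (n := n' + 1) (r := r) d m} =>
      coeff m.1 v.1) : MvPolynomial {m // Allowed (n := n' + 1) (r := r) d m} ℚ →ₐ[ℚ] ℂ)) :
    IsDomain (HypConeRing v) ∧ ¬ IsStablyRationalSpec (HypConeRing v) := by
  classical
  obtain ⟨O, hchar, β, hβ, hβres⟩ := exists_place _ hv (fun m => coeff m.1 (F0 d Gs ℤ))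
  have hsub : Function.Injective O.subtype := O.subtype_injective
  obtain ⟨F, hF⟩ : v.1 ∈ Set.range (MvPolynomial.map O.subtype) := by
    rw [mem_range_map_iff_coeffs_subset]
    intro c hc
    obtain ⟨m, hm, rfl⟩ := mem_coeffs_iff.1 hc
    exact ⟨β ⟨m, v.2 m (mem_support_iff.1 hm)⟩, hβ _⟩
  have hcoeff : ∀ m, O.subtype (coeff m F) = coeff m v.1 := fun m => by rw [← hF, coeff_map]
  have hA : ∀ m, coeff m F ≠ 0 → Allowed d m := fun m hm => v.2 m fun h0 => by
    rw [← hcoeff] at h0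
    exact hm (hsub (h0.trans (map_zero _).symm))
  have hres : MvPolynomial.map (IsLocalRing.residue O) F =
      F0 d Gs (IsLocalRing.ResidueField O) := by
    ext m
    rw [coeff_map]
    by_cases hm : Allowed d m
    · have h1 : coeff m F = β ⟨m, hm⟩ := hsub ((hcoeff m).trans (hβ ⟨m, hm⟩).symm)
      rw [h1, hβres, ← F0_map (Int.castRingHom (IsLocalRing.ResidueField O)), coeff_map]
      simp
    · rw [not_not.1 fun h => hm (hA m h), map_zero,
        not_not.1 fun h => hm (F0_allowed d (by omega) Gs m h)]
  have htop : IsLocalRing.residue O (coeff (Finsupp.single (Sum.inl 0) d) F) = 1 := by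
    rw [← coeff_map, hres]
    exact coeff_F0_top (by omega) d (by omega) Gs
  have hu : IsUnit (coeff (Finsupp.single (Sum.inl 0) d) F) := by
    rw [← IsLocalRing.residue_ne_zero_iff_isUnit, htop]
    exact one_ne_zero
  obtain ⟨u, hu⟩ := hu
  have huinv : IsLocalRing.residue O (↑u⁻¹ : O) = 1 := by
    have h1 : IsLocalRing.residue O (↑u⁻¹ : O) * IsLocalRing.residue O (u : O) = 1 := by
      rw [← map_mul, Units.inv_mul, map_one]
    rwa [hu, htop, mul_one] at h1
  have hspan : Ideal.span {MvPolynomial.map O.subtype (C (↑u⁻¹ : O) * F)} = Ideal.span {v.1} := by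
    rw [map_mul, hF]
    exact Ideal.span_singleton_mul_left_unit (((u⁻¹).isUnit.map C).map _) _
  have hA2 : ∀ m, coeff m (C (↑u⁻¹ : O) * F) ≠ 0 → Allowed d m := fun m hm => hA m fun h0 => by
    rw [coeff_C_mul, h0, mul_zero] at hm
    exact hm rfl
  have hmonic : (sepEquiv (Equiv.optionSubtypeNe
      (Sum.inl 0 : Fin (n' + 2) ⊕ Fin (r + 1))).symm O (C (↑u⁻¹ : O) * F)).Monic := by
    refine sep_monic (d := d) _ (Sum.inl 0) (by simp) _ (fun m hm => ?_) ?_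
    · rw [Fintype.sum_sum_type]
      exact (hA2 m hm).1
    · rw [coeff_C_mul, ← hu, Units.inv_mul]
  have hmain := special_reduction hn hd O _ (C (↑u⁻¹ : O) * F) hA2 hmonic Gs hinj hG0 hGs (by
    rw [map_mul, map_C, huinv, hres, C_1, one_mul])
  rw [hspan] at hmain
  exact hmain

theorem finite_allowed {n r : ℕ} (d : ℕ) : Finite {m // Allowed (n := n) (r := r) d m} := by
  refine Finite.of_injective (β := Fin (n + 1) ⊕ Fin (r + 1) → Fin (d + 1))
    (fun m s => ⟨m.1 s, ?_⟩) ?_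
  · have h := m.2.1
    rw [← Fintype.sum_sum_type (f := fun s => m.1 s)] at h
    have := Finset.single_le_sum (f := fun s => m.1 s) (fun _ _ => Nat.zero_le _)
      (Finset.mem_univ s)
    omega
  · intro m m' h
    refine Subtype.ext (Finsupp.ext fun s => ?_)
    exact congrArg Fin.val (congrFun h s)

/-- Very general members of the linear system have coefficients algebraically independent
over `ℚ`. -/
theorem veryGenerally_of_algIndep {n r d : ℕ} (P : MultHypSpace n r d → Prop)
    (h : ∀ v : MultHypSpace n r d, Function.Injective
      (aeval (fun m : {m // Allowed (n := n) (r := r) d m} => coeff m.1 v.1) :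
        MvPolynomial {m // Allowed (n := n) (r := r) d m} ℚ →ₐ[ℚ] ℂ) → P v) :
    VeryGenerallyOn (multHypCoords n r d) P := by
  classical
  have := finite_allowed (n := n) (r := r) d
  have := Fintype.ofFinite {m // Allowed (n := n) (r := r) d m}
  have hcount : Countable {p : MvPolynomial {m // Allowed (n := n) (r := r) d m} ℚ // p ≠ 0} := by
    have : Countable (MvPolynomial {m // Allowed (n := n) (r := r) d m} ℚ) := by
      rw [← Cardinal.mk_le_aleph0_iff]
      refine MvPolynomial.cardinalMk_le_max.trans ?_
      simp only [max_le_iff, le_refl, and_true]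
      exact ⟨Cardinal.mk_le_aleph0, Cardinal.mk_le_aleph0⟩
    infer_instance
  have hne : Nonempty {p : MvPolynomial {m // Allowed (n := n) (r := r) d m} ℚ // p ≠ 0} :=
    ⟨⟨1, one_ne_zero⟩⟩
  obtain ⟨p, hp⟩ := exists_surjective_nat
    {p : MvPolynomial {m // Allowed (n := n) (r := r) d m} ℚ // p ≠ 0}
  refine ⟨fun k => {v | aeval (fun m : {m // Allowed (n := n) (r := r) d m} => coeff m.1 v.1)
    (p k).1 = (0 : ℂ)}, fun k => ⟨?_, ?_⟩, fun v hv => h v ?_⟩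
  · refine ⟨{fun v => aeval (fun m : {m // Allowed (n := n) (r := r) d m} => coeff m.1 v.1)
      (p k).1}, ?_, by ext v; simp⟩
    rw [Set.singleton_subset_iff]
    generalize (p k).1 = q
    induction q using MvPolynomial.induction_on with
    | C a =>
      have : (fun v : MultHypSpace n r d => aeval (fun m : {m // Allowed (n := n) (r := r) d m} =>
          coeff m.1 v.1) (C a : MvPolynomial _ ℚ)) =
          algebraMap ℂ (MultHypSpace n r d → ℂ) (a : ℂ) := by
        funext v
        simp
      rw [this]
      exact Subalgebra.algebraMap_mem _ _
    | add f g hf hg =>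
      simp only [map_add]
      exact Subalgebra.add_mem _ hf hg
    | mul_X f m hf =>
      simp only [map_mul, aeval_X]
      exact Subalgebra.mul_mem _ hf (Algebra.subset_adjoin ⟨m.1, rfl⟩)
  · intro huniv
    have hq : MvPolynomial.map (algebraMap ℚ ℂ) (p k).1 ≠ 0 := by
      rw [Ne, map_eq_zero_iff _ (map_injective _ (algebraMap ℚ ℂ).injective)]
      exact (p k).2
    apply hq
    refine MvPolynomial.funext fun a => ?_
    have hco : ∀ m, coeff m (∑ m : {m // Allowed (n := n) (r := r) d m}, monomial m.1 (a m)) =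
        if hm : Allowed d m then a ⟨m, hm⟩ else 0 := fun m => by
      rw [coeff_sum]
      split_ifs with hm
      · rw [Finset.sum_eq_single ⟨m, hm⟩]
        · simp
        · intro m' _ hne
          rw [coeff_monomial, if_neg fun h => hne (Subtype.ext h)]
        · simp
      · refine Finset.sum_eq_zero fun m' _ => ?_
        rw [coeff_monomial, if_neg]
        rintro rfl
        exact hm m'.2
    let v : MultHypSpace n r d :=
      ⟨∑ m : {m // Allowed (n := n) (r := r) d m}, monomial m.1 (a m), fun m hm => by
        change Allowed d m
        by_contra hcon
        rw [hco, dif_neg hcon] at hm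
        exact hm rfl⟩
    have hv : v ∈ {v : MultHypSpace n r d | aeval (fun m : {m // Allowed (n := n) (r := r) d m} =>
      coeff m.1 v.1) (p k).1 = (0 : ℂ)} := by
      change v ∈ (fun k => {v : MultHypSpace n r d |
        aeval (fun m : {m // Allowed (n := n) (r := r) d m} => coeff m.1 v.1)
          (p k).1 = (0 : ℂ)}) k
      rw [huniv]
      trivial
    have hfun : (fun m : {m // Allowed (n := n) (r := r) d m} => coeff m.1 v.1) = a := by
      funext m
      rw [hco, dif_pos m.2]
    rw [Set.mem_setOf_eq, hfun] at hv
    rw [eval_map, map_zero, ← hv]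
    rfl
  · rw [injective_iff_map_eq_zero]
    intro q hq
    by_contra hq0
    obtain ⟨k, hk⟩ := hp ⟨q, hq0⟩
    refine hv k ?_
    rw [Set.mem_setOf_eq, hk]
    exact hq

/-- **Corollary 4 (Schreieder).**  Let `n, r` be positive integers with
`2^{n-1} - 1 ≤ r ≤ 2ⁿ - 2`; set `N = n + r` and `m = 2ⁿ + n + 1`.  Then for every
`d ≥ m`, a very general complex hypersurface `X ⊂ ℙ^{N+1}` of degree `d` with
multiplicity `d - 2` along an `r`-plane is not stably rational. -/
theorem very_general_hypersurface_large_multiplicity_not_stably_rational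
    (n r : ℕ) (hn : 0 < n) (hr : 0 < r)
    (hr1 : 2^(n-1) - 1 ≤ r) (hr2 : r ≤ 2^n - 2)
    (d : ℕ) (hd : 2^n + n + 1 ≤ d) :
    VeryGenerallyOn (multHypCoords n r d) fun F =>
      IsDomain (HypConeRing F) ∧ ¬ IsStablyRationalSpec (HypConeRing F) := by
  obtain ⟨n', rfl⟩ : ∃ n', n = n' + 1 := ⟨n - 1, by omega⟩
  rw [Nat.add_sub_cancel] at hr1
  -- `n = 1` would force `r = 0`
  have hn' : 1 ≤ n' := by
    rcases Nat.eq_zero_or_pos n' with rfl | h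
    · simp at hr2
      omega
    · exact h
  have h4 : 2 ^ 2 ≤ 2 ^ (n' + 1) := Nat.pow_le_pow_right (by norm_num) (by omega)
  obtain ⟨Gs, hinj, hG0, hGs⟩ := exists_Gs (n' := n') (r := r) (by omega) (by omega)
  exact veryGenerally_of_algIndep _ fun v hv =>
    generic_member hn' (by omega) Gs hinj hG0 hGs v hv
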